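/- arXiv:2010.03637 — 2 statements merged into one kernel-verified Lean document; each statement's English description precedes it below -/
import Mathlib

section
/- Let G be a finitely presented metabelian group, let δ be the Dehn function of a finite presentation of G, and let δ̃ be the relative Dehn function of a finite relative presentation of G in the variety of metabelian groups. Then δ̃(n) ≼ δ(n), and δ(n) ≼ max{(δ̃(n³))³, 2ⁿ} (the maximum taken pointwise in n). -/
open Function

/-- The length of the reduced word representing an element of a free group. -/
noncomputable def freeNorm {X : Type*} (w : FreeGroup X) : ℕ :=
  letI := Classical.decEq X
  w.toWord.length

/-- `w` equals a product of exactly `N` conjugates of elements of `R ∪ R⁻¹`. -/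
def AreaIs {G : Type*} [Group G] (R : Set G) (w : G) (N : ℕ) : Prop :=
  ∃ r f : Fin N → G, (∀ i, r i ∈ R ∨ (r i)⁻¹ ∈ R) ∧
    w = (List.ofFn fun i => (f i)⁻¹ * r i * f i).prod

/-- The area of `w` with respect to the relators `R` is at most `N`. -/
def AreaLe {G : Type*} [Group G] (R : Set G) (w : G) (N : ℕ) : Prop :=
  ∃ N' ≤ N, AreaIs R w N'

/-- `f ≼ g` : there is `C > 0` with `f n ≤ C * g (C * n) + C * n + C` for all `n`. -/
def Dominates (f g : ℕ → ℕ) : Prop :=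
  ∃ C : ℕ, 0 < C ∧ ∀ n, f n ≤ C * g (C * n) + C * n + C

/-- `f ≈ g` : mutual domination. -/
def DehnEquiv (f g : ℕ → ℕ) : Prop := Dominates f g ∧ Dominates g f

/-- `δ` is the Dehn function of the presentation with relator set `R`. -/
def IsDehnFunctionOf {X : Type*} (R : Set (FreeGroup X)) (δ : ℕ → ℕ) : Prop :=
  ∀ n, IsLeast {N | ∀ w ∈ Subgroup.normalClosure R, freeNorm w ≤ n → AreaLe R w N} (δ n)

/-- A group is metabelian if its derived subgroup is abelian. -/
def IsMetabelian (G : Type*) [Group G] : Prop :=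
  ∀ a b : G, a ∈ commutator G → b ∈ commutator G → a * b = b * a

instance derivedSeriesNormalInst {G : Type*} [Group G] (n : ℕ) : (derivedSeries G n).Normal :=
  derivedSeries_normal G n

/-- The free metabelian group on `X`: the free group modulo its second derived subgroup. -/
abbrev FreeMetabelian (X : Type*) := FreeGroup X ⧸ derivedSeries (FreeGroup X) 2

/-- The word length of `w` in the free metabelian group is at most `n`. -/
def mNormLe {X : Type*} (w : FreeMetabelian X) (n : ℕ) : Prop :=
  ∃ v : FreeGroup X, QuotientGroup.mk' (derivedSeries (FreeGroup X) 2) v = w ∧ freeNorm v ≤ n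

/-- `δ` is the relative Dehn function (in the variety of metabelian groups) of the
relative presentation with relator set `R`. -/
def IsRelDehnFunctionOf {X : Type*} (R : Set (FreeMetabelian X)) (δ : ℕ → ℕ) : Prop :=
  ∀ n, IsLeast {N | ∀ w ∈ Subgroup.normalClosure R, mNormLe w n → AreaLe R w N} (δ n)

/-- The paper's commutator convention: `[x, y] = x⁻¹ * y⁻¹ * x * y`. -/
def pcomm {G : Type*} [Group G] (x y : G) : G := x⁻¹ * y⁻¹ * x * y

/-- A group has torsion-free rank `k` if it has a finite-index subgroup isomorphic to `ℤ^k`. -/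
def HasTFRank (Q : Type*) [Group Q] (k : ℕ) : Prop :=
  ∃ H : Subgroup Q, H.index ≠ 0 ∧ Nonempty (H ≃* Multiplicative (Fin k → ℤ))

/-- `G ⧸ A` is abelian and has torsion-free rank `j`. -/
def QuotientRankProp {G : Type*} [Group G] (A : Subgroup G) [A.Normal] (j : ℕ) : Prop :=
  (∀ x y : G ⧸ A, x * y = y * x) ∧ HasTFRank (G ⧸ A) j

/-- The set of torsion-free ranks of quotients `G ⧸ A` by abelian normal subgroups `A`
with `G ⧸ A` abelian. -/
def abelianRankSet (G : Type*) [Group G] : Set ℕ :=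
  {j | ∃ A : Subgroup G, ∃ h : A.Normal, (∀ x y : G, x ∈ A → y ∈ A → x * y = y * x) ∧
    @QuotientRankProp G _ A h j}




section area
variable {G : Type*} [Group G] {R : Set G}

/-- conjugates of relators -/
def RelConj (R : Set G) : Set G := {x | ∃ r f : G, (r ∈ R ∨ r⁻¹ ∈ R) ∧ x = f⁻¹ * r * f}

theorem areaLe_iff {w : G} {N : ℕ} : AreaLe R w N ↔
    ∃ L : List G, (∀ x ∈ L, x ∈ RelConj R) ∧ L.length ≤ N ∧ L.prod = w := by
  constructor
  · rintro ⟨N', hN, r, f, hr, hw⟩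
    refine ⟨List.ofFn fun i => (f i)⁻¹ * r i * f i, ?_, by simpa using hN, hw.symm⟩
    intro x hx
    rw [List.mem_ofFn] at hx
    obtain ⟨i, rfl⟩ := hx
    exact ⟨r i, f i, hr i, rfl⟩
  · rintro ⟨L, hL, hN, hw⟩
    have : ∀ i : Fin L.length, ∃ r f : G, (r ∈ R ∨ r⁻¹ ∈ R) ∧ L.get i = f⁻¹ * r * f :=
      fun i => hL _ (List.get_mem L i)
    choose r f hr hf using this
    refine ⟨L.length, hN, r, f, hr, ?_⟩
    rw [← hw]
    congr 1
    conv_lhs => rw [← List.ofFn_get L]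
    congr 1
    funext i
    exact hf i

theorem relConj_inv {x : G} (h : x ∈ RelConj R) : x⁻¹ ∈ RelConj R := by
  obtain ⟨r, f, hr, rfl⟩ := h
  refine ⟨r⁻¹, f, ?_, by group⟩
  rw [inv_inv]; exact hr.symm

theorem relConj_conj {x : G} (h : x ∈ RelConj R) (g : G) : g * x * g⁻¹ ∈ RelConj R := by
  obtain ⟨r, f, hr, rfl⟩ := h
  exact ⟨r, f * g⁻¹, hr, by group⟩

theorem areaLe_one (N : ℕ) : AreaLe R (1 : G) N :=
  areaLe_iff.2 ⟨[], by simp, by simp, by simp⟩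

theorem AreaLe.mono {w : G} {N M : ℕ} (h : AreaLe R w N) (hM : N ≤ M) : AreaLe R w M := by
  obtain ⟨N', h1, h2⟩ := h
  exact ⟨N', h1.trans hM, h2⟩

theorem AreaLe.mul {a b : G} {N M : ℕ} (h : AreaLe R a N) (h' : AreaLe R b M) :
    AreaLe R (a * b) (N + M) := by
  rw [areaLe_iff] at *
  obtain ⟨L, h1, h2, rfl⟩ := h
  obtain ⟨L', h1', h2', rfl⟩ := h'
  refine ⟨L ++ L', ?_, by simp; omega, by simp⟩
  intro x hx
  rcases List.mem_append.1 hx with h | h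
  · exact h1 _ h
  · exact h1' _ h

theorem AreaLe.inv {a : G} {N : ℕ} (h : AreaLe R a N) : AreaLe R a⁻¹ N := by
  rw [areaLe_iff] at *
  obtain ⟨L, h1, h2, rfl⟩ := h
  refine ⟨(L.map (·⁻¹)).reverse, ?_, by simpa, by rw [List.prod_inv_reverse]⟩
  intro x hx
  simp only [List.mem_reverse, List.mem_map] at hx
  obtain ⟨y, hy, rfl⟩ := hx
  exact relConj_inv (h1 y hy)

theorem AreaLe.conj {a : G} {N : ℕ} (h : AreaLe R a N) (g : G) : AreaLe R (g * a * g⁻¹) N := by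
  rw [areaLe_iff] at *
  obtain ⟨L, h1, h2, rfl⟩ := h
  refine ⟨L.map (MulAut.conj g), ?_, by simpa, ?_⟩
  · intro x hx
    simp only [List.mem_map] at hx
    obtain ⟨y, hy, rfl⟩ := hx
    exact relConj_conj (h1 y hy) g
  · rw [← map_list_prod]; simp

theorem AreaLe.conj' {a : G} {N : ℕ} (h : AreaLe R a N) (g : G) : AreaLe R (g⁻¹ * a * g) N := by
  simpa using h.conj g⁻¹

theorem AreaLe.of_mem {a : G} (h : a ∈ R) : AreaLe R a 1 :=
  areaLe_iff.2 ⟨[a], by simpa using ⟨a, 1, Or.inl h, by simp⟩, by simp, by simp⟩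

theorem AreaLe.mem {a : G} {N : ℕ} (h : AreaLe R a N) : a ∈ Subgroup.normalClosure R := by
  obtain ⟨L, h1, h2, rfl⟩ := areaLe_iff.1 h
  apply Subgroup.list_prod_mem
  intro x hx
  obtain ⟨r, f, hr, rfl⟩ := h1 x hx
  have : r ∈ Subgroup.normalClosure R := by
    rcases hr with hr | hr
    · exact Subgroup.subset_normalClosure hr
    · exact inv_mem_iff.1 (Subgroup.subset_normalClosure hr)
  simpa using Subgroup.normalClosure_normal.conj_mem _ this f⁻¹

theorem exists_areaLe {a : G} (h : a ∈ Subgroup.normalClosure R) : ∃ N, AreaLe R a N := by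
  let H : Subgroup G :=
    { carrier := {a | ∃ N, AreaLe R a N}
      mul_mem' := by rintro a b ⟨N, h⟩ ⟨M, h'⟩; exact ⟨_, h.mul h'⟩
      one_mem' := ⟨0, areaLe_one 0⟩
      inv_mem' := by rintro a ⟨N, h⟩; exact ⟨_, h.inv⟩ }
  have : H.Normal := ⟨by rintro a ⟨N, h⟩ g; exact ⟨_, h.conj g⟩⟩
  exact Subgroup.normalClosure_le_normal (N := H) (fun a ha => ⟨1, AreaLe.of_mem ha⟩) h

theorem AreaLe.map {H : Type*} [Group H] {S : Set H} (φ : G →* H) {B : ℕ}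
    (hB : ∀ r ∈ R, AreaLe S (φ r) B) {a : G} {N : ℕ} (h : AreaLe R a N) :
    AreaLe S (φ a) (B * N) := by
  obtain ⟨L, h1, h2, rfl⟩ := areaLe_iff.1 h
  clear h
  induction L generalizing N with
  | nil => simpa using areaLe_one _
  | cons x L ih =>
    simp only [List.length_cons] at h2
    obtain ⟨N, rfl⟩ : ∃ N', N = N' + 1 := ⟨N - 1, by omega⟩
    have := ih (fun y hy => h1 y (List.mem_cons_of_mem _ hy)) (N := N) (by omega)
    rw [List.prod_cons, map_mul, mul_add, mul_one, add_comm]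
    refine AreaLe.mul ?_ this
    obtain ⟨r, f, hr, rfl⟩ := h1 x (by simp)
    rw [map_mul, map_mul, map_inv]
    apply AreaLe.conj'
    rcases hr with hr | hr
    · exact hB r hr
    · simpa using (hB _ hr).inv

/-- finite sets in normal closure have uniformly bounded area -/
theorem exists_areaLe_finite {T : Set G} (hT : T.Finite) (h : T ⊆ Subgroup.normalClosure R) :
    ∃ N, ∀ a ∈ T, AreaLe R a N := by
  have : ∀ a : G, ∃ N, a ∈ T → AreaLe R a N := by
    intro a
    by_cases ha : a ∈ T
    · obtain ⟨N, hN⟩ := exists_areaLe (h ha); exact ⟨N, fun _ => hN⟩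
    · exact ⟨0, fun h => absurd h ha⟩
  choose N hN using this
  obtain ⟨M, hM⟩ := (hT.image N).bddAbove
  exact ⟨M, fun a ha => (hN a ha).mono (hM ⟨a, ha, rfl⟩)⟩

/-- equality modulo `R` with cost -/
def AEq (R : Set G) (a b : G) (N : ℕ) : Prop := AreaLe R (a * b⁻¹) N

theorem AEq.refl (a : G) (N : ℕ) : AEq R a a N := by
  unfold AEq; rw [mul_inv_cancel]; exact areaLe_one N

theorem AEq.of_eq {a b : G} (h : a = b) (N : ℕ) : AEq R a b N := h ▸ AEq.refl a N

theorem AEq.mono {a b : G} {N M : ℕ} (h : AEq R a b N) (hM : N ≤ M) : AEq R a b M :=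
  AreaLe.mono h hM

theorem AEq.symm {a b : G} {N : ℕ} (h : AEq R a b N) : AEq R b a N := by
  have := AreaLe.inv h
  unfold AEq; convert this using 1; group

theorem AEq.trans {a b c : G} {N M : ℕ} (h : AEq R a b N) (h' : AEq R b c M) :
    AEq R a c (N + M) := by
  have := AreaLe.mul h h'
  unfold AEq; convert this using 1; group

theorem AEq.mul_left {a b : G} {N : ℕ} (h : AEq R a b N) (c : G) : AEq R (c * a) (c * b) N := by
  have := AreaLe.conj h c
  unfold AEq; convert this using 1; group

theorem AEq.mul_right {a b : G} {N : ℕ} (h : AEq R a b N) (c : G) : AEq R (a * c) (b * c) N := by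
  have h' : AreaLe R (a * b⁻¹) N := h
  unfold AEq; convert h' using 1; group

theorem AEq.mul {a b c d : G} {N M : ℕ} (h : AEq R a b N) (h' : AEq R c d M) :
    AEq R (a * c) (b * d) (N + M) :=
  (h.mul_right c).trans (h'.mul_left b)

theorem AEq.inv {a b : G} {N : ℕ} (h : AEq R a b N) : AEq R a⁻¹ b⁻¹ N := by
  have := AreaLe.conj (AreaLe.inv h) a⁻¹
  unfold AEq; convert this using 1; group

theorem AEq.conj {a b : G} {N : ℕ} (h : AEq R a b N) (c : G) :
    AEq R (c⁻¹ * a * c) (c⁻¹ * b * c) N := (h.mul_left c⁻¹).mul_right c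

theorem aeq_one {a : G} {N : ℕ} : AEq R a 1 N ↔ AreaLe R a N := by
  unfold AEq; simp

theorem AEq.areaLe {a b : G} {N M : ℕ} (h : AEq R a b N) (h' : AreaLe R b M) :
    AreaLe R a (N + M) := aeq_one.1 (h.trans (aeq_one.2 h'))

end area

section words
variable {X : Type*}

theorem freeNorm_eq [DecidableEq X] (w : FreeGroup X) : freeNorm w = w.norm := by
  unfold freeNorm FreeGroup.norm
  congr!

theorem exists_list (w : FreeGroup X) : ∃ L : List (X × Bool), FreeGroup.mk L = w ∧
    L.length = freeNorm w := by
  classical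
  exact ⟨w.toWord, FreeGroup.mk_toWord, by rw [freeNorm_eq]; rfl⟩

theorem freeNorm_mk_le (L : List (X × Bool)) : freeNorm (FreeGroup.mk L) ≤ L.length := by
  classical
  rw [freeNorm_eq]; exact FreeGroup.norm_mk_le

theorem freeNorm_mul_le (a b : FreeGroup X) : freeNorm (a * b) ≤ freeNorm a + freeNorm b := by
  classical
  rw [freeNorm_eq, freeNorm_eq, freeNorm_eq]; exact FreeGroup.norm_mul_le _ _

theorem freeNorm_one : freeNorm (1 : FreeGroup X) = 0 := by
  classical
  rw [freeNorm_eq]; simp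

/-- letter -/
def ltr (l : X × Bool) : FreeGroup X := FreeGroup.mk [l]

theorem mk_cons (l : X × Bool) (L : List (X × Bool)) :
    FreeGroup.mk (l :: L) = ltr l * FreeGroup.mk L := by
  simp [ltr, FreeGroup.mul_mk]

theorem mk_append (L L' : List (X × Bool)) :
    FreeGroup.mk (L ++ L') = FreeGroup.mk L * FreeGroup.mk L' := by
  simp [FreeGroup.mul_mk]

theorem mk_nil : FreeGroup.mk ([] : List (X × Bool)) = 1 := rfl

theorem hom_linear {Y : Type*} [Finite X] (φ : FreeGroup X →* FreeGroup Y) :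
    ∃ C, ∀ w, freeNorm (φ w) ≤ C * freeNorm w := by
  obtain ⟨C, hC⟩ := (Set.finite_range (fun l : X × Bool => freeNorm (φ (ltr l)))).bddAbove
  refine ⟨C, fun w => ?_⟩
  obtain ⟨L, rfl, hL⟩ := exists_list w
  rw [← hL]; clear hL
  induction L with
  | nil => rw [mk_nil, map_one, freeNorm_one]; simp
  | cons l L ih =>
    rw [mk_cons, map_mul]
    refine (freeNorm_mul_le _ _).trans ?_
    have := hC ⟨l, rfl⟩
    simp only [List.length_cons, mul_add, mul_one]
    simp only at this
    omega

end words

theorem part1 {X Y : Type} [Finite X] [Finite Y]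
    (R : Set (FreeGroup X)) (hR : R.Finite)
    (S : Set (FreeMetabelian Y))
    (hmeta : IsMetabelian (FreeGroup X ⧸ Subgroup.normalClosure R))
    (hiso : Nonempty ((FreeGroup X ⧸ Subgroup.normalClosure R) ≃*
      (FreeMetabelian Y ⧸ Subgroup.normalClosure S)))
    (δ δt : ℕ → ℕ) (hδ : IsDehnFunctionOf R δ) (hδt : IsRelDehnFunctionOf S δt) :
    Dominates δt δ := by
  obtain ⟨e⟩ := hiso
  let q := QuotientGroup.mk' (derivedSeries (FreeGroup Y) 2)
  let p := QuotientGroup.mk' (Subgroup.normalClosure S)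
  let pX := QuotientGroup.mk' (Subgroup.normalClosure R)
  have h1 : ∀ y : Y, ∃ g : FreeGroup X, pX g = e.symm (p (q (FreeGroup.of y))) := fun y =>
    QuotientGroup.mk'_surjective _ _
  choose ψ0 hψ0 using h1
  let ψ := FreeGroup.lift ψ0
  have hψ : ∀ g, pX (ψ g) = e.symm (p (q g)) := by
    intro g
    have : pX.comp ψ = (e.symm.toMonoidHom.comp p).comp q := by
      ext y; simp [ψ, hψ0]; rfl
    exact DFunLike.congr_fun this g
  have h2 : ∀ x : X, ∃ g : FreeGroup Y, p (q g) = e (pX (FreeGroup.of x)) := by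
    intro x
    obtain ⟨a, ha⟩ := QuotientGroup.mk'_surjective _ (e (pX (FreeGroup.of x)))
    obtain ⟨b, rfl⟩ := QuotientGroup.mk'_surjective _ a
    exact ⟨b, ha⟩
  choose φ0 hφ0 using h2
  let φ := FreeGroup.lift φ0
  have hφ : ∀ g, p (q (φ g)) = e (pX g) := by
    intro g
    have : (p.comp q).comp φ = (e.toMonoidHom.comp pX) := by
      ext y; simp [φ, hφ0]
    exact DFunLike.congr_fun this g
  have mem1 : ∀ a, p a = 1 ↔ a ∈ Subgroup.normalClosure S := fun a =>
    QuotientGroup.eq_one_iff a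
  have mem2 : ∀ a, pX a = 1 ↔ a ∈ Subgroup.normalClosure R := fun a =>
    QuotientGroup.eq_one_iff a
  obtain ⟨C1, hC1⟩ := hom_linear ψ
  obtain ⟨B, hB⟩ := exists_areaLe_finite (R := S) (T := (fun r => q (φ r)) '' R) (hR.image _) (by
    rintro _ ⟨r, hr, rfl⟩
    rw [SetLike.mem_coe, ← mem1, hφ, (mem2 r).2 (Subgroup.subset_normalClosure hr), map_one])
  obtain ⟨B', hB'⟩ := exists_areaLe_finite (R := S)
    (T := Set.range (fun l : Y × Bool => q (φ (ψ (ltr l))) * (q (ltr l))⁻¹))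
    (Set.finite_range _) (by
    rintro _ ⟨r, rfl⟩
    rw [SetLike.mem_coe, ← mem1]
    simp only [map_mul, map_inv]
    rw [hφ, hψ]; simp)
  have key : ∀ L : List (Y × Bool), AEq S (q (φ (ψ (FreeGroup.mk L)))) (q (FreeGroup.mk L))
      (B' * L.length) := by
    intro L
    induction L with
    | nil => rw [mk_nil]; simp only [map_one]; exact AEq.refl _ _
    | cons l L ih =>
      rw [mk_cons]; simp only [map_mul]
      refine (AEq.mul (hB' _ ⟨l, rfl⟩) ih).mono ?_
      simp [mul_add]; omega
  have hmono : ∀ n m, n ≤ m → δ n ≤ δ m := by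
    intro n m h
    refine (hδ n).2 ?_
    intro w hw hn
    exact (hδ m).1 w hw (hn.trans h)
  refine ⟨C1 + B + B' + 1, by omega, fun n => (hδt n).2 ?_⟩
  rintro w hw ⟨v, hv, hn⟩
  have hv' : q v = w := hv
  have e1 : ψ v ∈ Subgroup.normalClosure R := by
    rw [← mem2, hψ, hv', (mem1 w).2 hw, map_one]
  have e2 := (hδ (C1 * n)).1 _ e1 ((hC1 v).trans (Nat.mul_le_mul_left _ hn))
  have e3 := AreaLe.map (S := S) (q.comp φ) (B := B) (fun r hr => hB _ ⟨r, hr, rfl⟩) e2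
  obtain ⟨L, rfl, hL⟩ := exists_list v
  have e4 := (key L).symm.areaLe e3
  rw [hv'] at e4
  refine e4.mono ?_
  have := hmono (C1 * n) ((C1 + B + B' + 1) * n) (Nat.mul_le_mul_right _ (by omega))
  have a1 : B' * L.length ≤ (C1 + B + B' + 1) * n := Nat.mul_le_mul (by omega) (by omega)
  have a2 : B * δ (C1 * n) ≤ (C1 + B + B' + 1) * δ ((C1 + B + B' + 1) * n) :=
    Nat.mul_le_mul (by omega) this
  omega



open scoped commutatorElement in
theorem comm_mem_commutator {G : Type*} [Group G] (a b : G) :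
    a * b * a⁻¹ * b⁻¹ ∈ commutator G := by
  rw [commutator_def, ← commutatorElement_def]
  exact Subgroup.commutator_mem_commutator (Subgroup.mem_top a) (Subgroup.mem_top b)

section val
variable {X : Type}

/-- value of a group element under a character -/
noncomputable def vl (v : X → ℝ) (g : FreeGroup X) : ℝ :=
  (FreeGroup.lift (fun x => Multiplicative.ofAdd (v x)) g).toAdd

theorem vl_mul (v : X → ℝ) (g h : FreeGroup X) : vl v (g * h) = vl v g + vl v h := by
  simp [vl]
theorem vl_inv (v : X → ℝ) (g : FreeGroup X) : vl v g⁻¹ = - vl v g := by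
  simp [vl]
theorem vl_one (v : X → ℝ) : vl v 1 = 0 := by
  simp [vl]
theorem vl_pow (v : X → ℝ) (g : FreeGroup X) (k : ℕ) : vl v (g ^ k) = k * vl v g := by
  simp [vl]
theorem vl_zpow (v : X → ℝ) (g : FreeGroup X) (k : ℤ) : vl v (g ^ k) = k * vl v g := by
  simp [vl]
theorem vl_of (v : X → ℝ) (x : X) : vl v (FreeGroup.of x) = v x := by
  simp [vl]

/-- inverse letter -/
def linv (l : X × Bool) : X × Bool := (l.1, !l.2)

theorem ltr_linv (l : X × Bool) : ltr (linv l) = (ltr l)⁻¹ := by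
  simp [ltr, linv, FreeGroup.inv_mk, FreeGroup.invRev]
theorem linv_linv (l : X × Bool) : linv (linv l) = l := by simp [linv]
theorem ltr_true (x : X) : ltr (x, true) = FreeGroup.of x := rfl
theorem ltr_false (x : X) : ltr (x, false) = (FreeGroup.of x)⁻¹ := by
  rw [← ltr_true, ← ltr_linv]; rfl

theorem letter_induction {P : FreeGroup X → Prop} (h1 : P 1)
    (h : ∀ l g, P g → P (ltr l * g)) (g : FreeGroup X) : P g := by
  obtain ⟨L, rfl, -⟩ := exists_list g
  induction L with
  | nil => exact h1
  | cons l L ih => rw [mk_cons]; exact h _ _ ih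

/-- reachable with path values in `I` -/
inductive Reach (v : X → ℝ) (I : Set ℝ) : FreeGroup X → Prop
  | one : Reach v I 1
  | step (l : X × Bool) (g : FreeGroup X) : Reach v I g → vl v (ltr l * g) ∈ I →
      Reach v I (ltr l * g)

variable {v : X → ℝ} {I : Set ℝ}

theorem Reach.mono {J : Set ℝ} (hIJ : I ⊆ J) {g : FreeGroup X} (h : Reach v I g) :
    Reach v J g := by
  induction h with
  | one => exact .one
  | step l g _ h ih => exact .step l g ih (hIJ h)

theorem Reach.mem (h0 : (0 : ℝ) ∈ I) {g : FreeGroup X} (h : Reach v I g) : vl v g ∈ I := by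
  cases h with
  | one => rwa [vl_one]
  | step l g _ h => exact h

theorem Reach.mul {g h : FreeGroup X} (hg : Reach v {t | t + vl v h ∈ I} g) (hh : Reach v I h) :
    Reach v I (g * h) := by
  induction hg with
  | one => simpa
  | step l g _ h ih =>
    rw [mul_assoc]
    refine .step _ _ ih ?_
    rw [← mul_assoc, vl_mul]; exact h

theorem Reach.mul0 {g h : FreeGroup X} (hg : Reach v I g) (hh : Reach v I h) (h0 : vl v h = 0) :
    Reach v I (g * h) :=
  Reach.mul (hg.mono (fun t ht => by simpa [h0] using ht)) hh

theorem Reach.inv_mul (h0 : (0 : ℝ) ∈ I) {g : FreeGroup X} (hg : Reach v I g) :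
    ∀ h, Reach v I h → vl v h = vl v g → Reach v I (g⁻¹ * h) := by
  induction hg with
  | one => intro h hh _; simpa
  | step l g hg h ih =>
    intro k hk hkg
    rw [mul_inv_rev, mul_assoc]
    rw [vl_mul] at hkg
    have hv : vl v ((ltr l)⁻¹ * k) = vl v g := by rw [vl_mul, vl_inv, hkg]; ring
    apply ih
    · rw [← ltr_linv] at hv ⊢
      refine .step _ _ hk ?_
      rw [hv]; exact hg.mem h0
    · exact hv

theorem Reach.inv (h0 : (0 : ℝ) ∈ I) {g : FreeGroup X} (hg : Reach v I g) (hv : vl v g = 0) :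
    Reach v I g⁻¹ := by
  have := hg.inv_mul h0 1 .one (by rw [vl_one, hv])
  simpa using this

theorem exists_reach (v : X → ℝ) (g : FreeGroup X) : ∃ K, 0 ≤ K ∧ Reach v (Set.Icc (-K) K) g := by
  induction g using letter_induction with
  | h1 => exact ⟨0, le_rfl, .one⟩
  | h l g ih =>
    obtain ⟨K, hK0, hK⟩ := ih
    refine ⟨max K |vl v (ltr l * g)|, by positivity, .step _ _ (hK.mono ?_) ?_⟩
    · have := le_max_left K |vl v (ltr l * g)|
      exact Set.Icc_subset_Icc (by linarith) this
    · have := le_max_right K |vl v (ltr l * g)|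
      exact abs_le.1 this

theorem Reach.pow (hI : I.OrdConnected) {g : FreeGroup X} (hg : Reach v I g) (h0 : vl v g ∈ I)
    (z : X × Bool) (k : ℕ) (hk : vl v g + k * vl v (ltr z) ∈ I) : Reach v I (ltr z ^ k * g) := by
  induction k with
  | zero => simpa
  | succ k ih =>
    have : vl v g + k * vl v (ltr z) ∈ I := by
      rcases le_total 0 (vl v (ltr z)) with h | h
      · refine hI.out h0 hk ⟨by nlinarith [mul_nonneg (Nat.cast_nonneg (α := ℝ) k) h], ?_⟩
        push_cast; nlinarith
      · refine hI.out hk h0 ⟨?_, by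
          have := mul_nonpos_of_nonneg_of_nonpos (Nat.cast_nonneg (α := ℝ) k) h
          linarith⟩
        push_cast; nlinarith
    rw [pow_succ', mul_assoc]
    refine .step _ _ (ih this) ?_
    rw [← mul_assoc, ← pow_succ', vl_mul, vl_pow, add_comm]; exact hk

theorem Reach.zpow (hI : I.OrdConnected) {g : FreeGroup X} (hg : Reach v I g) (h0 : vl v g ∈ I)
    (z : X × Bool) (k : ℤ) (hk : vl v g + k * vl v (ltr z) ∈ I) : Reach v I (ltr z ^ k * g) := by
  obtain ⟨n, rfl | rfl⟩ := k.eq_nat_or_neg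
  · rw [zpow_natCast]; exact hg.pow hI h0 z n (by simpa using hk)
  · rw [zpow_neg, zpow_natCast, ← inv_pow, ← ltr_linv]
    refine hg.pow hI h0 _ n ?_
    rw [ltr_linv, vl_inv]
    simpa using hk

theorem exists_section_aux {D : Subgroup (FreeGroup X)} [D.Normal]
    (hD : commutator (FreeGroup X) ≤ D) (z : X × Bool)
    (hz : 0 < vl v (ltr z)) (μ : ℝ) (hμ0 : 0 ≤ μ) (hμ : ∀ l, |vl v (ltr l)| ≤ μ) (g : FreeGroup X) :
    ∃ (k : ℤ) (s : FreeGroup X), (s : FreeGroup X ⧸ D) = ((ltr z ^ k * g : FreeGroup X) : FreeGroup X ⧸ D) ∧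
      Reach v (Set.Icc (-μ) (vl v (ltr z) + μ)) s ∧ vl v s ∈ Set.Icc 0 (vl v (ltr z)) := by
  have hcom : ∀ a b : FreeGroup X ⧸ D, a * b = b * a := by
    intro a b
    obtain ⟨a, rfl⟩ := QuotientGroup.mk_surjective a
    obtain ⟨b, rfl⟩ := QuotientGroup.mk_surjective b
    rw [← QuotientGroup.mk_mul, ← QuotientGroup.mk_mul, QuotientGroup.eq]
    apply hD
    have : (a * b)⁻¹ * (b * a) = b⁻¹ * a⁻¹ * b⁻¹⁻¹ * a⁻¹⁻¹ := by group
    rw [this]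
    exact comm_mem_commutator _ _
  induction g using letter_induction with
  | h1 => exact ⟨0, 1, by simp, .one, by rw [vl_one]; exact ⟨le_rfl, hz.le⟩⟩
  | h l g ih =>
    obtain ⟨k, s, hs, hr, h1, h2⟩ := ih
    have hl := abs_le.1 (hμ l)
    set I := Set.Icc (-μ) (vl v (ltr z) + μ) with hI
    have hv : vl v (ltr l * s) ∈ I := by
      rw [vl_mul]; constructor <;> linarith
    have hr' : Reach v I (ltr l * s) := .step _ _ hr hv
    set j : ℤ := ⌊vl v (ltr l * s) / vl v (ltr z)⌋ with hj
    have hj1 : vl v (ltr l * s) - j * vl v (ltr z) ∈ Set.Icc 0 (vl v (ltr z)) := by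
      constructor
      · have := Int.floor_le (vl v (ltr l * s) / vl v (ltr z))
        rw [le_div_iff₀ hz] at this; linarith
      · have := (Int.lt_floor_add_one (vl v (ltr l * s) / vl v (ltr z)))
        rw [div_lt_iff₀ hz] at this; linarith
    have hj2 : vl v (ltr l * s) + (-j : ℤ) * vl v (ltr z) ∈ Set.Icc 0 (vl v (ltr z)) := by
      push_cast; convert hj1 using 1; ring
    refine ⟨-j + k, ltr z ^ (-j) * (ltr l * s), ?_, ?_, ?_⟩
    · simp only [QuotientGroup.mk_mul, hs, QuotientGroup.mk_zpow, zpow_add]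
      rw [← mul_assoc (ltr l : FreeGroup X ⧸ D), hcom (ltr l : FreeGroup X ⧸ D)]
      simp only [mul_assoc]
    · exact hr'.zpow Set.ordConnected_Icc hv _ _ ⟨by linarith [hj2.1], by linarith [hj2.2]⟩
    · rw [vl_mul, vl_zpow, add_comm]; exact hj2

theorem exists_section {D : Subgroup (FreeGroup X)} [D.Normal]
    (hD : commutator (FreeGroup X) ≤ D) (z : X × Bool)
    (hz : 0 < vl v (ltr z)) (μ : ℝ) (hμ0 : 0 ≤ μ) (hμ : ∀ l, |vl v (ltr l)| ≤ μ)
    (K : ℝ) (hK : vl v (ltr z) + μ ≤ K) (q : FreeGroup X ⧸ D) :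
    ∃ s : FreeGroup X, (s : FreeGroup X ⧸ D) = q ∧
      Reach v (Set.Icc (min (-K) (vl v s)) (max K (vl v s))) s := by
  obtain ⟨g, rfl⟩ := QuotientGroup.mk_surjective q
  obtain ⟨k, s, hs, hr, h1, h2⟩ := exists_section_aux hD z hz μ hμ0 hμ g
  refine ⟨ltr z ^ (-k) * s, ?_, ?_⟩
  · simp [hs]
  · set a := vl v (ltr z ^ (-k) * s) with ha
    refine (hr.mono ?_).zpow Set.ordConnected_Icc ?_ _ _ ?_
    · refine Set.Icc_subset_Icc ((min_le_left _ _).trans ?_) (hK.trans (le_max_left _ _))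
      linarith
    · constructor
      · exact (min_le_left _ _).trans (by linarith)
      · exact le_trans (by linarith) (le_max_left _ _)
    · have : vl v s + (-k : ℤ) * vl v (ltr z) = a := by rw [ha, vl_mul, vl_zpow]; ring
      rw [this]; exact ⟨min_le_right _ _, le_max_right _ _⟩

end val

section twisted
variable {X : Type} {D : Subgroup (FreeGroup X)} [D.Normal] {M : Type}

/-- the cocycle -/
def kap (s : FreeGroup X ⧸ D → FreeGroup X) (hs : ∀ q, (s q : FreeGroup X ⧸ D) = q)
    (g : FreeGroup X) (q : FreeGroup X ⧸ D) : D :=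
  ⟨(s ((g : FreeGroup X ⧸ D) * q))⁻¹ * (g * s q), by
    rw [← QuotientGroup.eq, hs, QuotientGroup.mk_mul, hs]⟩

variable (s : FreeGroup X ⧸ D → FreeGroup X) (hs : ∀ q, (s q : FreeGroup X ⧸ D) = q)
  (sel : FreeGroup X ⧸ D → (D →* Equiv.Perm M))

theorem kap_mul (g h : FreeGroup X) (q : FreeGroup X ⧸ D) :
    kap s hs (g * h) q = kap s hs g ((h : FreeGroup X ⧸ D) * q) * kap s hs h q := by
  apply Subtype.ext
  simp [kap, mul_assoc]

theorem kap_one (q : FreeGroup X ⧸ D) : kap s hs 1 q = 1 := by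
  apply Subtype.ext
  simp [kap]

theorem kap_inv (g : FreeGroup X) (q : FreeGroup X ⧸ D) :
    (kap s hs g ((g⁻¹ : FreeGroup X) * q))⁻¹ = kap s hs g⁻¹ q := by
  rw [inv_eq_iff_mul_eq_one, ← kap_mul, mul_inv_cancel, kap_one]

/-- the twisted permutation representation -/
def Th : FreeGroup X →* Equiv.Perm ((FreeGroup X ⧸ D) × M) :=
  FreeGroup.lift fun x =>
    { toFun := fun p => (((FreeGroup.of x : FreeGroup X) : FreeGroup X ⧸ D) * p.1,
        sel p.1 (kap s hs (FreeGroup.of x) p.1) p.2)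
      invFun := fun p => ((((FreeGroup.of x)⁻¹ : FreeGroup X) : FreeGroup X ⧸ D) * p.1,
        (sel ((((FreeGroup.of x)⁻¹ : FreeGroup X) : FreeGroup X ⧸ D) * p.1)
          (kap s hs (FreeGroup.of x) ((((FreeGroup.of x)⁻¹ : FreeGroup X) : FreeGroup X ⧸ D) * p.1)))⁻¹ p.2)
      left_inv := by
        rintro ⟨q, m⟩
        simp
      right_inv := by
        rintro ⟨q, m⟩
        simp }

theorem Th_ltr (l : X × Bool) (q : FreeGroup X ⧸ D) (m : M) :
    Th s hs sel (ltr l) (q, m) =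
      ((ltr l : FreeGroup X ⧸ D) * q, sel q (kap s hs (ltr l) q) m) ∨
    Th s hs sel (ltr l) (q, m) =
      ((ltr l : FreeGroup X ⧸ D) * q,
        sel ((ltr l : FreeGroup X ⧸ D) * q) (kap s hs (ltr l) q) m) := by
  obtain ⟨x, b⟩ := l
  cases b
  · right
    rw [ltr_false, map_inv]
    have : Th s hs sel (FreeGroup.of x) = _ := FreeGroup.lift_apply_of
    rw [this, ← kap_inv, map_inv]
    rfl
  · left
    rw [ltr_true]
    have : Th s hs sel (FreeGroup.of x) = _ := FreeGroup.lift_apply_of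
    rw [this]
    rfl

theorem Th_hol {v : X → ℝ} (hvD : ∀ g ∈ D, vl v g = 0) (ι : D →* Equiv.Perm M) (I : Set ℝ)
    (hI : ∀ l q, vl v (s q) ∈ I → vl v (s ((ltr l : FreeGroup X ⧸ D) * q)) ∈ I →
      sel q (kap s hs (ltr l) q) = ι (kap s hs (ltr l) q) ∧
      sel ((ltr l : FreeGroup X ⧸ D) * q) (kap s hs (ltr l) q) = ι (kap s hs (ltr l) q))
    (q : FreeGroup X ⧸ D) (hq : vl v (s q) ∈ I) (g : FreeGroup X)
    (hg : Reach v {t | t + vl v (s q) ∈ I} g) (m : M) :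
    Th s hs sel g (q, m) = ((g : FreeGroup X ⧸ D) * q, ι (kap s hs g q) m) := by
  have hvs : ∀ g : FreeGroup X, vl v (s ((g : FreeGroup X ⧸ D) * q)) = vl v g + vl v (s q) := by
    intro g
    have : (s ((g : FreeGroup X ⧸ D) * q))⁻¹ * (g * s q) ∈ D := (kap s hs g q).2
    have := hvD _ this
    rw [vl_mul, vl_inv, vl_mul] at this
    linarith
  induction hg with
  | one => simp [kap_one]
  | step l g hg hl ih =>
    rw [map_mul, Equiv.Perm.mul_apply, ih]
    have hg' : vl v (s ((g : FreeGroup X ⧸ D) * q)) ∈ I := by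
      rw [hvs]; exact hg.mem (by simpa using hq)
    have hlg' : vl v (s ((ltr l : FreeGroup X ⧸ D) * ((g : FreeGroup X ⧸ D) * q))) ∈ I := by
      rw [← mul_assoc, ← QuotientGroup.mk_mul, hvs]; exact hl
    obtain ⟨h1, h2⟩ := hI l _ hg' hlg'
    rw [kap_mul, map_mul, Equiv.Perm.mul_apply, QuotientGroup.mk_mul, mul_assoc]
    rcases Th_ltr s hs sel l ((g : FreeGroup X ⧸ D) * q) (ι (kap s hs g q) m) with h | h
    · rw [h, h1]
    · rw [h, h2]

open Classical in
/-- first Heisenberg type action -/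
noncomputable def heisP (P Q : Type*) [Group P] [Group Q] : P →* Equiv.Perm (P × Q) where
  toFun p :=
    { toFun := fun m => if m.2 = 1 then (p * m.1, m.2) else m
      invFun := fun m => if m.2 = 1 then (p⁻¹ * m.1, m.2) else m
      left_inv := by
        rintro ⟨a, b⟩
        by_cases h : b = 1 <;> simp [h]
      right_inv := by
        rintro ⟨a, b⟩
        by_cases h : b = 1 <;> simp [h] }
  map_one' := by
    ext ⟨a, b⟩ <;> by_cases h : b = 1 <;> simp [h]
  map_mul' p p' := by
    ext ⟨a, b⟩ <;> by_cases h : b = 1 <;> simp [h, mul_assoc]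

/-- second Heisenberg type action -/
def heisM (P Q : Type*) [Group P] [Group Q] : Q →* Equiv.Perm (P × Q) where
  toFun p :=
    { toFun := fun m => (m.1, p * m.2)
      invFun := fun m => (m.1, p⁻¹ * m.2)
      left_inv := by
        rintro ⟨a, b⟩
        simp
      right_inv := by
        rintro ⟨a, b⟩
        simp }
  map_one' := by
    ext ⟨a, b⟩ <;> simp
  map_mul' p p' := by
    ext ⟨a, b⟩ <;> simp [mul_assoc]

end twisted


section compare
variable {X : Type}

/-- elements representable by a path with values in `I` -/
def InA (v : X → ℝ) (I : Set ℝ) (N : Subgroup (FreeGroup X)) (g : FreeGroup X) : Prop :=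
  ∃ h, Reach v I h ∧ h⁻¹ * g ∈ N

/-- subgroup version -/
def AAD (v : X → ℝ) (I : Set ℝ) (N D : Subgroup (FreeGroup X)) [N.Normal] (hND : N ≤ D)
    (hvD : ∀ g ∈ D, vl v g = 0) (h0 : (0 : ℝ) ∈ I) : Subgroup D where
  carrier := {g | InA v I N g}
  one_mem' := ⟨1, .one, by simp⟩
  mul_mem' := by
    rintro ⟨a, ha⟩ ⟨b, hb⟩ ⟨h, hr, hn⟩ ⟨h', hr', hn'⟩
    simp only at hn hn'
    have hv : vl v h' = 0 := by
      have := hvD _ (hND hn')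
      rw [vl_mul, vl_inv, hvD b hb] at this; linarith
    refine ⟨h * h', hr.mul0 hr' hv, ?_⟩
    have e : (h * h')⁻¹ * (a * b) = (h'⁻¹ * (h⁻¹ * a) * h'⁻¹⁻¹) * (h'⁻¹ * b) := by group
    change (h * h')⁻¹ * (a * b) ∈ N
    rw [e]
    exact mul_mem (Subgroup.Normal.conj_mem inferInstance _ hn _) hn'
  inv_mem' := by
    rintro ⟨a, ha⟩ ⟨h, hr, hn⟩
    simp only at hn
    have hv : vl v h = 0 := by
      have := hvD _ (hND hn)
      rw [vl_mul, vl_inv, hvD a ha] at this; linarith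
    refine ⟨h⁻¹, hr.inv h0 hv, ?_⟩
    have e : h⁻¹⁻¹ * a⁻¹ = h * (h⁻¹ * a)⁻¹ * h⁻¹ := by group
    change h⁻¹⁻¹ * a⁻¹ ∈ N
    rw [e]
    exact Subgroup.Normal.conj_mem inferInstance _ (inv_mem hn) _

theorem AAD_normal (v : X → ℝ) (I : Set ℝ) (N D : Subgroup (FreeGroup X)) [N.Normal] (hND : N ≤ D)
    (hvD : ∀ g ∈ D, vl v g = 0) (h0 : (0 : ℝ) ∈ I)
    (hmet : ∀ a ∈ D, ∀ b ∈ D, a * b * a⁻¹ * b⁻¹ ∈ N) : (AAD v I N D hND hvD h0).Normal := by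
  constructor
  rintro ⟨a, ha⟩ ⟨h, hr, hn⟩ ⟨d, hd⟩
  refine ⟨h, hr, ?_⟩
  have e : h⁻¹ * (d * a * d⁻¹) = (h⁻¹ * a) * (a⁻¹ * d * a⁻¹⁻¹ * d⁻¹) := by group
  change h⁻¹ * (d * a * d⁻¹) ∈ N
  rw [e]
  exact mul_mem hn (hmet _ (inv_mem ha) _ hd)

theorem compare [Finite X] {R : Set (FreeGroup X)} (hR : R.Finite) (D : Subgroup (FreeGroup X))
    [D.Normal] (hND : Subgroup.normalClosure R ≤ D) (hD : commutator (FreeGroup X) ≤ D)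
    (hmet : ∀ a ∈ D, ∀ b ∈ D, a * b * a⁻¹ * b⁻¹ ∈ Subgroup.normalClosure R)
    (v : X → ℝ) (hvD : ∀ g ∈ D, vl v g = 0) (z : X × Bool) (hz : 0 < vl v (ltr z)) :
    ∃ K, 0 ≤ K ∧ (∀ r ∈ R, Reach v (Set.Icc (-K) K) r) ∧
      ((∀ g ∈ D, InA v (Set.Ici (-K)) (Subgroup.normalClosure R) g →
          InA v (Set.Iic K) (Subgroup.normalClosure R) g) ∨
       (∀ g ∈ D, InA v (Set.Iic K) (Subgroup.normalClosure R) g →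
          InA v (Set.Ici (-K)) (Subgroup.normalClosure R) g)) := by
  set N := Subgroup.normalClosure R with hN
  obtain ⟨μ', hμ'⟩ := (Set.finite_range (fun l : X × Bool => |vl v (ltr l)|)).bddAbove
  have hμ : ∀ l, |vl v (ltr l)| ≤ max 0 μ' := fun l => (hμ' ⟨l, rfl⟩).trans (le_max_right _ _)
  set μ := max 0 μ'
  have hμ0 : 0 ≤ μ := le_max_left _ _
  choose Kr hKr0 hKr using exists_reach v
  obtain ⟨K', hK'⟩ := (hR.image Kr).bddAbove
  set K := max K' (vl v (ltr z) + μ) with hKdef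
  have hKz : vl v (ltr z) + μ ≤ K := le_max_right _ _
  have hK0 : 0 ≤ K := by linarith
  have hKμ : μ ≤ K := by linarith
  have hRK : ∀ r ∈ R, Reach v (Set.Icc (-K) K) r := by
    intro r hr
    have : Kr r ≤ K := (hK' ⟨r, hr, rfl⟩).trans (le_max_left _ _)
    exact (hKr r).mono (Set.Icc_subset_Icc (by linarith) this)
  refine ⟨K, hK0, hRK, ?_⟩
  have h0p : (0 : ℝ) ∈ Set.Ici (-K) := by simpa
  have h0m : (0 : ℝ) ∈ Set.Iic K := by simpa
  set Ap := AAD v (Set.Ici (-K)) N D hND hvD h0p with hAp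
  set Am := AAD v (Set.Iic K) N D hND hvD h0m with hAm
  have : Ap.Normal := AAD_normal v _ N D hND hvD h0p hmet
  have : Am.Normal := AAD_normal v _ N D hND hvD h0m hmet
  let ιp : D →* Equiv.Perm ((D ⧸ Am) × (D ⧸ Ap)) :=
    (heisP (D ⧸ Am) (D ⧸ Ap)).comp (QuotientGroup.mk' Am)
  let ιm : D →* Equiv.Perm ((D ⧸ Am) × (D ⧸ Ap)) :=
    (heisM (D ⧸ Am) (D ⧸ Ap)).comp (QuotientGroup.mk' Ap)
  have ιpk : ∀ g ∈ Am, ιp g = 1 := by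
    intro g hg
    change heisP _ _ ((QuotientGroup.mk' Am) g) = 1
    rw [show (QuotientGroup.mk' Am) g = 1 from (QuotientGroup.eq_one_iff g).2 hg, map_one]
  have ιmk : ∀ g ∈ Ap, ιm g = 1 := by
    intro g hg
    change heisM _ _ ((QuotientGroup.mk' Ap) g) = 1
    rw [show (QuotientGroup.mk' Ap) g = 1 from (QuotientGroup.eq_one_iff g).2 hg, map_one]
  have hNm : ∀ g : D, (g : FreeGroup X) ∈ N → g ∈ Am := fun g hg => ⟨1, .one, by simpa⟩
  have hNp : ∀ g : D, (g : FreeGroup X) ∈ N → g ∈ Ap := fun g hg => ⟨1, .one, by simpa⟩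
  choose s hs hsr using exists_section hD z hz μ hμ0 hμ K hKz
  classical
  let sel : FreeGroup X ⧸ D → (D →* Equiv.Perm ((D ⧸ Am) × (D ⧸ Ap))) :=
    fun q => if 0 ≤ vl v (s q) then ιp else ιm
  have hvs : ∀ q, ∀ g : FreeGroup X,
      vl v (s ((g : FreeGroup X ⧸ D) * q)) = vl v g + vl v (s q) := by
    intro q g
    have : (s ((g : FreeGroup X ⧸ D) * q))⁻¹ * (g * s q) ∈ D := (kap s hs g q).2
    have := hvD _ this
    rw [vl_mul, vl_inv, vl_mul] at this
    linarith
  -- band elements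
  have band : ∀ (l : X × Bool) q, vl v (s q) ∈ Set.Icc (-K) K →
      vl v (s ((ltr l : FreeGroup X ⧸ D) * q)) ∈ Set.Icc (-K) K →
      ιp (kap s hs (ltr l) q) = ιm (kap s hs (ltr l) q) := by
    intro l q h1 h2
    have r1 : Reach v (Set.Icc (-K) K) (s q) :=
      (hsr q).mono (Set.Icc_subset_Icc (le_min le_rfl h1.1) (max_le le_rfl h1.2))
    have r2 : Reach v (Set.Icc (-K) K) (s ((ltr l : FreeGroup X ⧸ D) * q)) :=
      (hsr _).mono (Set.Icc_subset_Icc (le_min le_rfl h2.1) (max_le le_rfl h2.2))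
    have r3 : Reach v (Set.Icc (-K) K) (ltr l * s q) := .step _ _ r1 (by
      rw [vl_mul, ← hvs]; exact h2)
    have r4 : Reach v (Set.Icc (-K) K) (kap s hs (ltr l) q) :=
      Reach.inv_mul (I := Set.Icc (-K) K) (v := v) ⟨by linarith, hK0⟩ r2 _ r3
        (by rw [vl_mul, ← hvs])
    have m1 : kap s hs (ltr l) q ∈ Ap := ⟨_, r4.mono Set.Icc_subset_Ici_self, by simp⟩
    have m2 : kap s hs (ltr l) q ∈ Am := ⟨_, r4.mono Set.Icc_subset_Iic_self, by simp⟩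
    rw [ιpk _ m2, ιmk _ m1]
  have lb : ∀ (l : X × Bool) q, |vl v (s ((ltr l : FreeGroup X ⧸ D) * q)) - vl v (s q)| ≤ μ := by
    intro l q; rw [hvs]; simpa using hμ l
  have selp : ∀ (l : X × Bool) q, vl v (s q) ∈ Set.Ici (-K) →
      vl v (s ((ltr l : FreeGroup X ⧸ D) * q)) ∈ Set.Ici (-K) →
      sel q (kap s hs (ltr l) q) = ιp (kap s hs (ltr l) q) ∧
      sel ((ltr l : FreeGroup X ⧸ D) * q) (kap s hs (ltr l) q) = ιp (kap s hs (ltr l) q) := by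
    intro l q h1 h2
    have hl := abs_le.1 (lb l q)
    simp only [Set.mem_Ici] at h1 h2
    constructor
    · by_cases h : 0 ≤ vl v (s q)
      · simp [sel, h]
      · simp only [sel, h, if_false]
        push Not at h
        exact (band l q ⟨h1, by linarith⟩ ⟨h2, by linarith⟩).symm
    · by_cases h : 0 ≤ vl v (s ((ltr l : FreeGroup X ⧸ D) * q))
      · simp [sel, h]
      · simp only [sel, h, if_false]
        push Not at h
        exact (band l q ⟨h1, by linarith⟩ ⟨h2, by linarith⟩).symm
  have selm : ∀ (l : X × Bool) q, vl v (s q) ∈ Set.Iic K →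
      vl v (s ((ltr l : FreeGroup X ⧸ D) * q)) ∈ Set.Iic K →
      sel q (kap s hs (ltr l) q) = ιm (kap s hs (ltr l) q) ∧
      sel ((ltr l : FreeGroup X ⧸ D) * q) (kap s hs (ltr l) q) = ιm (kap s hs (ltr l) q) := by
    intro l q h1 h2
    have hl := abs_le.1 (lb l q)
    simp only [Set.mem_Iic] at h1 h2
    constructor
    · by_cases h : 0 ≤ vl v (s q)
      · simp only [sel, h, if_true]
        exact (band l q ⟨by linarith, h1⟩ ⟨by linarith, h2⟩)
      · simp [sel, h]
    · by_cases h : 0 ≤ vl v (s ((ltr l : FreeGroup X ⧸ D) * q))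
      · simp only [sel, h, if_true]
        exact (band l q ⟨by linarith, h1⟩ ⟨by linarith, h2⟩)
      · simp [sel, h]
  set Θ := Th s hs sel with hΘ
  have kill : ∀ r ∈ R, Θ r = 1 := by
    intro r hr
    have hrN : r ∈ N := Subgroup.subset_normalClosure hr
    have hq : ∀ q : FreeGroup X ⧸ D, (r : FreeGroup X ⧸ D) * q = q := by
      intro q
      rw [(QuotientGroup.eq_one_iff r).2 (hND hrN), one_mul]
    have hk : ∀ q, (kap s hs r q : FreeGroup X) ∈ N := by
      intro q
      change (s ((r : FreeGroup X ⧸ D) * q))⁻¹ * (r * s q) ∈ N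
      rw [hq]
      have := Subgroup.Normal.conj_mem (H := N) inferInstance _ hrN (s q)⁻¹
      simpa [mul_assoc] using this
    ext1 ⟨q, m⟩
    by_cases h : 0 ≤ vl v (s q)
    · rw [hΘ, Th_hol s hs sel hvD ιp (Set.Ici (-K)) selp q (by simp; linarith) r
        ((hRK r hr).mono (fun t ht => by simp at ht ⊢; linarith))]
      rw [ιpk _ (hNm _ (hk q)), hq]; rfl
    · push Not at h
      rw [hΘ, Th_hol s hs sel hvD ιm (Set.Iic K) selm q (by simp; linarith) r
        ((hRK r hr).mono (fun t ht => by simp at ht ⊢; linarith))]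
      rw [ιmk _ (hNp _ (hk q)), hq]; rfl
  have killN : ∀ r ∈ N, Θ r = 1 := by
    have : N ≤ Θ.ker := Subgroup.normalClosure_le_normal (fun r hr => kill r hr)
    exact fun r hr => this hr
  have hs1 : s 1 ∈ D := by rw [← QuotientGroup.eq_one_iff, hs]
  have hk1 : ∀ h : FreeGroup X, ∀ hh : h ∈ D, (⟨h, hh⟩ : D)⁻¹ * kap s hs h 1 ∈ Am ⊓ Ap := by
    intro h hh
    have e : (((⟨h, hh⟩ : D)⁻¹ * kap s hs h 1 : D) : FreeGroup X) =
        h⁻¹ * (s 1)⁻¹ * h⁻¹⁻¹ * (s 1)⁻¹⁻¹ := by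
      change h⁻¹ * ((s ((h : FreeGroup X ⧸ D) * 1))⁻¹ * (h * s 1)) = _
      rw [(QuotientGroup.eq_one_iff h).2 hh, one_mul]; group
    have e2 := hmet _ (inv_mem hh) _ (inv_mem hs1)
    rw [← e] at e2
    exact ⟨hNm _ e2, hNp _ e2⟩
  have evp : ∀ g (hg : g ∈ D), InA v (Set.Ici (-K)) N g → ∀ m, Θ g (1, m) = (1, ιp ⟨g, hg⟩ m) := by
    rintro g hg ⟨h, hr, hn⟩ m
    have hh : h ∈ D := by
      have := mul_mem hg (inv_mem (hND hn))
      simpa using this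
    have e1 : Θ g = Θ h := by
      have := killN _ hn
      rw [map_mul, map_inv, inv_mul_eq_one] at this; exact this.symm
    have hs10 := hvD _ hs1
    rw [e1, hΘ, Th_hol s hs sel hvD ιp (Set.Ici (-K)) selp 1 (by rw [hs10]; exact h0p) h
      (hr.mono (fun t ht => by simpa [hs10] using ht))]
    have e2 : ιp (kap s hs h 1) = ιp ⟨h, hh⟩ := by
      have := ιpk _ (hk1 h hh).1
      rw [map_mul, map_inv, inv_mul_eq_one] at this; exact this.symm
    have e3 : ιp ⟨g, hg⟩ = ιp ⟨h, hh⟩ := by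
      have := ιpk ((⟨h, hh⟩ : D)⁻¹ * ⟨g, hg⟩) (hNm _ hn)
      rw [map_mul, map_inv, inv_mul_eq_one] at this; exact this.symm
    rw [e2, e3, (QuotientGroup.eq_one_iff h).2 hh, mul_one]
  have evm : ∀ g (hg : g ∈ D), InA v (Set.Iic K) N g → ∀ m, Θ g (1, m) = (1, ιm ⟨g, hg⟩ m) := by
    rintro g hg ⟨h, hr, hn⟩ m
    have hh : h ∈ D := by
      have := mul_mem hg (inv_mem (hND hn))
      simpa using this
    have e1 : Θ g = Θ h := by
      have := killN _ hn
      rw [map_mul, map_inv, inv_mul_eq_one] at this; exact this.symm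
    have hs10 := hvD _ hs1
    rw [e1, hΘ, Th_hol s hs sel hvD ιm (Set.Iic K) selm 1 (by rw [hs10]; exact h0m) h
      (hr.mono (fun t ht => by simpa [hs10] using ht))]
    have e2 : ιm (kap s hs h 1) = ιm ⟨h, hh⟩ := by
      have := ιmk _ (hk1 h hh).2
      rw [map_mul, map_inv, inv_mul_eq_one] at this; exact this.symm
    have e3 : ιm ⟨g, hg⟩ = ιm ⟨h, hh⟩ := by
      have := ιmk ((⟨h, hh⟩ : D)⁻¹ * ⟨g, hg⟩) (hNp _ hn)
      rw [map_mul, map_inv, inv_mul_eq_one] at this; exact this.symm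
    rw [e2, e3, (QuotientGroup.eq_one_iff h).2 hh, mul_one]
  by_contra hcon
  push Not at hcon
  obtain ⟨⟨a, haD, hap, ham⟩, ⟨b, hbD, hbm, hbp⟩⟩ := hcon
  have hab : Θ a * Θ b = Θ b * Θ a := by
    have := killN _ (hmet a haD b hbD)
    rw [map_mul, map_mul, map_mul, map_inv, map_inv] at this
    rwa [mul_inv_eq_one, mul_inv_eq_iff_eq_mul] at this
  have h1 := congrArg (fun e => e (1, (1, 1))) hab
  simp only [Equiv.Perm.mul_apply] at h1
  rw [evp a haD hap, evm b hbD hbm, evp a haD hap, evm b hbD hbm] at h1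
  have hb1 : ((⟨b, hbD⟩ : D) : D ⧸ Ap) ≠ 1 := by
    intro h; exact hbp ((QuotientGroup.eq_one_iff _).1 h)
  have ha1 : ((⟨a, haD⟩ : D) : D ⧸ Am) ≠ 1 := by
    intro h; exact ham ((QuotientGroup.eq_one_iff _).1 h)
  apply ha1
  have h2 := congrArg (fun p => p.2.1) h1
  simp only [ιp, ιm, heisP, heisM, MonoidHom.comp_apply, MonoidHom.coe_mk, OneHom.coe_mk,
    Equiv.coe_fn_mk, QuotientGroup.mk'_apply, mul_one, hb1, if_false, if_true] at h2
  exact h2.symm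

end compare


section tame
variable {X : Type}

/-- letter commutators -/
def cm (e : (X × Bool) × (X × Bool)) : FreeGroup X :=
  ltr e.1 * ltr e.2 * (ltr e.1)⁻¹ * (ltr e.2)⁻¹

theorem cm_swap (e : (X × Bool) × (X × Bool)) : cm (e.2, e.1) = (cm e)⁻¹ := by
  simp [cm, mul_assoc]

/-- subgroup generated by conjugates of letter commutators by elements of value at most `t` -/
def Hc (v : X → ℝ) (t : ℝ) : Subgroup (FreeGroup X) :=
  Subgroup.closure {g | ∃ e u, vl v u ≤ t ∧ g = u⁻¹ * cm e * u}

theorem Hc_mem {v : X → ℝ} {t : ℝ} (e) {u : FreeGroup X} (h : vl v u ≤ t) :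
    u⁻¹ * cm e * u ∈ Hc v t := Subgroup.subset_closure ⟨e, u, h, rfl⟩

/-- all conjugates -/
def Hall (X : Type) : Subgroup (FreeGroup X) :=
  Subgroup.closure {g | ∃ e u, g = u⁻¹ * cm e * u}

theorem cm_mem (e : (X × Bool) × (X × Bool)) : cm e ∈ commutator (FreeGroup X) :=
  comm_mem_commutator _ _

theorem commutator_le_Hall : commutator (FreeGroup X) ≤ Hall X := by
  have hn : (Hall X).Normal := by
    constructor
    intro n hn g
    have : Hall X ≤ (Hall X).comap (MulAut.conj g).toMonoidHom := by
      conv_lhs => unfold Hall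
      rw [Subgroup.closure_le]
      rintro _ ⟨e, u, rfl⟩
      refine Subgroup.subset_closure ⟨e, u * g⁻¹, ?_⟩
      simp [mul_assoc]
    exact this hn
  have h1 : ∀ l m : X × Bool, ((ltr l : FreeGroup X) : FreeGroup X ⧸ Hall X) * (ltr m : FreeGroup X) =
      (ltr m : FreeGroup X) * (ltr l : FreeGroup X) := by
    intro l m
    rw [← QuotientGroup.mk_mul, ← QuotientGroup.mk_mul, QuotientGroup.eq]
    refine Subgroup.subset_closure ⟨(linv m, linv l), 1, ?_⟩
    simp [cm, ltr_linv, mul_assoc]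
  have h2 : ∀ (l : X × Bool) (g : FreeGroup X), ((ltr l : FreeGroup X) : FreeGroup X ⧸ Hall X) * g =
      g * (ltr l : FreeGroup X) := by
    intro l g
    induction g using letter_induction with
    | h1 => simp
    | h m g ih => rw [QuotientGroup.mk_mul, ← mul_assoc, h1, mul_assoc, ih, mul_assoc]
  have h3 : ∀ (h g : FreeGroup X), (h : FreeGroup X ⧸ Hall X) * g = g * h := by
    intro h g
    induction h using letter_induction with
    | h1 => simp
    | h m h ih => rw [QuotientGroup.mk_mul, mul_assoc, ih, ← mul_assoc, h2, mul_assoc]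
  rw [commutator_def, Subgroup.commutator_le]
  intro a _ b _
  rw [← QuotientGroup.eq_one_iff, commutatorElement_def]
  simp only [QuotientGroup.mk_mul, QuotientGroup.mk_inv]
  rw [h3 a b]; group

variable {v : X → ℝ}

theorem vl_commutator {g : FreeGroup X} (hg : g ∈ commutator (FreeGroup X)) : vl v g = 0 := by
  have := Abelianization.commutator_subset_ker
    (FreeGroup.lift (fun x => Multiplicative.ofAdd (v x))) hg
  simpa [vl] using this

theorem push_aux {K : ℝ} {z : X × Bool} (hz : vl v (ltr z) ≤ 0) (l : X × Bool) (M : ℕ) :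
    ∀ g : FreeGroup X, vl v g ≤ K →
      g⁻¹ * ((ltr l)⁻¹ * (ltr z ^ M)⁻¹ * ltr l * ltr z ^ M) * g ∈ Hc v K := by
  induction M with
  | zero => intro g _; simp
  | succ M ih =>
    intro g hg
    have e1 := ih (ltr z * g) (by rw [vl_mul]; linarith)
    have e2 := Hc_mem (linv l, linv z) hg
    have := mul_mem e2 e1
    convert this using 1
    simp only [cm, ltr_linv, pow_succ]
    group

theorem push {K : ℝ} (hK : 0 ≤ K) {z : X × Bool} (hz : vl v (ltr z) ≤ 0) {g : FreeGroup X}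
    (hg : Reach v (Set.Iic K) g) (M : ℕ) :
    g⁻¹ * (ltr z ^ M)⁻¹ * g * ltr z ^ M ∈ Hc v K := by
  induction hg with
  | one => simp
  | step l g hg _ ih =>
    have e1 := push_aux (K := K) hz l M g (hg.mem (by simpa))
    convert mul_mem e1 ih using 1
    group

theorem push_large {K : ℝ} {z : X × Bool} (hz : vl v (ltr z) < 0) {g : FreeGroup X}
    (hg : g ∈ Hall X) : ∃ M0, ∀ M ≥ M0, (ltr z ^ M)⁻¹ * g * ltr z ^ M ∈ Hc v K := by
  unfold Hall at hg
  induction hg using Subgroup.closure_induction with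
  | mem g h =>
    obtain ⟨e, u, rfl⟩ := h
    obtain ⟨M0, hM0⟩ := exists_nat_ge ((vl v u - K) / (- vl v (ltr z)))
    refine ⟨M0, fun M hM => ?_⟩
    have := Hc_mem (v := v) (t := K) e (u := u * ltr z ^ M) (by
      rw [vl_mul, vl_pow]
      rw [div_le_iff₀ (by linarith)] at hM0
      have : (M0 : ℝ) ≤ M := by exact_mod_cast hM
      nlinarith)
    convert this using 1
    group
  | one => exact ⟨0, fun M _ => by simp⟩
  | mul a b _ _ iha ihb =>
    obtain ⟨M1, h1⟩ := iha
    obtain ⟨M2, h2⟩ := ihb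
    refine ⟨max M1 M2, fun M hM => ?_⟩
    convert mul_mem (h1 M (le_of_max_le_left hM)) (h2 M (le_of_max_le_right hM)) using 1
    group
  | inv a _ iha =>
    obtain ⟨M1, h1⟩ := iha
    refine ⟨M1, fun M hM => ?_⟩
    convert inv_mem (h1 M hM) using 1
    group

theorem reach_mem_Hc {K : ℝ} (hK : 0 ≤ K) {z : X × Bool} (hz : vl v (ltr z) < 0) {g : FreeGroup X}
    (hg : Reach v (Set.Iic K) g) (hc : g ∈ commutator (FreeGroup X)) : g ∈ Hc v K := by
  obtain ⟨M, hM⟩ := push_large (K := K) hz (commutator_le_Hall hc)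
  have e1 := hM M le_rfl
  have e2 := push hK hz.le hg M
  convert mul_mem e1 (inv_mem e2) using 1
  group

theorem normalClosure_decomp {R : Set (FreeGroup X)} {n : FreeGroup X}
    (hn : n ∈ Subgroup.normalClosure R) :
    ∃ ρ ∈ Subgroup.closure R, ∃ f ∈ commutator (FreeGroup X), n = ρ * f := by
  have hN : (Subgroup.closure R ⊔ commutator (FreeGroup X)).Normal := by
    constructor
    intro n hn g
    have e : g * n * g⁻¹ = (g * n * g⁻¹ * n⁻¹) * n := by group
    rw [e]
    exact mul_mem (Subgroup.mem_sup_right (comm_mem_commutator _ _)) hn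
  have := Subgroup.normalClosure_le_normal (N := Subgroup.closure R ⊔ commutator (FreeGroup X))
    (fun r hr => Subgroup.mem_sup_left (Subgroup.subset_closure hr)) hn
  rw [Subgroup.mem_sup_of_normal_right] at this
  obtain ⟨ρ, h1, f, h2, h3⟩ := this
  exact ⟨ρ, h1, f, h2, h3.symm⟩

/-- tameness for the character `v` -/
def Tame (R : Set (FreeGroup X)) (v : X → ℝ) : Prop :=
  ∀ e : (X × Bool) × (X × Bool), ∃ h ∈ Hc v (-1), h⁻¹ * cm e ∈ Subgroup.normalClosure R

theorem tame_aux {R : Set (FreeGroup X)} {D : Subgroup (FreeGroup X)}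
    (hD : commutator (FreeGroup X) ≤ D)
    (hND : Subgroup.normalClosure R ≤ D)
    (hvD : ∀ g ∈ D, vl v g = 0) (z : X × Bool) (hz : 0 < vl v (ltr z)) {K : ℝ} (hK : 0 ≤ K)
    (hRK : ∀ r ∈ R, Reach v (Set.Icc (-K) K) r)
    (h : ∀ g ∈ D, InA v (Set.Ici (-K)) (Subgroup.normalClosure R) g →
          InA v (Set.Iic K) (Subgroup.normalClosure R) g) : Tame R v := by
  intro e
  obtain ⟨Kc, hKc0, hKc⟩ := exists_reach v (cm e)
  obtain ⟨j, hj⟩ := exists_nat_ge ((K + Kc + 1) / vl v (ltr z))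
  rw [div_le_iff₀ hz] at hj
  set g0 := ltr z ^ j with hg0
  have hvg0 : vl v g0 = j * vl v (ltr z) := by rw [hg0, vl_pow]
  have hr0 : Reach v (Set.Ici (-K)) g0 := by
    have := Reach.pow (v := v) (I := Set.Ici (-K)) Set.ordConnected_Ici (g := 1) .one
      (by rw [vl_one]; simpa) z j (by rw [vl_one]; simp; linarith)
    simpa using this
  have hcv : vl v (cm e) = 0 := hvD _ (hD (cm_mem e))
  have hr1 : Reach v (Set.Ici (-K)) (cm e * g0) := by
    refine Reach.mul (hKc.mono ?_) hr0
    intro t ht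
    simp only [Set.mem_Icc, Set.mem_ofPred_eq, Set.mem_Ici] at ht ⊢
    linarith
  have hr2 : Reach v (Set.Ici (-K)) (g0⁻¹ * (cm e * g0)) :=
    hr0.inv_mul (by simpa) _ hr1 (by rw [vl_mul, hcv, zero_add])
  set g := g0⁻¹ * (cm e * g0) with hg
  have hgc : g ∈ commutator (FreeGroup X) := by
    have := Subgroup.Normal.conj_mem (H := commutator (FreeGroup X)) inferInstance _ (cm_mem e) g0⁻¹
    simpa [hg, mul_assoc] using this
  obtain ⟨k, hkr, hkn⟩ := h g (hD hgc) ⟨g, hr2, by simp⟩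
  have hkv : vl v k = 0 := by
    have := hvD _ (hND hkn)
    rw [vl_mul, vl_inv, hvD g (hD hgc)] at this; linarith
  obtain ⟨ρ, hρ, f, hf, hρf⟩ := normalClosure_decomp (inv_mem hkn)
  have hρ' : vl v ρ = 0 ∧ Reach v (Set.Iic K) ρ := by
    clear hρf
    induction hρ using Subgroup.closure_induction with
    | mem r hr => exact ⟨hvD _ (hND (Subgroup.subset_normalClosure hr)),
        (hRK r hr).mono Set.Icc_subset_Iic_self⟩
    | one => exact ⟨vl_one v, .one⟩
    | mul a b _ _ ha hb => exact ⟨by rw [vl_mul, ha.1, hb.1, add_zero], ha.2.mul0 hb.2 hb.1⟩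
    | inv a _ ha => exact ⟨by rw [vl_inv, ha.1, neg_zero], ha.2.inv (by simpa) ha.1⟩
  have hρN : ρ ∈ Subgroup.normalClosure R := Subgroup.closure_le_normalClosure hρ
  have hf' : ρ⁻¹ * k ∈ commutator (FreeGroup X) := by
    have : ρ⁻¹ * k = (ρ⁻¹ * g * ρ⁻¹⁻¹) * f := by
      have : k = g * (ρ * f) := by rw [← hρf]; group
      rw [this]; group
    rw [this]
    exact mul_mem (Subgroup.Normal.conj_mem inferInstance _ hgc _) hf
  have hr3 : Reach v (Set.Iic K) (ρ⁻¹ * k) := (hρ'.2.inv (by simpa) hρ'.1).mul0 hkr hkv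
  have hH := reach_mem_Hc hK (z := linv z) (by rw [ltr_linv, vl_inv]; linarith) hr3 hf'
  refine ⟨g0 * (ρ⁻¹ * k) * g0⁻¹, ?_, ?_⟩
  · have : Hc v K ≤ (Hc v (-1)).comap (MulAut.conj g0).toMonoidHom := by
      conv_lhs => unfold Hc
      rw [Subgroup.closure_le]
      rintro _ ⟨e, u, hu, rfl⟩
      refine Subgroup.subset_closure ⟨e, u * g0⁻¹, ?_, by simp [mul_assoc]⟩
      rw [vl_mul, vl_inv, hvg0]; linarith
    exact this hH
  · have e1 : (g0 * (ρ⁻¹ * k) * g0⁻¹)⁻¹ * cm e = g0 * ((k⁻¹ * ρ * k⁻¹⁻¹) * (k⁻¹ * g)) * g0⁻¹ := by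
      rw [hg]; group
    rw [e1]
    exact Subgroup.Normal.conj_mem inferInstance _
      (mul_mem (Subgroup.Normal.conj_mem inferInstance _ hρN _) hkn) _

theorem vl_neg (v : X → ℝ) (g : FreeGroup X) : vl (-v) g = - vl v g := by
  induction g using letter_induction with
  | h1 => simp [vl_one]
  | h l g ih =>
    rw [vl_mul, vl_mul, ih]
    obtain ⟨x, b⟩ := l
    cases b
    · rw [ltr_false, vl_inv, vl_inv, vl_of, vl_of]; simp; ring
    · rw [ltr_true, vl_of, vl_of]; simp; ring

theorem Reach.neg {I : Set ℝ} {g : FreeGroup X} (h : Reach v I g) : Reach (-v) {t | -t ∈ I} g := by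
  induction h with
  | one => exact .one
  | step l g _ h ih => exact .step _ _ ih (by simpa [vl_neg] using h)

theorem tame [Finite X] {R : Set (FreeGroup X)} (hR : R.Finite)
    (hmeta : IsMetabelian (FreeGroup X ⧸ Subgroup.normalClosure R)) (hv : v ≠ 0) :
    Tame R v ∨ Tame R (-v) := by
  by_cases hA : ∃ r ∈ Subgroup.normalClosure R, vl v r ≠ 0
  · left
    obtain ⟨r, hr, hv⟩ := hA
    intro e
    have : ∃ k : ℤ, vl v (r ^ k) ≤ -1 := by
      rcases lt_or_gt_of_ne hv with h | h
      · obtain ⟨n, hn⟩ := exists_nat_ge (1 / (- vl v r))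
        rw [div_le_iff₀ (by linarith)] at hn
        exact ⟨n, by rw [vl_zpow]; push_cast; linarith⟩
      · obtain ⟨n, hn⟩ := exists_nat_ge (1 / (vl v r))
        rw [div_le_iff₀ (by linarith)] at hn
        exact ⟨-n, by rw [vl_zpow]; push_cast; linarith⟩
    obtain ⟨k, hk⟩ := this
    refine ⟨_, Hc_mem e hk, ?_⟩
    have hrk := zpow_mem hr k
    have e1 : ((r ^ k)⁻¹ * cm e * r ^ k)⁻¹ * cm e =
      (r ^ k)⁻¹ * ((cm e)⁻¹ * r ^ k * (cm e)⁻¹⁻¹) := by group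
    rw [e1]
    exact mul_mem (inv_mem hrk) (Subgroup.Normal.conj_mem inferInstance _ hrk _)
  · push Not at hA
    set N := Subgroup.normalClosure R
    set D : Subgroup (FreeGroup X) := (commutator (FreeGroup X ⧸ N)).comap (QuotientGroup.mk' N)
    have hcm : commutator (FreeGroup X ⧸ N) =
        (commutator (FreeGroup X)).map (QuotientGroup.mk' N) := by
      rw [commutator_def, commutator_def, Subgroup.map_commutator]
      rw [Subgroup.map_top_of_surjective _ (QuotientGroup.mk'_surjective N)]
    have hD : commutator (FreeGroup X) ≤ D := by
      rw [← Subgroup.map_le_iff_le_comap, hcm]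
    have hND : N ≤ D := by
      intro n hn
      have : QuotientGroup.mk' N n = 1 := (QuotientGroup.eq_one_iff n).2 hn
      rw [Subgroup.mem_comap, this]; exact one_mem _
    have hvD : ∀ g ∈ D, vl v g = 0 := by
      intro g hg
      rw [Subgroup.mem_comap, hcm] at hg
      obtain ⟨f, hf, hfg⟩ := hg
      have := QuotientGroup.eq.1 hfg
      have := hA _ this
      rw [vl_mul, vl_inv, vl_commutator hf] at this
      linarith
    have hmet : ∀ a ∈ D, ∀ b ∈ D, a * b * a⁻¹ * b⁻¹ ∈ N := by
      intro a ha b hb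
      have := hmeta _ _ ha hb
      rw [← QuotientGroup.eq_one_iff]
      simp only [QuotientGroup.mk_mul, QuotientGroup.mk_inv]
      rw [mul_inv_eq_one, mul_inv_eq_iff_eq_mul]
      exact this
    obtain ⟨x, hx⟩ : ∃ x, v x ≠ 0 := by
      by_contra h; push Not at h; exact hv (funext h)
    obtain ⟨z, hz⟩ : ∃ z, 0 < vl v (ltr z) := by
      rcases lt_or_gt_of_ne hx with h | h
      · exact ⟨(x, false), by rw [ltr_false, vl_inv, vl_of]; linarith⟩
      · exact ⟨(x, true), by rw [ltr_true, vl_of]; linarith⟩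
    obtain ⟨K, hK0, hRK, h | h⟩ := compare hR D hND hD hmet v hvD z hz
    · exact Or.inl (tame_aux hD hND hvD z hz hK0 hRK h)
    · right
      refine tame_aux (v := -v) hD hND (fun g hg => by rw [vl_neg, hvD g hg, neg_zero]) (linv z)
        (by rw [ltr_linv, vl_inv, vl_neg]; linarith) hK0 (fun r hr => (hRK r hr).neg.mono ?_) ?_
      · intro t ht
        simp only [Set.mem_Icc, Set.mem_ofPred_eq] at ht ⊢
        exact ⟨by linarith, by linarith⟩
      · rintro g hg ⟨k, hk, hkn⟩
        obtain ⟨k', hk', hkn'⟩ := h g hg ⟨k, by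
          have := hk.neg
          rw [neg_neg] at this
          exact this.mono (fun t ht => by simp at ht ⊢; linarith), hkn⟩
        exact ⟨k', hk'.neg.mono (fun t ht => by simp at ht ⊢; linarith), hkn'⟩

end tame


section compactness
variable {X : Type}

/-- index type of letter commutators -/
abbrev EI (X : Type) := (X × Bool) × (X × Bool)

/-- conjugation action of a list of letters -/
def act : List (X × Bool) → FreeGroup X → FreeGroup X
  | [], d => d
  | a :: w, d => (ltr a)⁻¹ * act w d * ltr a

theorem act_append (a b : List (X × Bool)) (d : FreeGroup X) : act (a ++ b) d = act a (act b d) := by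
  induction a with
  | nil => rfl
  | cons x a ih => simp [act, ih]

theorem act_mul (a : List (X × Bool)) (d d' : FreeGroup X) : act a (d * d') = act a d * act a d' := by
  induction a with
  | nil => rfl
  | cons x a ih => simp [act, ih, mul_assoc]

theorem act_one (a : List (X × Bool)) : act a 1 = 1 := by
  induction a with
  | nil => rfl
  | cons x a ih => simp [act, ih]

theorem act_inv (a : List (X × Bool)) (d : FreeGroup X) : act a d⁻¹ = (act a d)⁻¹ := by
  rw [eq_inv_iff_mul_eq_one, ← act_mul, inv_mul_cancel, act_one]

theorem act_eq (L : List (X × Bool)) (d : FreeGroup X) :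
    act L d = (FreeGroup.mk L.reverse)⁻¹ * d * FreeGroup.mk L.reverse := by
  induction L with
  | nil => simp [act, mk_nil]
  | cons a L ih =>
    rw [act, ih, List.reverse_cons, mk_append, mk_cons, mk_nil]
    group

theorem act_AEq {R : Set (FreeGroup X)} {a b : FreeGroup X} {N : ℕ} (h : AEq R a b N)
    (L : List (X × Bool)) : AEq R (act L a) (act L b) N := by
  rw [act_eq, act_eq]; exact h.conj _

theorem act_prod (a : List (X × Bool)) (l : List (FreeGroup X)) :
    act a l.prod = (l.map (act a)).prod := by
  induction l with
  | nil => simp [act_one]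
  | cons x l ih => simp [act_mul, ih]

open Classical in
/-- position vector of a letter -/
noncomputable def sg (l : X × Bool) : X → ℤ := Pi.single l.1 (if l.2 then 1 else -1)

/-- position vector of a list of letters -/
noncomputable def ab (L : List (X × Bool)) : X → ℤ := (L.map sg).sum

theorem ab_nil : ab ([] : List (X × Bool)) = 0 := rfl
theorem ab_cons (l : X × Bool) (L) : ab (l :: L) = sg l + ab L := by simp [ab]
theorem ab_append (L L' : List (X × Bool)) : ab (L ++ L') = ab L + ab L' := by simp [ab]
theorem ab_reverse (L : List (X × Bool)) : ab L.reverse = ab L := by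
  simp [ab, List.map_reverse, List.sum_reverse]
theorem sg_linv (l : X × Bool) : sg (linv l) = - sg l := by
  obtain ⟨x, b⟩ := l
  cases b <;> simp [sg, linv, ← Pi.single_neg]

/-- pairing -/
noncomputable def dt [Fintype X] (v : X → ℝ) (a : X → ℤ) : ℝ := ∑ x, v x * (a x : ℝ)

theorem dt_add [Fintype X] (v : X → ℝ) (a b : X → ℤ) : dt v (a + b) = dt v a + dt v b := by
  simp [dt, mul_add, Finset.sum_add_distrib]

theorem vl_mk [Fintype X] (v : X → ℝ) (L : List (X × Bool)) : vl v (FreeGroup.mk L) = dt v (ab L) := by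
  induction L with
  | nil => simp [mk_nil, vl_one, ab_nil, dt]
  | cons l L ih =>
    rw [mk_cons, vl_mul, ih, ab_cons, dt_add]
    congr 1
    obtain ⟨x, b⟩ := l
    cases b
    · rw [ltr_false, vl_inv, vl_of, dt, Finset.sum_eq_single x]
      · simp [sg]
      · intro y _ hy; simp [sg, hy]
      · simp
    · rw [ltr_true, vl_of, dt, Finset.sum_eq_single x]
      · simp [sg]
      · intro y _ hy; simp [sg, hy]
      · simp

/-- product of a list of conjugates -/
def cprod (P : List (List (X × Bool) × EI X)) : FreeGroup X :=
  (P.map fun t => act t.1 (cm t.2)).prod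

theorem cprod_append (P P' : List (List (X × Bool) × EI X)) :
    cprod (P ++ P') = cprod P * cprod P' := by simp [cprod]

theorem cprod_nil : cprod ([] : List (List (X × Bool) × EI X)) = 1 := rfl
theorem cprod_cons (t) (P : List (List (X × Bool) × EI X)) :
    cprod (t :: P) = act t.1 (cm t.2) * cprod P := by simp [cprod]

/-- inverse list -/
def pinv (P : List (List (X × Bool) × EI X)) : List (List (X × Bool) × EI X) :=
  (P.map fun t => (t.1, t.2.swap)).reverse

theorem cprod_pinv (P : List (List (X × Bool) × EI X)) : cprod (pinv P) = (cprod P)⁻¹ := by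
  induction P with
  | nil => simp [pinv, cprod]
  | cons t P ih =>
    have : pinv (t :: P) = pinv P ++ [(t.1, t.2.swap)] := by simp [pinv]
    rw [this, cprod_append, ih, cprod_cons, cprod_cons, cprod_nil, mul_inv_rev, mul_one, ← act_inv,
      ← cm_swap]; rfl

theorem Hc_list [Fintype X] {v : X → ℝ} {t : ℝ} {h : FreeGroup X} (hh : h ∈ Hc v t) :
    ∃ P : List (List (X × Bool) × EI X), (∀ p ∈ P, dt v (ab p.1) ≤ t) ∧ cprod P = h := by
  unfold Hc at hh
  induction hh using Subgroup.closure_induction with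
  | mem g hg =>
    obtain ⟨e, u, hu, rfl⟩ := hg
    obtain ⟨L, rfl, -⟩ := exists_list u
    refine ⟨[(L.reverse, e)], ?_, ?_⟩
    · rw [vl_mk] at hu; simp [ab_reverse, hu]
    · simp [cprod, act_eq]
  | one => exact ⟨[], by simp, rfl⟩
  | mul a b _ _ ha hb =>
    obtain ⟨P, h1, rfl⟩ := ha
    obtain ⟨P', h1', rfl⟩ := hb
    exact ⟨P ++ P', by
      intro p hp
      rcases List.mem_append.1 hp with h | h
      · exact h1 p h
      · exact h1' p h, cprod_append _ _⟩
  | inv a _ ha =>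
    obtain ⟨P, h1, rfl⟩ := ha
    refine ⟨pinv P, ?_, cprod_pinv P⟩
    intro p hp
    simp only [pinv, List.mem_reverse, List.mem_map] at hp
    obtain ⟨a, ha, rfl⟩ := hp
    exact h1 a ha

/-- quantitative tameness -/
def Good [Fintype X] (R : Set (FreeGroup X)) (D B : ℕ) (v : X → ℝ) : Prop :=
  ∀ e : EI X, ∃ P : List (List (X × Bool) × EI X), P.length ≤ D ∧
    (∀ p ∈ P, p.1.length ≤ D ∧ dt v (ab p.1) < - (1 / 2)) ∧ AEq R (cm e) (cprod P) B

theorem Good.mono [Fintype X] {R : Set (FreeGroup X)} {D B D' B' : ℕ} {v : X → ℝ}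
    (h : Good R D B v) (hD : D ≤ D') (hB : B ≤ B') : Good R D' B' v := by
  intro e
  obtain ⟨P, h1, h2, h3⟩ := h e
  exact ⟨P, h1.trans hD, fun p hp => ⟨(h2 p hp).1.trans hD, (h2 p hp).2⟩, h3.mono hB⟩

theorem Tame.good [Fintype X] {R : Set (FreeGroup X)} {v : X → ℝ} (h : Tame R v) :
    ∃ D B, ∀ᶠ v' in nhds v, Good R D B v' := by
  have : ∀ e : EI X, ∃ P : List (List (X × Bool) × EI X), ∃ B,
      (∀ p ∈ P, dt v (ab p.1) ≤ -1) ∧ AEq R (cm e) (cprod P) B := by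
    intro e
    obtain ⟨h, hh, hn⟩ := h e
    obtain ⟨P, hP, rfl⟩ := Hc_list hh
    obtain ⟨B, hB⟩ := exists_areaLe hn
    refine ⟨P, B, hP, ?_⟩
    have := hB.conj (cprod P)
    unfold AEq; convert this using 1; group
  choose P B hP hB using this
  obtain ⟨B0, hB0⟩ := (Set.finite_range B).bddAbove
  obtain ⟨D1, hD1⟩ := (Set.finite_range (fun e => (P e).length)).bddAbove
  obtain ⟨D2, hD2⟩ := (Set.finite_range
    (fun e => ((P e).map (fun p => p.1.length)).sum)).bddAbove
  refine ⟨D1 + D2, B0, ?_⟩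
  have hev : ∀ᶠ v' in nhds v, ∀ e, ∀ p ∈ {p | p ∈ P e}, dt v' (ab p.1) < - (1 / 2) := by
    rw [Filter.eventually_all]
    intro e
    rw [Filter.eventually_all_finite (List.finite_toSet (P e))]
    intro p hp
    have hc : Continuous (fun v' : X → ℝ => dt v' (ab p.1)) := by unfold dt; fun_prop
    refine hc.continuousAt.eventually_lt continuousAt_const ?_
    have := hP e p hp
    linarith
  filter_upwards [hev] with v' hv' e
  refine ⟨P e, ?_, ?_, (hB e).mono (hB0 ⟨e, rfl⟩)⟩
  · have := hD1 ⟨e, rfl⟩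
    simp only at this; omega
  · intro p hp
    refine ⟨?_, hv' e p hp⟩
    have h1 := hD2 ⟨e, rfl⟩
    have h2 : p.1.length ≤ ((P e).map (fun p => p.1.length)).sum :=
      List.single_le_sum (by simp) _ (List.mem_map_of_mem hp)
    simp only at h1; omega

theorem tame_unif_sphere [Fintype X] {R : Set (FreeGroup X)} (hR : R.Finite)
    (hmeta : IsMetabelian (FreeGroup X ⧸ Subgroup.normalClosure R)) :
    ∃ D B, ∀ v : X → ℝ, ∑ x, v x ^ 2 = 1 → Good R D B v ∨ Good R D B (-v) := by
  have hc : IsCompact {v : X → ℝ | ∑ x, v x ^ 2 = 1} := by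
    apply Metric.isCompact_of_isClosed_isBounded
    · exact isClosed_eq (by fun_prop) (by fun_prop)
    · refine (Metric.isBounded_iff_subset_closedBall 0).2 ⟨1, fun v hv => ?_⟩
      rw [mem_closedBall_zero_iff, pi_norm_le_iff_of_nonneg zero_le_one]
      intro x
      have : v x ^ 2 ≤ 1 := by
        rw [← show ∑ x, v x ^ 2 = 1 from hv]
        exact Finset.single_le_sum (f := fun x => v x ^ 2) (fun i _ => sq_nonneg _) (Finset.mem_univ x)
      rw [Real.norm_eq_abs]
      exact abs_le_one_iff_mul_self_le_one.2 (by nlinarith)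
  have := hc.induction_on (p := fun s => ∃ D B, ∀ v ∈ s, Good R D B v ∨ Good R D B (-v))
    ⟨0, 0, by simp⟩
    (by rintro s t hst ⟨D, B, h⟩; exact ⟨D, B, fun v hv => h v (hst hv)⟩)
    (by
      rintro s t ⟨D, B, h⟩ ⟨D', B', h'⟩
      refine ⟨max D D', max B B', ?_⟩
      rintro v (hv | hv)
      · exact (h v hv).imp (fun g => g.mono (le_max_left _ _) (le_max_left _ _))
          (fun g => g.mono (le_max_left _ _) (le_max_left _ _))
      · exact (h' v hv).imp (fun g => g.mono (le_max_right _ _) (le_max_right _ _))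
          (fun g => g.mono (le_max_right _ _) (le_max_right _ _)))
    (by
      intro v hv
      have hv0 : v ≠ 0 := by
        rintro rfl
        simp at hv
      rcases tame hR hmeta hv0 with h | h
      · obtain ⟨D, B, h⟩ := h.good
        exact ⟨_, mem_nhdsWithin_of_mem_nhds h, D, B, fun v hv => Or.inl hv⟩
      · obtain ⟨D, B, h⟩ := h.good
        have h2 : ∀ᶠ v' in nhds v, Good R D B (-v') :=
          (continuous_neg.tendsto v).eventually h
        exact ⟨_, mem_nhdsWithin_of_mem_nhds h2, D, B, fun v hv => Or.inr hv⟩)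
  obtain ⟨D, B, h⟩ := this
  exact ⟨D, B, fun v hv => h v hv⟩

end compactness


set_option linter.unusedSectionVars false

section canon
variable {X : Type}

/-- relation between letters in canonical words -/
def Lrel (f : X → ℤ) (a b : X × Bool) : Prop := f b.1 ≤ f a.1 ∧ (b.1 = a.1 → a.2 = b.2)

/-- canonical words -/
def Canon (f : X → ℤ) (w : List (X × Bool)) : Prop := w.Pairwise (Lrel f)

/-- commutation bound -/
def EB (R : Set (FreeGroup X)) (t : List (X × Bool)) (b : ℕ) : Prop :=
  ∀ e d : EI X, AEq R ((cm e)⁻¹ * act t (cm d) * cm e) (act t (cm d)) b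

theorem EB.mono {R : Set (FreeGroup X)} {t : List (X × Bool)} {b b' : ℕ} (h : EB R t b)
    (hb : b ≤ b') : EB R t b' := fun e d => (h e d).mono hb

theorem insert_lemma {R : Set (FreeGroup X)} {f : X → ℤ} (hf : Function.Injective f) (b : ℕ)
    (l : X × Bool) (w : List (X × Bool)) (hw : Canon f w)
    (H : ∀ a t, (a :: t) <:+ w → EB R t (b * 2 ^ t.length)) :
    ∃ w', Canon f w' ∧ ab w' = ab (l :: w) ∧ w'.length ≤ w.length + 1 ∧
      (∀ x ∈ w', x = l ∨ x ∈ w) ∧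
      ∀ d, AEq R (act (l :: w) (cm d)) (act w' (cm d)) (b * 2 ^ w.length) := by
  induction w with
  | nil =>
    refine ⟨[l], by simp [Canon], rfl, by simp, by simp, fun d => AEq.refl _ _⟩
  | cons a w ih =>
    unfold Canon at hw
    rw [List.pairwise_cons] at hw
    obtain ⟨ha, hw⟩ := hw
    by_cases h1 : a.1 = l.1
    · by_cases h2 : a.2 = l.2
      · have hal : a = l := Prod.ext h1 h2
        subst hal
        refine ⟨a :: a :: w, ?_, rfl, by simp, by simp, fun d => AEq.refl _ _⟩
        unfold Canon
        rw [List.pairwise_cons, List.pairwise_cons]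
        refine ⟨?_, ha, hw⟩
        intro x hx
        rcases List.mem_cons.1 hx with rfl | hx
        · exact ⟨le_rfl, fun _ => rfl⟩
        · exact ha x hx
      · have hal : l = linv a := by
          refine Prod.ext h1.symm ?_
          simp only [linv]
          cases h3 : a.2 <;> cases h4 : l.2 <;> simp_all
        subst hal
        refine ⟨w, hw, ?_, by simp; omega, fun x hx => by simp [hx], fun d => AEq.of_eq ?_ _⟩
        · rw [ab_cons, ab_cons, sg_linv]; abel
        · simp only [act, ltr_linv]; group
    · have hfne : f a.1 ≠ f l.1 := fun h => h1 (hf h)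
      by_cases h2 : f a.1 < f l.1
      · refine ⟨l :: a :: w, ?_, rfl, by simp, by simp, fun d => AEq.refl _ _⟩
        unfold Canon
        rw [List.pairwise_cons, List.pairwise_cons]
        refine ⟨?_, ha, hw⟩
        intro x hx
        have hfx : f x.1 ≤ f a.1 := by
          rcases List.mem_cons.1 hx with rfl | hx
          · exact le_rfl
          · exact (ha x hx).1
        refine ⟨by linarith, fun h => ?_⟩
        rw [h] at hfx; omega
      · have h3 : f l.1 < f a.1 := by omega
        obtain ⟨w', c1, c2, c3, c4, c5⟩ := ih hw (fun a' t ht => H a' t (ht.trans (List.suffix_cons _ _)))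
        refine ⟨a :: w', ?_, ?_, by simpa using c3, ?_, ?_⟩
        · unfold Canon
          rw [List.pairwise_cons]
          refine ⟨?_, c1⟩
          intro x hx
          rcases c4 x hx with rfl | hx
          · exact ⟨h3.le, fun h => by rw [h] at h3; omega⟩
          · exact ha x hx
        · rw [ab_cons, c2, ab_cons, ab_cons, ab_cons]; abel
        · intro x hx
          rcases List.mem_cons.1 hx with rfl | hx
          · simp
          · rcases c4 x hx with h | h <;> simp [h]
        · intro d
          have e1 := H a w (List.suffix_refl _) (a, l) d
          have e2 := e1.conj (ltr l * ltr a)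
          have e3 : AEq R (act (l :: a :: w) (cm d)) (act (a :: l :: w) (cm d)) (b * 2 ^ w.length) := by
            convert e2 using 1
            · simp only [act, cm]; group
            · simp only [act]; group
          have e4 := (c5 d).conj (ltr a)
          refine (e3.trans e4).mono ?_
          simp [pow_succ]; ring_nf; omega

/-- inner product -/
def ip [Fintype X] (a b : X → ℤ) : ℤ := ∑ x, a x * b x

theorem sg_ne {l : X × Bool} {x : X} (h : l.1 ≠ x) : sg l x = 0 := by
  classical
  simp [sg, Ne.symm h]

section ip
variable [Fintype X]
theorem ip_add (a b c : X → ℤ) : ip a (b + c) = ip a b + ip a c := by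
  simp [ip, mul_add, Finset.sum_add_distrib]
theorem ip_comm (a b : X → ℤ) : ip a b = ip b a := by
  simp [ip, mul_comm]
theorem ip_zero (a : X → ℤ) : ip a 0 = 0 := by simp [ip]
theorem ip_neg (a b : X → ℤ) : ip a (-b) = - ip a b := by simp [ip]
theorem ip_self_nonneg (a : X → ℤ) : 0 ≤ ip a a :=
  Finset.sum_nonneg fun _ _ => mul_self_nonneg _

theorem ip_sg (l : X × Bool) (a : X → ℤ) : ip (sg l) a = (if l.2 then 1 else -1) * a l.1 := by
  unfold ip sg
  rw [Finset.sum_eq_single l.1]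
  · simp
  · intro y _ hy; simp [hy]
  · simp

theorem ip_sg_self (l : X × Bool) : ip (sg l) (sg l) = 1 := by
  rw [ip_sg]; simp only [sg, Pi.single_eq_same]; split_ifs <;> simp

theorem ip_rel {f : X → ℤ} {l m : X × Bool} (h : Lrel f l m) : 0 ≤ ip (sg l) (sg m) := by
  rw [ip_sg]
  by_cases hh : m.1 = l.1
  · have := h.2 hh
    simp only [sg, this, hh, Pi.single_eq_same]; split_ifs <;> simp
  · simp [sg_ne hh]

theorem ip_rel_list {f : X → ℤ} {l : X × Bool} {t : List (X × Bool)} (h : ∀ m ∈ t, Lrel f l m) :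
    0 ≤ ip (sg l) (ab t) := by
  induction t with
  | nil => simp [ab_nil, ip_zero]
  | cons m t ih =>
    rw [ab_cons, ip_add]
    exact add_nonneg (ip_rel (h m (by simp))) (ih fun x hx => h x (by simp [hx]))

theorem ip_canon {f : X → ℤ} {p t : List (X × Bool)} (h : Canon f (p ++ t)) :
    0 ≤ ip (ab p) (ab t) := by
  induction p with
  | nil => rw [ab_nil, ip_comm, ip_zero]
  | cons l p ih =>
    unfold Canon at h
    rw [List.cons_append, List.pairwise_cons] at h
    rw [ab_cons, ip_comm, ip_add, ip_comm, ip_comm (ab t)]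
    exact add_nonneg (ip_rel_list fun m hm => h.1 m (by simp [hm])) (ih h.2)

theorem canon_succ {f : X → ℤ} {a : X × Bool} {w : List (X × Bool)} (h : Canon f (a :: w)) :
    ip (ab w) (ab w) + 1 ≤ ip (ab (a :: w)) (ab (a :: w)) := by
  unfold Canon at h
  rw [List.pairwise_cons] at h
  have := ip_rel_list h.1
  have e1 := ip_add (sg a + ab w) (sg a) (ab w)
  have e2 := ip_comm (sg a + ab w) (sg a)
  have e3 := ip_comm (sg a + ab w) (ab w)
  have e4 := ip_add (sg a) (sg a) (ab w)
  have e5 := ip_add (ab w) (sg a) (ab w)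
  have e6 := ip_sg_self a
  have e7 := ip_comm (ab w) (sg a)
  rw [ab_cons]; omega

theorem Canon.tail {f : X → ℤ} {a : X × Bool} {w : List (X × Bool)} (h : Canon f (a :: w)) :
    Canon f w := (List.pairwise_cons.1 h).2

theorem canon_suffix {f : X → ℤ} {t w : List (X × Bool)} (h : Canon f w) (ht : t <:+ w) :
    Canon f t ∧ ip (ab t) (ab t) ≤ ip (ab w) (ab w) := by
  obtain ⟨p, rfl⟩ := ht
  induction p with
  | nil => exact ⟨h, le_rfl⟩
  | cons l p ih =>
    have h2 := ih (by simpa using Canon.tail h)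
    refine ⟨h2.1, h2.2.trans ?_⟩
    have := canon_succ (w := p ++ t) (a := l) h
    rw [List.cons_append]; omega

theorem canon_length {f : X → ℤ} {w : List (X × Bool)} (h : Canon f w) :
    (w.length : ℤ) ≤ ip (ab w) (ab w) := by
  induction w with
  | nil => simp [ab_nil, ip_zero]
  | cons a w ih =>
    have := ih h.tail
    have := canon_succ h
    push_cast [List.length_cons]; omega

theorem mem_of_ab_ne {w : List (X × Bool)} {x : X} (h : ab w x ≠ 0) : ∃ l ∈ w, l.1 = x := by
  induction w with
  | nil => simp [ab_nil] at h
  | cons a w ih =>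
    by_cases h1 : a.1 = x
    · exact ⟨a, by simp, h1⟩
    · rw [ab_cons] at h
      have : ab w x ≠ 0 := by simpa [sg_ne h1] using h
      obtain ⟨l, hl, hx⟩ := ih this
      exact ⟨l, by simp [hl], hx⟩

theorem canon_head {f : X → ℤ} {a : X × Bool} {w : List (X × Bool)} (h : Canon f (a :: w)) :
    0 < (if a.2 then 1 else -1) * (ab (a :: w)) a.1 ∧
      ∀ x, ab (a :: w) x ≠ 0 → f x ≤ f a.1 := by
  have h' := List.pairwise_cons.1 h
  constructor
  · rw [← ip_sg, ab_cons, ip_add, ip_sg_self]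
    have := ip_rel_list h'.1
    omega
  · intro x hx
    obtain ⟨l, hl, rfl⟩ := mem_of_ab_ne hx
    rcases List.mem_cons.1 hl with rfl | hl
    · exact le_rfl
    · exact (h'.1 l hl).1

theorem canon_unique {f : X → ℤ} (hf : Function.Injective f) {w w' : List (X × Bool)}
    (h : Canon f w) (h' : Canon f w') (hab : ab w = ab w') : w = w' := by
  induction w generalizing w' with
  | nil =>
    have := canon_length h'
    rw [← hab, ab_nil, ip_zero] at this
    symm; apply List.eq_nil_of_length_eq_zero; omega
  | cons a w ih =>
    cases w' with
    | nil =>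
      have := canon_length h
      rw [hab, ab_nil, ip_zero] at this
      simp at this; omega
    | cons b w' =>
      obtain ⟨h1, h2⟩ := canon_head h
      obtain ⟨h1', h2'⟩ := canon_head h'
      have e1 : f a.1 ≤ f b.1 := h2' _ (by rw [← hab]; intro h0; rw [h0] at h1; simp at h1)
      have e2 : f b.1 ≤ f a.1 := h2 _ (by rw [hab]; intro h0; rw [h0] at h1'; simp at h1')
      have e3 : a.1 = b.1 := hf (le_antisymm e1 e2)
      have e4 : a.2 = b.2 := by
        rw [hab, e3] at h1
        cases h3 : a.2 <;> cases h4 : b.2 <;> simp_all <;> omega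
      have e5 : a = b := Prod.ext e3 e4
      subst e5
      rw [ih h.tail h'.tail (by simpa [ab_cons] using hab)]

theorem canonicalize {R : Set (FreeGroup X)} {f : X → ℤ} (hf : Function.Injective f) (b : ℕ)
    (γ : List (X × Bool))
    (H : ∀ l γ', (l :: γ') <:+ γ → ∀ t, Canon f t → ip (ab t) (ab t) ≤ ip (ab γ') (ab γ') →
      t.length ≤ γ'.length → EB R t (b * 2 ^ t.length)) :
    ∃ w', Canon f w' ∧ ab w' = ab γ ∧ w'.length ≤ γ.length ∧
      ∀ d, AEq R (act γ (cm d)) (act w' (cm d)) (b * 2 ^ γ.length) := by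
  induction γ with
  | nil => exact ⟨[], by simp [Canon], rfl, le_rfl, fun d => AEq.refl _ _⟩
  | cons l γ ih =>
    obtain ⟨w, c1, c2, c3, c4⟩ := ih fun a t ht => H a t (ht.trans (List.suffix_cons _ _))
    obtain ⟨w', d1, d2, d3, d4, d5⟩ := insert_lemma (R := R) hf b l w c1 (fun a t ht => by
      have h1 := canon_suffix c1 ht
      have h2 := canon_suffix c1 ((List.suffix_cons a t).trans ht)
      refine H l γ (List.suffix_refl _) t h2.1 (by rw [← c2]; exact h2.2) ?_
      have := ht.length_le
      simp at this; omega)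
    refine ⟨w', d1, by rw [d2, ab_cons, ab_cons, c2], by simp; omega, fun d => ?_⟩
    have e1 := (c4 d).conj (ltr l)
    refine (AEq.trans e1 (d5 d)).mono ?_
    have : 2 ^ w.length ≤ 2 ^ γ.length := Nat.pow_le_pow_right (by norm_num) c3
    have := Nat.mul_le_mul_left b this
    simp only [List.length_cons, pow_succ]
    nlinarith

end ip

/-- inverse list of letters -/
def winv (w : List (X × Bool)) : List (X × Bool) := (w.map linv).reverse

theorem winv_winv (w : List (X × Bool)) : winv (winv w) = w := by
  simp [winv, List.map_reverse]
  conv_rhs => rw [← List.map_id w]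
  congr 1
  funext l; exact linv_linv l

theorem winv_length (w : List (X × Bool)) : (winv w).length = w.length := by simp [winv]

theorem ab_winv (w : List (X × Bool)) : ab (winv w) = - ab w := by
  rw [winv, ab_reverse]
  induction w with
  | nil => simp [ab_nil]
  | cons a w ih => rw [List.map_cons, ab_cons, ih, ab_cons, sg_linv]; abel

theorem canon_winv {f : X → ℤ} {w : List (X × Bool)} (h : Canon f w) : Canon (-f) (winv w) := by
  unfold Canon winv at *
  rw [List.pairwise_reverse, List.pairwise_map]
  refine h.imp ?_
  rintro a b ⟨h1, h2⟩
  refine ⟨by simpa [linv] using h1, fun h => ?_⟩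
  simp only [linv] at h ⊢
  rw [h2 h.symm]

theorem act_winv (w : List (X × Bool)) (d : FreeGroup X) : act (winv w) (act w d) = d := by
  induction w generalizing d with
  | nil => rfl
  | cons a w ih =>
    have : winv (a :: w) = winv w ++ [linv a] := by simp [winv]
    rw [this, act_append]
    simp only [act, ltr_linv]
    conv_rhs => rw [← ih d]
    congr 1; group

theorem EB.winv {R : Set (FreeGroup X)} {t : List (X × Bool)} {b : ℕ} (h : EB R t b) :
    EB R (winv t) b := by
  intro e d
  have h1 := h d e
  have h2 := act_AEq h1 (_root_.winv t)
  rw [act_mul, act_mul, act_winv, act_inv] at h2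
  set T := act (_root_.winv t) (cm d)
  have h3 := (h2.mul_left T).mul_right ((cm e)⁻¹ * T⁻¹)
  have h4 := h3.symm.mul_left (cm e)⁻¹
  have h5 := h4.mul_right (T * cm e)
  convert h5 using 1
  · group
  · group

end canon


set_option linter.unusedSectionVars false

section main
variable {X : Type}

theorem conj_list {R : Set (FreeGroup X)} (e : FreeGroup X) (k : ℕ) (L : List (FreeGroup X))
    (h : ∀ c ∈ L, AEq R (e⁻¹ * c * e) c k) : AEq R (e⁻¹ * L.prod * e) L.prod (L.length * k) := by
  induction L with
  | nil => exact AEq.of_eq (by simp) _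
  | cons c L ih =>
    have h1 := h c (by simp)
    have h2 := ih fun c hc => h c (by simp [hc])
    have h3 := h1.mul h2
    rw [List.prod_cons]
    have h4 : e⁻¹ * (c * L.prod) * e = e⁻¹ * c * e * (e⁻¹ * L.prod * e) := by group
    rw [h4]
    refine h3.mono ?_
    simp [add_mul]; omega

variable [Fintype X]

theorem ip_add_left (a b c : X → ℤ) : ip (a + b) c = ip a c + ip b c := by
  rw [ip_comm, ip_add, ip_comm c, ip_comm c]

theorem ip_sg_ab_le (l : X × Bool) (L : List (X × Bool)) : ip (sg l) (ab L) ≤ L.length := by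
  induction L with
  | nil => simp [ab_nil, ip_zero]
  | cons a L ih =>
    rw [ab_cons, ip_add]
    have : ip (sg l) (sg a) ≤ 1 := by
      rw [ip_sg]
      by_cases h : a.1 = l.1
      · obtain ⟨x, b⟩ := a
        obtain ⟨y, c⟩ := l
        simp only at h; subst h
        cases b <;> cases c <;> simp [sg]
      · rw [sg_ne h]; simp
    push_cast [List.length_cons]; omega

theorem ip_ab_le (L L' : List (X × Bool)) : ip (ab L) (ab L') ≤ L.length * L'.length := by
  induction L with
  | nil => rw [ab_nil, ip_comm, ip_zero]; simp
  | cons a L ih =>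
    rw [ab_cons, ip_add_left]
    have := ip_sg_ab_le a L'
    push_cast [List.length_cons]; nlinarith

theorem ip_ab_le' {L : List (X × Bool)} {D : ℕ} (h : L.length ≤ D) :
    ip (ab L) (ab L) ≤ D ^ 2 := by
  have := ip_ab_le L L
  have h' : (L.length : ℤ) ≤ D := by exact_mod_cast h
  nlinarith

theorem key_ineq {f : X → ℤ} {p t : List (X × Bool)} (hw : Canon f (p ++ t)) (u : X → ℤ) (D : ℕ)
    (hu : ip u u ≤ D ^ 2) (r : ℝ) (hr : r ^ 2 = ip (ab (p ++ t)) (ab (p ++ t)))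
    (hr1 : 4 * (D : ℝ) ^ 2 + D + 1 ≤ r) (hv : (ip (ab (p ++ t)) u : ℝ) ≤ - (r / 2)) :
    (ip (ab t + u) (ab t + u) : ℝ) ≤ (r - 1 / 4) ^ 2 := by
  have h1 := ip_canon hw
  have h2 := ip_self_nonneg (ab p + u)
  rw [ab_append] at hr hv
  simp only [ip_add, ip_add_left] at hr hv h2 ⊢
  rw [ip_comm u (ab t)]
  rw [ip_comm u (ab p)] at h2
  rw [ip_comm (ab t) (ab p)] at hr
  have h1' : (0:ℝ) ≤ ip (ab p) (ab t) := by exact_mod_cast h1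
  have h2' : (0:ℝ) ≤ (ip (ab p) (ab p) + ip (ab p) u + (ip (ab p) u + ip u u) : ℤ) := by
    exact_mod_cast h2
  have hu' : (ip u u : ℝ) ≤ D ^ 2 := by exact_mod_cast hu
  push_cast at *
  nlinarith [sq_nonneg (D : ℝ)]

theorem step_pos {R : Set (FreeGroup X)} {f : X → ℤ} (hf : Function.Injective f) (D B b : ℕ)
    {w : List (X × Bool)} (hw : Canon f w) (r : ℝ) (hr : r ^ 2 = ip (ab w) (ab w))
    (hr1 : 4 * (D : ℝ) ^ 2 + D + 1 ≤ r) (hg : Good R D B (fun x => (ab w x : ℝ) / r))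
    (IH : ∀ t, Canon f t → (ip (ab t) (ab t) : ℝ) ≤ (r - 1 / 4) ^ 2 → EB R t (b * 2 ^ t.length)) :
    EB R w (2 * B + D * (3 * (b * 2 ^ (w.length + D)))) := by
  intro e d
  obtain ⟨P, hP1, hP2, hP3⟩ := hg d
  have hD0 : (0:ℝ) ≤ D := Nat.cast_nonneg D
  have hrpos : 0 < r := by nlinarith [sq_nonneg (D : ℝ)]
  have h1 := act_AEq hP3 w
  have h2 : AEq R ((cm e)⁻¹ * act w (cprod P) * cm e) (act w (cprod P))
      (D * (3 * (b * 2 ^ (w.length + D)))) := by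
    have h3 : act w (cprod P) = (P.map fun t => act (w ++ t.1) (cm t.2)).prod := by
      rw [cprod, act_prod, List.map_map]
      congr 1
      apply List.map_congr_left
      intro t _
      simp [act_append]
    rw [h3]
    refine (conj_list (cm e) (3 * (b * 2 ^ (w.length + D))) _ ?_).mono ?_
    · intro c hc
      obtain ⟨⟨u, i⟩, hu, rfl⟩ := List.mem_map.1 hc
      obtain ⟨hu1, hu2⟩ := hP2 _ hu
      simp only at hu1 hu2 ⊢
      have hq : (ip (ab w) (ab u) : ℝ) ≤ - (r / 2) := by
        have : dt (fun x => (ab w x : ℝ) / r) (ab u) = (ip (ab w) (ab u) : ℝ) / r := by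
          simp only [dt, ip]
          push_cast
          rw [Finset.sum_div]
          refine Finset.sum_congr rfl fun x _ => by ring
        rw [this, div_lt_iff₀ hrpos] at hu2
        linarith
      have hK : ∀ p t, p ++ t = w → (ip (ab (t ++ u)) (ab (t ++ u)) : ℝ) ≤ (r - 1 / 4) ^ 2 := by
        rintro p t rfl
        rw [ab_append]
        exact key_ineq hw (ab u) D (ip_ab_le' hu1) r hr hr1 hq
      obtain ⟨w', c1, c2, c3, c4⟩ := canonicalize (R := R) hf b (w ++ u) (by
        intro l γ' hγ t ht hip _
        refine IH t ht ?_
        have hip' : (ip (ab t) (ab t) : ℝ) ≤ ip (ab γ') (ab γ') := by exact_mod_cast hip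
        refine hip'.trans ?_
        have hs := (List.suffix_cons l γ').trans hγ
        by_cases hlen : γ'.length ≤ u.length
        · have h5 := ip_ab_le' (hlen.trans hu1)
          have h5' : (ip (ab γ') (ab γ') : ℝ) ≤ (D : ℝ) ^ 2 := by exact_mod_cast h5
          refine h5'.trans ?_
          apply pow_le_pow_left₀ hD0
          nlinarith [sq_nonneg (D : ℝ)]
        · obtain ⟨p, hp⟩ := hs
          rcases List.append_eq_append_iff.1 hp with ⟨s, hs1, hs2⟩ | ⟨s, hs1, hs2⟩
          · rw [hs2]; exact hK p s hs1.symm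
          · rw [hs2] at hlen; simp at hlen)
      have hlen : w'.length ≤ w.length + D := by simp at c3; omega
      have hpw : b * 2 ^ w'.length ≤ b * 2 ^ (w.length + D) :=
        Nat.mul_le_mul_left _ (Nat.pow_le_pow_right (by norm_num) hlen)
      have hpw2 : b * 2 ^ (w ++ u).length ≤ b * 2 ^ (w.length + D) :=
        Nat.mul_le_mul_left _ (Nat.pow_le_pow_right (by norm_num) (by simp; omega))
      have h6 := (IH w' c1 (by rw [c2]; exact hK [] w rfl)).mono hpw e i
      have h7 := (c4 i).mono hpw2
      have h8 := (h7.conj (cm e)).trans (h6.trans h7.symm)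
      exact h8.mono (by omega)
    · rw [List.length_map]; exact Nat.mul_le_mul_right _ hP1
  exact ((h1.conj (cm e)).trans (h2.trans h1.symm)).mono (by omega)

theorem meta_mem {R : Set (FreeGroup X)}
    (hmeta : IsMetabelian (FreeGroup X ⧸ Subgroup.normalClosure R)) {a b : FreeGroup X}
    (ha : a ∈ commutator (FreeGroup X)) (hb : b ∈ commutator (FreeGroup X)) :
    a⁻¹ * b * a * b⁻¹ ∈ Subgroup.normalClosure R := by
  have hm : ∀ c ∈ commutator (FreeGroup X), QuotientGroup.mk' (Subgroup.normalClosure R) c ∈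
      commutator (FreeGroup X ⧸ Subgroup.normalClosure R) := by
    intro c hc
    have := Subgroup.mem_map_of_mem (QuotientGroup.mk' (Subgroup.normalClosure R)) hc
    rw [commutator_def, Subgroup.map_commutator] at this
    exact Subgroup.commutator_mono le_top le_top this
  have := hmeta _ _ (hm a ha) (hm b hb)
  rw [← QuotientGroup.eq_one_iff, ← QuotientGroup.mk'_apply, map_mul, map_mul, map_mul, map_inv,
    map_inv, mul_inv_eq_one, mul_assoc, inv_mul_eq_iff_eq_mul]
  exact this.symm

theorem act_mem_comm (L : List (X × Bool)) {d : FreeGroup X} (hd : d ∈ commutator (FreeGroup X)) :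
    act L d ∈ commutator (FreeGroup X) := by
  rw [act_eq]
  have := (inferInstance : (commutator (FreeGroup X)).Normal).conj_mem d hd
    (FreeGroup.mk L.reverse)⁻¹
  simpa using this

theorem base_case {R : Set (FreeGroup X)}
    (hmeta : IsMetabelian (FreeGroup X ⧸ Subgroup.normalClosure R)) (M : ℕ) :
    ∃ B0, 1 ≤ B0 ∧ ∀ w : List (X × Bool), w.length ≤ M → EB R w B0 := by
  classical
  have hfin : {w : List (X × Bool) | w.length ≤ M}.Finite := List.finite_length_le (X × Bool) M
  have h : ∀ w : List (X × Bool), ∀ e d : EI X, ∃ N,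
      AEq R ((cm e)⁻¹ * act w (cm d) * cm e) (act w (cm d)) N := by
    intro w e d
    exact exists_areaLe (meta_mem hmeta (cm_mem e) (act_mem_comm w (cm_mem d)))
  choose N hN using h
  obtain ⟨B0, hB⟩ := (((hfin.prod (Set.finite_univ (α := EI X × EI X))).image
    (fun t => N t.1 t.2.1 t.2.2))).bddAbove
  refine ⟨B0 + 1, by omega, fun w hw e d => (hN w e d).mono ?_⟩
  have := hB (Set.mem_image_of_mem (fun t => N t.1 t.2.1 t.2.2)
    (show (w, (e, d)) ∈ {w : List (X × Bool) | w.length ≤ M} ×ˢ Set.univ from ⟨hw, Set.mem_univ _⟩))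
  exact le_trans this (Nat.le_succ _)

theorem main_EB {R : Set (FreeGroup X)} (hR : R.Finite)
    (hmeta : IsMetabelian (FreeGroup X ⧸ Subgroup.normalClosure R)) :
    ∃ ρ Λ B0 : ℕ, 1 ≤ Λ ∧ 1 ≤ B0 ∧ ∀ n : ℕ, ∀ f : X → ℤ, Function.Injective f →
      ∀ w, Canon f w → (ip (ab w) (ab w) : ℝ) ≤ ((ρ : ℝ) + n / 4) ^ 2 →
      EB R w (B0 * Λ ^ n * 2 ^ w.length) := by
  obtain ⟨D, B, hDB⟩ := tame_unif_sphere hR hmeta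
  obtain ⟨B0, hB0, hB⟩ := base_case hmeta ((4 * D ^ 2 + D + 1) ^ 2)
  refine ⟨4 * D ^ 2 + D + 1, 2 * B + 3 * D * 2 ^ D + 1, B0, by omega, hB0, ?_⟩
  set Λ := 2 * B + 3 * D * 2 ^ D + 1 with hΛ
  intro n
  induction n with
  | zero =>
    intro f hf w hw hip
    have h1 := canon_length hw
    have h2 : (w.length : ℤ) ≤ ((4 * D ^ 2 + D + 1 : ℕ) : ℤ) ^ 2 := by
      refine h1.trans ?_
      have : (ip (ab w) (ab w) : ℝ) ≤ ((4 * D ^ 2 + D + 1 : ℕ) : ℝ) ^ 2 := by simpa using hip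
      exact_mod_cast this
    refine (hB w (by exact_mod_cast h2)).mono ?_
    have := Nat.one_le_two_pow (n := w.length)
    simp; nlinarith
  | succ n ih =>
    intro f hf w hw hip
    set s : ℝ := (((4 * D ^ 2 + D + 1 : ℕ)) : ℝ) + n / 4 with hs
    have hs1 : (4 * (D : ℝ) ^ 2 + D + 1) ≤ s := by
      have : (0:ℝ) ≤ n / 4 := by positivity
      rw [hs]; push_cast; linarith
    have hspos : 0 < s := lt_of_lt_of_le (by positivity) hs1
    have hBΛ : B0 * Λ ^ n * 2 ^ w.length ≤ B0 * Λ ^ (n + 1) * 2 ^ w.length := by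
      apply Nat.mul_le_mul_right
      apply Nat.mul_le_mul_left
      exact Nat.pow_le_pow_right (by omega) (by omega)
    by_cases hsmall : (ip (ab w) (ab w) : ℝ) ≤ s ^ 2
    · exact (ih f hf w hw hsmall).mono hBΛ
    push Not at hsmall
    set r : ℝ := Real.sqrt (ip (ab w) (ab w)) with hrdef
    have hr : r ^ 2 = ip (ab w) (ab w) := Real.sq_sqrt (by exact_mod_cast ip_self_nonneg _)
    have hr0 : 0 ≤ r := Real.sqrt_nonneg _
    have hsr : s < r := by
      rw [← hr] at hsmall
      exact lt_of_pow_lt_pow_left₀ 2 hr0 hsmall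
    have hrs : r ≤ s + 1 / 4 := by
      rw [← hr] at hip
      have : (r:ℝ) ^ 2 ≤ (s + 1/4) ^ 2 := by
        refine hip.trans (le_of_eq ?_)
        rw [hs]; push_cast; ring
      exact le_of_sq_le_sq this (by linarith)
    have hle : (r - 1 / 4) ^ 2 ≤ s ^ 2 := by
      apply pow_le_pow_left₀
      · nlinarith [sq_nonneg (D : ℝ), Nat.cast_nonneg (α := ℝ) D]
      · linarith
    have hfinal : 2 * B + D * (3 * (B0 * Λ ^ n * 2 ^ (w.length + D))) ≤
        B0 * Λ ^ (n + 1) * 2 ^ w.length := by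
      have e1 : 1 ≤ B0 * Λ ^ n * 2 ^ w.length :=
        Nat.one_le_iff_ne_zero.2 (by
          have : Λ ≠ 0 := by omega
          have : B0 ≠ 0 := by omega
          positivity)
      set Z := B0 * Λ ^ n * 2 ^ w.length
      have e2 : B0 * Λ ^ (n + 1) * 2 ^ w.length = Z * Λ := by simp only [Z]; ring
      have e3 : B0 * Λ ^ n * 2 ^ (w.length + D) = Z * 2 ^ D := by simp only [Z]; ring
      rw [e2, e3, hΛ]
      nlinarith [Nat.mul_le_mul_left (2 * B) e1]
    have hnorm : ∑ x, ((ab w x : ℝ) / r) ^ 2 = 1 := by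
      have : ∑ x, ((ab w x : ℝ) / r) ^ 2 = (ip (ab w) (ab w) : ℝ) / r ^ 2 := by
        simp only [ip]
        push_cast
        rw [Finset.sum_div]
        refine Finset.sum_congr rfl fun x _ => by ring
      rw [this, ← hr, div_self]
      have : 0 < r := hspos.trans hsr
      positivity
    rcases hDB _ hnorm with hg | hg
    · exact (step_pos hf D B (B0 * Λ ^ n) hw r hr (by linarith) hg (fun t ht hip =>
        ih f hf t ht (hip.trans hle))).mono hfinal
    · have hf' : Function.Injective (-f) := fun a b hab => hf (by simpa using hab)
      have hw' := canon_winv hw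
      have := (step_pos hf' D B (B0 * Λ ^ n) hw' r (by
        rw [ab_winv, ip_neg, ip_comm, ip_neg]; simpa using hr) (by linarith) (by
          convert hg using 2 with x
          rw [ab_winv]; simp [neg_div]) (fun t ht hip =>
        ih (-f) hf' t ht (hip.trans hle))).winv
      rw [winv_winv, winv_length] at this
      exact this.mono hfinal

theorem main_K {R : Set (FreeGroup X)} (hR : R.Finite)
    (hmeta : IsMetabelian (FreeGroup X ⧸ Subgroup.normalClosure R)) :
    ∃ K : ℕ, 1 ≤ K ∧ ∀ m : ℕ, (∀ γ : List (X × Bool), γ.length ≤ m → EB R γ (K ^ (m + 1))) ∧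
      ∀ γ γ' : List (X × Bool), γ.length ≤ m → γ'.length ≤ m → ab γ = ab γ' → ∀ d,
        AEq R (act γ (cm d)) (act γ' (cm d)) (K ^ (m + 1)) := by
  obtain ⟨ρ, Λ, B0, hΛ, hB0, h⟩ := main_EB hR hmeta
  obtain ⟨f, hf⟩ : ∃ f : X → ℤ, Function.Injective f := by
    refine ⟨fun x => ((Fintype.equivFin X x : ℕ) : ℤ), fun a b hab => ?_⟩
    simp only [Nat.cast_inj] at hab
    exact (Fintype.equivFin X).injective (Fin.ext hab)
  have hE : ∀ m : ℕ, ∀ t, Canon f t → ip (ab t) (ab t) ≤ (m:ℤ) ^ 2 →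
      EB R t (B0 * Λ ^ (4 * m) * 2 ^ t.length) := by
    intro m t ht hip
    refine h (4 * m) f hf t ht ?_
    have : (ip (ab t) (ab t) : ℝ) ≤ (m:ℝ) ^ 2 := by exact_mod_cast hip
    refine this.trans (pow_le_pow_left₀ (by positivity) ?_ 2)
    push_cast
    have : (0:ℝ) ≤ ρ := by positivity
    linarith
  have hC : ∀ m : ℕ, ∀ γ : List (X × Bool), γ.length ≤ m → ∃ w', Canon f w' ∧ ab w' = ab γ ∧
      w'.length ≤ m ∧ ∀ d, AEq R (act γ (cm d)) (act w' (cm d)) (B0 * Λ ^ (4 * m) * 2 ^ m) := by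
    intro m γ hγ
    obtain ⟨w', c1, c2, c3, c4⟩ := canonicalize (R := R) hf (B0 * Λ ^ (4 * m)) γ (by
      intro l γ' hl t ht hip _
      refine hE m t ht (hip.trans ?_)
      have := hl.length_le
      simp at this
      exact ip_ab_le' (by omega))
    exact ⟨w', c1, c2, c3.trans hγ, fun d => (c4 d).mono
      (Nat.mul_le_mul_left _ (Nat.pow_le_pow_right (by norm_num) hγ))⟩
  refine ⟨3 * (B0 * Λ ^ 4 * 2), by
    have : 1 ≤ Λ ^ 4 := Nat.one_le_pow _ _ hΛ
    nlinarith, fun m => ?_⟩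
  have hbd : 3 * (B0 * Λ ^ (4 * m) * 2 ^ m) ≤ (3 * (B0 * Λ ^ 4 * 2)) ^ (m + 1) := by
    rw [mul_pow, mul_pow, mul_pow, ← pow_mul]
    gcongr
    · exact Nat.le_self_pow (by omega) 3
    · exact Nat.le_self_pow (by omega) B0
    · omega
    · norm_num
    · omega
  refine ⟨fun γ hγ e d => ?_, fun γ γ' hγ hγ' hab d => ?_⟩
  · obtain ⟨w', c1, c2, c3, c4⟩ := hC m γ hγ
    have h1 := hE m w' c1 (by rw [c2]; exact ip_ab_le' hγ) e d
    have h1' := h1.mono (Nat.mul_le_mul_left (B0 * Λ ^ (4 * m))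
      (Nat.pow_le_pow_right (by norm_num : 0 < 2) c3))
    exact (((c4 d).conj (cm e)).trans (h1'.trans (c4 d).symm)).mono (by omega)
  · obtain ⟨w, c1, c2, c3, c4⟩ := hC m γ hγ
    obtain ⟨w', c1', c2', c3', c4'⟩ := hC m γ' hγ'
    have : w = w' := canon_unique hf c1 c1' (by rw [c2, c2', hab])
    subst this
    exact ((c4 d).trans (c4' d).symm).mono (by omega)

end main


section filling

theorem exists_finite_basis {α : Type*} {r : α → α → Prop} (h : WellQuasiOrdered r) (T : Set α) :
    ∃ F : Finset α, (∀ x ∈ F, x ∈ T) ∧ ∀ t ∈ T, ∃ s ∈ F, r s t := by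
  by_contra! hcon
  obtain ⟨f, hf1, hf2⟩ := exists_seq_of_forall_finset_exists (fun x => x ∈ T)
    (fun x y => ¬ r x y) (fun s hs => hcon s hs)
  obtain ⟨m, n, hmn, hr⟩ := h f
  exact hf2 m n hmn hr

variable {J M : Type*}

/-- weighted size -/
noncomputable def Vw (key : J → ℕ) (κ : ℕ) (x : J →₀ ℤ) : ℕ := x.sum fun j c => c.natAbs * key j ^ κ

theorem Vw_eq (key : J → ℕ) (κ : ℕ) (x : J →₀ ℤ) {s : Finset J} (hs : x.support ⊆ s) :
    Vw key κ x = ∑ j ∈ s, (x j).natAbs * key j ^ κ := by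
  unfold Vw
  rw [Finsupp.sum_of_support_subset x hs]
  simp

theorem key_dom [DecidableEq J] (key : J → ℕ) (g : J →₀ ℤ) (j : J) (hpos : 0 < key j)
    (hl : ∀ i ∈ g.support, i ≠ j → key i < key j) :
    ∀ᶠ κ in Filter.atTop, ∑ i ∈ g.support.erase j, (g i).natAbs * key i ^ κ < key j ^ κ := by
  have h1 : ∀ i ∈ g.support.erase j, Filter.Tendsto
      (fun κ : ℕ => ((g i).natAbs : ℝ) * ((key i : ℝ) / key j) ^ κ) Filter.atTop
      (nhds (((g i).natAbs : ℝ) * 0)) := by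
    intro i hi
    rw [Finset.mem_erase] at hi
    refine Filter.Tendsto.const_mul _ (tendsto_pow_atTop_nhds_zero_of_lt_one (by positivity) ?_)
    rw [div_lt_one (by exact_mod_cast hpos)]
    exact_mod_cast hl i hi.2 hi.1
  have h2 := tendsto_finsetSum (g.support.erase j) h1
  simp only [mul_zero, Finset.sum_const_zero] at h2
  filter_upwards [h2.eventually_lt_const (show (0:ℝ) < 1 by norm_num)] with κ hκ
  have h3 : ∑ i ∈ g.support.erase j, ((g i).natAbs : ℝ) * ((key i : ℝ) / key j) ^ κ =
      (∑ i ∈ g.support.erase j, ((g i).natAbs : ℝ) * (key i : ℝ) ^ κ) / (key j : ℝ) ^ κ := by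
    rw [Finset.sum_div]
    refine Finset.sum_congr rfl fun i _ => by rw [div_pow]; ring
  rw [h3, div_lt_one (by have : (0:ℝ) < key j := by exact_mod_cast hpos
                         positivity)] at hκ
  exact_mod_cast hκ

theorem filling (sh : M → J → J) (key : J → ℕ) (kM : M → ℕ) (hinj : Function.Injective key)
    (hpos : ∀ j, 0 < key j) (hkey : ∀ b j, key (sh b j) = kM b * key j)
    (hw : WellQuasiOrdered (fun p q : J × ℕ => (∃ b, sh b p.1 = q.1) ∧ p.2 ≤ q.2))
    (I : AddSubgroup (J →₀ ℤ)) (hI : ∀ b, ∀ x ∈ I, x.mapDomain (sh b) ∈ I) :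
    ∃ G : Finset (J →₀ ℤ), (∀ g ∈ G, g ∈ I) ∧ ∃ κ : ℕ, ∀ x ∈ I, ∀ Kb : ℕ,
      (∀ j ∈ x.support, key j ≤ Kb) → ∃ L : List (Bool × M × (J →₀ ℤ)),
      L.length ≤ Vw key κ x ∧ (∀ t ∈ L, t.2.2 ∈ G ∧ kM t.2.1 ≤ Kb) ∧
      x = (L.map fun t => (if t.1 then (1:ℤ) else -1) • t.2.2.mapDomain (sh t.2.1)).sum := by
  classical
  have hkM : ∀ b (j : J), 0 < kM b := by
    intro b j
    have := hpos (sh b j)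
    rw [hkey] at this
    exact Nat.pos_of_mul_pos_right this
  have hsinj : ∀ b, Function.Injective (sh b) := by
    intro b i j hij
    have h1 := congrArg key hij
    rw [hkey, hkey] at h1
    exact hinj (Nat.eq_of_mul_eq_mul_left (hkM b i) h1)
  let IsLead : (J →₀ ℤ) → J → Prop := fun g j => j ∈ g.support ∧ ∀ i ∈ g.support, key i ≤ key j
  obtain ⟨F, hF1, hF2⟩ := exists_finite_basis hw
    {p : J × ℕ | ∃ g ∈ I, IsLead g p.1 ∧ (g p.1).natAbs = p.2}
  choose! γ hγI hγL hγc using hF1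
  have hlt : ∀ p ∈ F, ∀ i ∈ (γ p).support, i ≠ p.1 → key i < key p.1 := by
    intro p hp i hi hne
    exact lt_of_le_of_ne ((hγL p hp).2 i hi) fun h => hne (hinj h)
  have hev : ∀ᶠ κ in Filter.atTop, ∀ p ∈ F,
      ∑ i ∈ (γ p).support.erase p.1, (γ p i).natAbs * key i ^ κ < key p.1 ^ κ := by
    rw [Filter.eventually_all_finset]
    intro p hp
    exact key_dom key (γ p) p.1 (hpos _) (hlt p hp)
  obtain ⟨κ, hκ⟩ := hev.exists
  refine ⟨F.image γ, ?_, κ, ?_⟩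
  · intro g hg
    obtain ⟨p, hp, rfl⟩ := Finset.mem_image.1 hg
    exact hγI p hp
  intro x
  induction hV : Vw key κ x using Nat.strong_induction_on generalizing x with
  | _ V ih =>
  intro hx Kb hKb
  subst hV
  by_cases hx0 : x = 0
  · exact ⟨[], by simp, by simp, by simp [hx0]⟩
  obtain ⟨j, hj, hjmax⟩ := Finset.exists_max_image x.support key
    (Finsupp.support_nonempty_iff.2 hx0)
  obtain ⟨p, hp, ⟨b, hb⟩, hle⟩ := hF2 (j, (x j).natAbs) ⟨x, hx, ⟨hj, hjmax⟩, rfl⟩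
  simp only at hb hle
  set g := γ p with hg
  have hgp : 0 < (g p.1).natAbs := Int.natAbs_pos.2 (Finsupp.mem_support_iff.1 (hγL p hp).1)
  rw [← hγc p hp, ← hg] at hle
  set y := g.mapDomain (sh b) with hy
  have hyI : y ∈ I := hI b g (hγI p hp)
  have hyval : ∀ i, y (sh b i) = g i := fun i => Finsupp.mapDomain_apply (hsinj b) g i
  have hyj : y j = g p.1 := by rw [← hb]; exact hyval _
  have hysupp : y.support = g.support.image (sh b) :=
    Finsupp.mapDomain_support_of_injective (hsinj b) g
  have hyothers : ∑ i ∈ y.support.erase j, (y i).natAbs * key i ^ κ < key j ^ κ := by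
    have e1 : y.support.erase j = (g.support.erase p.1).image (sh b) := by
      rw [hysupp, ← hb, Finset.image_erase (hsinj b)]
    rw [e1, Finset.sum_image (fun _ _ _ _ h => hsinj b h)]
    have e2 : ∑ i ∈ g.support.erase p.1, (y (sh b i)).natAbs * key (sh b i) ^ κ =
        kM b ^ κ * ∑ i ∈ g.support.erase p.1, (g i).natAbs * key i ^ κ := by
      rw [Finset.mul_sum]
      refine Finset.sum_congr rfl fun i _ => ?_
      rw [hyval, hkey, mul_pow]; ring
    rw [e2, ← hb, hkey, mul_pow]
    exact Nat.mul_lt_mul_of_pos_left (hκ p hp) (pow_pos (hkM b p.1) _)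
  have hykey : ∀ i ∈ y.support, key i ≤ key j := by
    intro i hi
    rw [hysupp, Finset.mem_image] at hi
    obtain ⟨k, hk, rfl⟩ := hi
    rw [hkey, ← hb, hkey]
    exact Nat.mul_le_mul_left _ ((hγL p hp).2 k hk)
  obtain ⟨s, hs⟩ : ∃ s : Bool, (x j - (if s then (1:ℤ) else -1) * y j).natAbs + 1 ≤
      (x j).natAbs := by
    rw [hyj]
    by_cases hsign : (0 ≤ x j ∧ 0 ≤ g p.1) ∨ (x j ≤ 0 ∧ g p.1 ≤ 0)
    · exact ⟨true, by simp only [if_true]; omega⟩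
    · exact ⟨false, by simp only [Bool.false_eq_true, if_false]; omega⟩
  set ε : ℤ := if s then 1 else -1 with hε
  have hεabs : ε.natAbs = 1 := by rw [hε]; split_ifs <;> rfl
  set x' := x - ε • y with hx'
  have hVlt : Vw key κ x' < Vw key κ x := by
    set S := x.support ∪ y.support with hS
    have hjS : j ∈ S := Finset.mem_union_left _ hj
    have hs1 : x'.support ⊆ S := by
      intro i hi
      rw [hS, Finset.mem_union, Finsupp.mem_support_iff, Finsupp.mem_support_iff]
      by_contra! h
      rw [Finsupp.mem_support_iff] at hi
      apply hi; simp [hx', h.1, h.2]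
    rw [Vw_eq key κ x' hs1, Vw_eq key κ x (s := S) Finset.subset_union_left,
      ← Finset.add_sum_erase S _ hjS, ← Finset.add_sum_erase S (fun i => (x i).natAbs * key i ^ κ) hjS]
    have h1 : ∑ i ∈ S.erase j, (x' i).natAbs * key i ^ κ ≤
        ∑ i ∈ S.erase j, (x i).natAbs * key i ^ κ + ∑ i ∈ S.erase j, (y i).natAbs * key i ^ κ := by
      rw [← Finset.sum_add_distrib]
      refine Finset.sum_le_sum fun i _ => ?_
      rw [← add_mul]
      apply Nat.mul_le_mul_right
      have : (x' i) = x i - ε * y i := by simp [hx']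
      rw [this]
      refine (Int.natAbs_sub_le _ _).trans ?_
      rw [Int.natAbs_mul, hεabs, one_mul]
    have h2 : ∑ i ∈ S.erase j, (y i).natAbs * key i ^ κ =
        ∑ i ∈ y.support.erase j, (y i).natAbs * key i ^ κ := by
      symm
      apply Finset.sum_subset (Finset.erase_subset_erase _ Finset.subset_union_right)
      intro i hi hni
      have : i ∉ y.support := fun h => hni (Finset.mem_erase.2 ⟨(Finset.mem_erase.1 hi).1, h⟩)
      simp [Finsupp.notMem_support_iff.1 this]
    have h3 : (x' j).natAbs + 1 ≤ (x j).natAbs := by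
      have : (x' j) = x j - ε * y j := by simp [hx']
      rw [this]; exact hs
    have h4 := Nat.mul_le_mul_right (key j ^ κ) h3
    rw [add_mul] at h4
    omega
  have hx'I : x' ∈ I := I.sub_mem hx (I.zsmul_mem hyI ε)
  have hx'K : ∀ i ∈ x'.support, key i ≤ Kb := by
    intro i hi
    have : i ∈ x.support ∨ i ∈ y.support := by
      rw [Finsupp.mem_support_iff, Finsupp.mem_support_iff]
      by_contra! h
      rw [Finsupp.mem_support_iff] at hi
      apply hi; simp [hx', h.1, h.2]
    rcases this with h | h
    · exact hKb i h
    · exact (hykey i h).trans (hKb j hj)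
  obtain ⟨L, hL1, hL2, hL3⟩ := ih _ hVlt x' rfl hx'I Kb hx'K
  refine ⟨(s, b, g) :: L, by simp; omega, ?_, ?_⟩
  · intro t ht
    rcases List.mem_cons.1 ht with rfl | ht
    · refine ⟨Finset.mem_image_of_mem _ hp, ?_⟩
      refine le_trans ?_ (hKb j hj)
      rw [← hb, hkey]
      exact Nat.le_mul_of_pos_right _ (hpos _)
    · exact hL2 t ht
  · rw [List.map_cons, List.sum_cons, ← hL3, hx']
    simp only [hε, ← hy]
    abel

end filling


section signed
variable {X : Type}

/-- signed terms -/
abbrev STm (X : Type) := Bool × List (X × Bool) × EI X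

/-- effective index -/
def eff (t : STm X) : EI X := if t.1 then t.2.2 else t.2.2.swap

/-- value of a signed term -/
def tv (t : STm X) : FreeGroup X := act t.2.1 (cm (eff t))

/-- sign flip -/
def fl (t : STm X) : STm X := (!t.1, t.2)

theorem cm_swap' (e : EI X) : cm e.swap = (cm e)⁻¹ := cm_swap e

theorem tv_fl (t : STm X) : tv (fl t) = (tv t)⁻¹ := by
  obtain ⟨s, γ, e⟩ := t
  cases s
  · simp only [tv, fl, eff, ← act_inv, ← cm_swap']
    simp
  · simp only [tv, fl, eff, ← act_inv, ← cm_swap']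
    simp

/-- class type -/
abbrev JT (X : Type) := Multiset (X × Bool) × EI X

/-- class -/
def cl (t : STm X) : JT X := ((t.2.1 : Multiset (X × Bool)), t.2.2)

/-- formal value of a term -/
noncomputable def fs (t : STm X) : JT X →₀ ℤ := Finsupp.single (cl t) (if t.1 then 1 else -1)

/-- product of values -/
def pv (P : List (STm X)) : FreeGroup X := (P.map tv).prod

/-- formal sum -/
noncomputable def Fs (P : List (STm X)) : JT X →₀ ℤ := (P.map fs).sum

theorem pv_append (P P' : List (STm X)) : pv (P ++ P') = pv P * pv P' := by simp [pv]
theorem pv_cons (t : STm X) (P : List (STm X)) : pv (t :: P) = tv t * pv P := by simp [pv]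
theorem pv_nil : pv ([] : List (STm X)) = 1 := rfl
theorem Fs_append (P P' : List (STm X)) : Fs (P ++ P') = Fs P + Fs P' := by simp [Fs]
theorem Fs_cons (t : STm X) (P : List (STm X)) : Fs (t :: P) = fs t + Fs P := by simp [Fs]
theorem Fs_nil : Fs ([] : List (STm X)) = 0 := rfl

theorem fs_fl (t : STm X) : fs (fl t) = - fs t := by
  obtain ⟨s, γ, e⟩ := t
  cases s <;> simp [fs, fl, cl]

/-- formal inverse -/
def ng (P : List (STm X)) : List (STm X) := (P.map fl).reverse

theorem ng_cons (t : STm X) (P : List (STm X)) : ng (t :: P) = ng P ++ [fl t] := by simp [ng]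

theorem pv_ng (P : List (STm X)) : pv (ng P) = (pv P)⁻¹ := by
  induction P with
  | nil => simp [ng, pv]
  | cons t P ih => rw [ng_cons, pv_append, ih, pv_cons, pv_cons, pv_nil, tv_fl]; simp

theorem Fs_ng (P : List (STm X)) : Fs (ng P) = - Fs P := by
  induction P with
  | nil => simp [ng, Fs]
  | cons t P ih => rw [ng_cons, Fs_append, ih, Fs_cons, Fs_cons, Fs_nil, fs_fl]; simp

theorem ng_length (P : List (STm X)) : (ng P).length = P.length := by simp [ng]

theorem mem_ng {P : List (STm X)} {t : STm X} (h : t ∈ ng P) : ∃ t' ∈ P, t'.2 = t.2 := by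
  simp only [ng, List.mem_reverse, List.mem_map] at h
  obtain ⟨t', h1, rfl⟩ := h
  exact ⟨t', h1, rfl⟩

/-- shift of classes -/
def shJ (b : Multiset (X × Bool)) (j : JT X) : JT X := (b + j.1, j.2)

/-- shift of terms -/
noncomputable def sft (b : Multiset (X × Bool)) (P : List (STm X)) : List (STm X) :=
  P.map fun t => (t.1, b.toList ++ t.2.1, t.2.2)

theorem pv_sft (b : Multiset (X × Bool)) (P : List (STm X)) :
    pv (sft b P) = act b.toList (pv P) := by
  rw [pv, pv, act_prod, sft, List.map_map, List.map_map]
  congr 1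
  apply List.map_congr_left
  intro t _
  simp only [Function.comp, tv, act_append]
  rfl

theorem Fs_sft (b : Multiset (X × Bool)) (P : List (STm X)) :
    Fs (sft b P) = (Fs P).mapDomain (shJ b) := by
  induction P with
  | nil => simp [sft, Fs]
  | cons t P ih =>
    have : sft b (t :: P) = (t.1, b.toList ++ t.2.1, t.2.2) :: sft b P := rfl
    rw [this, Fs_cons, Fs_cons, ih, Finsupp.mapDomain_add]
    congr 1
    rw [fs, fs, Finsupp.mapDomain_single]
    congr 1
    simp [cl, shJ, ← Multiset.coe_add]

theorem ab_of_coe_eq {γ γ' : List (X × Bool)}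
    (h : (γ : Multiset (X × Bool)) = (γ' : Multiset (X × Bool))) : ab γ = ab γ' := by
  rw [Multiset.coe_eq_coe] at h
  exact (h.map sg).sum_eq

theorem Fs_no_opp (s : Bool) (j : JT X) (P : List (STm X))
    (h : ∀ t ∈ P, cl t = j → t.1 = s) : 0 ≤ (if s then (1:ℤ) else -1) * Fs P j := by
  classical
  induction P with
  | nil => simp [Fs]
  | cons t P ih =>
    have h1 := ih fun t ht => h t (by simp [ht])
    rw [Fs_cons, Finsupp.add_apply, mul_add]
    refine add_nonneg ?_ h1
    rw [fs, Finsupp.single_apply]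
    by_cases hc : cl t = j
    · have := h t (by simp) hc
      rw [if_pos hc, this]
      split_ifs <;> simp
    · rw [if_neg hc, mul_zero]

theorem fs_cancel {t t' : STm X} (hcl : cl t = cl t') (hs : t.1 ≠ t'.1) : fs t + fs t' = 0 := by
  rw [fs, fs, hcl, ← Finsupp.single_add]
  obtain ⟨b, u⟩ := t
  obtain ⟨b', u'⟩ := t'
  cases b <;> cases b' <;> simp at hs ⊢

theorem zero_sum {R : Set (FreeGroup X)} (c : ℕ) (Q : STm X → Prop)
    (h1 : ∀ t t', Q t → Q t' → AEq R ((tv t)⁻¹ * tv t' * tv t) (tv t') c)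
    (h2 : ∀ t t', Q t → Q t' → cl t = cl t' → t.1 ≠ t'.1 → AreaLe R (tv t * tv t') c)
    (P : List (STm X)) (hP : ∀ t ∈ P, Q t) (h0 : Fs P = 0) :
    AreaLe R (pv P) (P.length ^ 2 * c) := by
  induction hn : P.length using Nat.strong_induction_on generalizing P with
  | _ n ih =>
  subst hn
  cases P with
  | nil => rw [pv_nil]; exact areaLe_one _
  | cons t P =>
    obtain ⟨t', ht', hcl, hs⟩ : ∃ t' ∈ P, cl t = cl t' ∧ t.1 ≠ t'.1 := by
      by_contra! hcon
      have h3 := Fs_no_opp t.1 (cl t) P fun t' ht' hc => (hcon t' ht' hc.symm).symm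
      have h4 := DFunLike.congr_fun h0 (cl t)
      rw [Fs_cons, Finsupp.add_apply, fs, Finsupp.single_eq_same] at h4
      simp only [Finsupp.coe_zero, Pi.zero_apply] at h4
      split_ifs at h3 h4 <;> omega
    obtain ⟨A, A', rfl⟩ := List.append_of_mem ht'
    have hQt : Q t := hP t (by simp)
    have hQt' : Q t' := hP t' (by simp)
    have e1 := conj_list (R := R) (tv t) c (A.map tv) (by
      intro x hx
      obtain ⟨a, ha, rfl⟩ := List.mem_map.1 hx
      exact h1 t a hQt (hP a (List.mem_cons_of_mem _ (List.mem_append_left _ ha))))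
    have e2 : AEq R (tv t * pv A) (pv A * tv t) (A.length * c) := by
      have := (e1.mul_left (tv t)).symm
      rw [List.length_map] at this
      convert this using 1
      · rw [pv]
      · rw [pv]; group
    have hF : Fs (A ++ A') = 0 := by
      have hz := fs_cancel hcl hs
      rw [Fs_cons, Fs_append, Fs_cons] at h0
      rw [Fs_append]
      have : Fs A + Fs A' = (fs t + (Fs A + (fs t' + Fs A'))) - (fs t + fs t') := by abel
      rw [this, h0, hz, sub_zero]
    have e3 := ih (A ++ A').length (by simp) (A ++ A') (fun x hx => hP x (by
      rcases List.mem_append.1 hx with h | h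
      · exact List.mem_cons_of_mem _ (List.mem_append_left _ h)
      · exact List.mem_cons_of_mem _ (List.mem_append_right _ (List.mem_cons_of_mem _ h)))) hF rfl
    have e4 : AEq R (tv t * tv t') 1 c := aeq_one.2 (h2 t t' hQt hQt' hcl hs)
    have e5 : AEq R (pv (t :: (A ++ t' :: A'))) (pv A * (tv t * tv t') * pv A') (A.length * c) := by
      have := e2.mul_right (tv t' * pv A')
      convert this using 1
      · rw [pv_cons, pv_append, pv_cons]; group
      · group
    have e6 := ((e4.mul_left (pv A)).mul_right (pv A'))
    have e7 := (e5.trans e6).trans (show AEq R (pv A * 1 * pv A') 1 _ by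
      rw [mul_one, ← pv_append]; exact aeq_one.2 e3)
    refine (aeq_one.1 e7).mono ?_
    simp only [List.length_append, List.length_cons]
    nlinarith [Nat.zero_le (A.length * c), Nat.zero_le (A'.length * c)]

theorem comm_terms {R : Set (FreeGroup X)} [Fintype X] {γ γ' : List (X × Bool)} {c : ℕ}
    (h : EB R (winv γ ++ γ') c) (e d : EI X) :
    AEq R ((act γ (cm e))⁻¹ * act γ' (cm d) * act γ (cm e)) (act γ' (cm d)) c := by
  have h1 := act_AEq (h e d) γ
  have h2 : ∀ z, act γ (act (winv γ) z) = z := by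
    intro z
    have := act_winv (winv γ) z
    rwa [winv_winv] at this
  simpa only [act_mul, act_inv, act_append, h2] using h1

theorem zero_sum' [Fintype X] {R : Set (FreeGroup X)} (hR : R.Finite)
    (hmeta : IsMetabelian (FreeGroup X ⧸ Subgroup.normalClosure R)) :
    ∃ K : ℕ, 1 ≤ K ∧ ∀ m : ℕ, ∀ P : List (STm X), (∀ t ∈ P, t.2.1.length ≤ m) → Fs P = 0 →
      AreaLe R (pv P) (P.length ^ 2 * K ^ (2 * m + 1)) := by
  obtain ⟨K, hK1, hK⟩ := main_K hR hmeta
  refine ⟨K, hK1, fun m P hP h0 => ?_⟩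
  refine zero_sum (K ^ (2 * m + 1)) (fun t => t.2.1.length ≤ m) ?_ ?_ P hP h0
  · intro t t' ht ht'
    exact comm_terms ((hK (2 * m)).1 _ (by simp [winv_length]; omega)) _ _
  · intro t t' ht ht' hcl hs
    have e1 : t.2.2 = t'.2.2 := (Prod.mk.inj hcl).2
    have e2 : ab t.2.1 = ab t'.2.1 := ab_of_coe_eq (Prod.mk.inj hcl).1
    have e3 : tv t' = (act t'.2.1 (cm (eff t)))⁻¹ := by
      have : eff t' = (eff t).swap := by
        unfold eff
        rcases hb : t.1 <;> rcases hb' : t'.1 <;> simp_all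
      rw [tv, this, cm_swap', act_inv]
    rw [e3]
    exact (hK (2 * m)).2 t.2.1 t'.2.1 (by omega) (by omega) e2 _

end signed


set_option linter.unusedSectionVars false

section decomp
variable {X : Type}

theorem comm_decomp (a : X × Bool) (A : List (X × Bool)) : ∃ P : List (STm X),
    P.length = A.length ∧ (∀ t ∈ P, t.2.1.length ≤ A.length) ∧
    pv P = ltr a * FreeGroup.mk A * (ltr a)⁻¹ * (FreeGroup.mk A)⁻¹ := by
  induction A with
  | nil => exact ⟨[], rfl, by simp, by simp [pv_nil, mk_nil]⟩
  | cons c A ih =>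
    obtain ⟨P, h1, h2, h3⟩ := ih
    refine ⟨(true, [], (a, c)) :: P.map (fun t => (t.1, linv c :: t.2.1, t.2.2)), by simp [h1], ?_, ?_⟩
    · intro t ht
      rcases List.mem_cons.1 ht with rfl | ht
      · simp
      · obtain ⟨t', ht', rfl⟩ := List.mem_map.1 ht
        simpa using h2 t' ht'
    · have e1 : pv (P.map (fun t => (t.1, linv c :: t.2.1, t.2.2))) = act [linv c] (pv P) := by
        rw [pv, pv, act_prod, List.map_map, List.map_map]
        congr 1
      rw [pv_cons, e1, h3, mk_cons]
      simp only [tv, eff, act, cm, if_true, ltr_linv]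
      group

variable [Fintype X]

theorem mem_linv (a : X × Bool) (L : List (X × Bool)) (h : linv a ∉ L) : 0 ≤ ip (sg a) (ab L) := by
  induction L with
  | nil => simp [ab_nil, ip_zero]
  | cons m L ih =>
    rw [ab_cons, ip_add]
    refine add_nonneg ?_ (ih fun h' => h (by simp [h']))
    rw [ip_sg]
    by_cases hm : m.1 = a.1
    · obtain ⟨x, b⟩ := m
      obtain ⟨y, c⟩ := a
      simp only at hm; subst hm
      cases b <;> cases c <;> simp [sg, linv] at h ⊢
    · rw [sg_ne hm]; simp

theorem decomp (L : List (X × Bool)) (h0 : ab L = 0) : ∃ P : List (STm X),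
    P.length ≤ L.length ^ 2 ∧ (∀ t ∈ P, t.2.1.length ≤ L.length) ∧ pv P = FreeGroup.mk L := by
  induction hn : L.length using Nat.strong_induction_on generalizing L with
  | _ n ih =>
  subst hn
  cases L with
  | nil => exact ⟨[], by simp, by simp, by simp [pv_nil, mk_nil]⟩
  | cons a L =>
    have hmem : linv a ∈ L := by
      by_contra hcon
      have h1 := mem_linv a L hcon
      have h2 : ip (sg a) (ab (a :: L)) = 0 := by rw [h0, ip_zero]
      rw [ab_cons, ip_add, ip_sg_self] at h2
      omega
    obtain ⟨A, A', rfl⟩ := List.append_of_mem hmem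
    obtain ⟨P1, p1, p2, p3⟩ := comm_decomp a A
    obtain ⟨P2, q1, q2, q3⟩ := ih (A ++ A').length (by simp) (A ++ A') (by
      rw [ab_cons, ab_append, ab_cons, sg_linv] at h0
      rw [ab_append, ← h0]; abel) rfl
    refine ⟨P1 ++ P2, ?_, ?_, ?_⟩
    · simp only [List.length_append, List.length_cons] at *
      rw [p1]
      have : (A.length + (A'.length + 1) + 1) ^ 2 = (A.length + A'.length) ^ 2 +
        4 * (A.length + A'.length) + 4 := by ring
      omega
    · intro t ht
      simp only [List.length_append, List.length_cons] at *
      rcases List.mem_append.1 ht with h | h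
      · have := p2 t h; omega
      · have := q2 t h; omega
    · rw [pv_append, p3, q3, mk_append, mk_cons, mk_append, mk_cons, ltr_linv]
      group

end decomp

section expo

/-- at most exponential growth -/
def EXPB (h : ℕ → ℕ) : Prop := ∃ C : ℕ, ∀ m, h m ≤ C ^ (m + 1)

theorem EXPB.le {h h' : ℕ → ℕ} (hh : EXPB h) (hle : ∀ m, h' m ≤ h m) : EXPB h' := by
  obtain ⟨C, hC⟩ := hh
  exact ⟨C, fun m => (hle m).trans (hC m)⟩

theorem EXPB.const (c : ℕ) : EXPB fun _ => c := ⟨c, fun m => Nat.le_self_pow (by omega) c⟩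

theorem EXPB.mul {h h' : ℕ → ℕ} (hh : EXPB h) (hh' : EXPB h') : EXPB fun m => h m * h' m := by
  obtain ⟨C, hC⟩ := hh
  obtain ⟨C', hC'⟩ := hh'
  exact ⟨C * C', fun m => by rw [mul_pow]; exact Nat.mul_le_mul (hC m) (hC' m)⟩

theorem EXPB.add {h h' : ℕ → ℕ} (hh : EXPB h) (hh' : EXPB h') : EXPB fun m => h m + h' m := by
  obtain ⟨C, hC⟩ := hh
  obtain ⟨C', hC'⟩ := hh'
  refine ⟨2 * (C + C'), fun m => ?_⟩
  have h1 := hC m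
  have h2 := hC' m
  have h3 : C ^ (m + 1) ≤ (C + C') ^ (m + 1) := Nat.pow_le_pow_left (by omega) _
  have h4 : C' ^ (m + 1) ≤ (C + C') ^ (m + 1) := Nat.pow_le_pow_left (by omega) _
  have h5 : 2 ≤ 2 ^ (m + 1) := Nat.le_self_pow (by omega) 2
  rw [mul_pow]
  nlinarith

theorem EXPB.id : EXPB fun m => m :=
  ⟨2, fun m => by have := Nat.lt_two_pow_self (n := m); rw [pow_succ]; change m ≤ _; omega⟩

theorem EXPB.comp {h : ℕ → ℕ} (hh : EXPB h) (a b : ℕ) : EXPB fun m => h (a * m + b) := by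
  obtain ⟨C, hC⟩ := hh
  refine ⟨(C + 1) ^ (a + b + 1), fun m => (hC _).trans ?_⟩
  rw [← pow_mul]
  refine (Nat.pow_le_pow_left (Nat.le_succ C) _).trans ?_
  exact Nat.pow_le_pow_right (by omega) (by nlinarith)

theorem EXPB.pow (Q a b : ℕ) : EXPB fun m => Q ^ (a * m + b) := by
  refine ⟨(Q + 1) ^ (a + b), fun m => ?_⟩
  rw [← pow_mul]
  refine (Nat.pow_le_pow_left (Nat.le_succ Q) _).trans ?_
  exact Nat.pow_le_pow_right (by omega) (by nlinarith)

end expo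

section keys

theorem prime_pow_inj {Z : Type*} [Fintype Z] (pr : Z → ℕ) (hp : ∀ z, (pr z).Prime)
    (hinj : Function.Injective pr) (a b : Z → ℕ) (h : ∏ z, pr z ^ a z = ∏ z, pr z ^ b z) : a = b := by
  classical
  have key : ∀ (c : Z → ℕ) z, (∏ z, pr z ^ c z).factorization (pr z) = c z := by
    intro c z
    rw [Nat.factorization_prod (fun i _ => pow_ne_zero _ (hp i).ne_zero), Finsupp.finsetSum_apply,
      Finset.sum_eq_single z]
    · rw [(hp z).factorization_pow]; simp
    · intro i _ hi
      rw [(hp i).factorization_pow, Finsupp.single_apply, if_neg fun h => hi (hinj h)]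
    · simp
  funext z
  rw [← key a z, h, key b z]

variable {Y E : Type*} [Fintype Y] [Fintype E] [DecidableEq Y] [DecidableEq E]

/-- key of a multiset -/
def kY (pr : Y ⊕ E → ℕ) (s : Multiset Y) : ℕ := ∏ y, pr (Sum.inl y) ^ s.count y

/-- key of an index -/
def kJ (pr : Y ⊕ E → ℕ) (j : Multiset Y × E) : ℕ := kY pr j.1 * pr (Sum.inr j.2)

theorem kY_add (pr : Y ⊕ E → ℕ) (s t : Multiset Y) : kY pr (s + t) = kY pr s * kY pr t := by
  simp [kY, pow_add, Finset.prod_mul_distrib]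

theorem kJ_inj (pr : Y ⊕ E → ℕ) (hp : ∀ z, (pr z).Prime) (hinj : Function.Injective pr) :
    Function.Injective (kJ pr) := by
  have h1 : ∀ j : Multiset Y × E, kJ pr j =
      ∏ z, pr z ^ (Sum.elim (fun y => j.1.count y) (fun e => if e = j.2 then 1 else 0) z) := by
    intro j
    rw [Fintype.prod_sum_type]
    simp [kJ, kY]
  intro j j' h
  rw [h1, h1] at h
  have h2 := prime_pow_inj pr hp hinj _ _ h
  refine Prod.ext (Multiset.ext.2 fun y => ?_) ?_
  · simpa using congrFun h2 (Sum.inl y)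
  · have := congrFun h2 (Sum.inr j.2)
    by_contra hne
    simp [hne] at this

theorem kY_lower (pr : Y ⊕ E → ℕ) (hp : ∀ z, (pr z).Prime) (s : Multiset Y) :
    2 ^ s.card ≤ kY pr s := by
  rw [← Multiset.sum_count_eq_card (s := Finset.univ) (m := s) (by simp), ← Finset.prod_pow_eq_pow_sum]
  exact Finset.prod_le_prod' fun y _ => Nat.pow_le_pow_left (hp _).two_le _

theorem kJ_upper (pr : Y ⊕ E → ℕ) (Q : ℕ) (hQ : ∀ z, pr z ≤ Q) (j : Multiset Y × E) :
    kJ pr j ≤ Q ^ (j.1.card + 1) := by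
  rw [kJ, pow_succ]
  refine Nat.mul_le_mul ?_ (hQ _)
  rw [← Multiset.sum_count_eq_card (s := Finset.univ) (m := j.1) (by simp),
    ← Finset.prod_pow_eq_pow_sum]
  exact Finset.prod_le_prod' fun y _ => Nat.pow_le_pow_left (hQ _) _

theorem exists_primes (Z : Type*) [Fintype Z] : ∃ pr : Z → ℕ, (∀ z, (pr z).Prime) ∧
    Function.Injective pr ∧ ∃ Q, ∀ z, pr z ≤ Q := by
  refine ⟨fun z => Nat.nth Nat.Prime (Fintype.equivFin Z z), fun z => Nat.prime_nth_prime _, ?_, ?_⟩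
  · intro a b h
    have := Nat.nth_injective Nat.infinite_setOfPred_prime h
    exact (Fintype.equivFin Z).injective (Fin.ext this)
  · obtain ⟨Q, hQ⟩ := (Set.finite_range
      (fun z : Z => Nat.nth Nat.Prime (Fintype.equivFin Z z))).bddAbove
    exact ⟨Q, fun z => hQ ⟨z, rfl⟩⟩

theorem wqo_J {Y E : Type*} [Finite Y] [Finite E] :
    WellQuasiOrdered (fun p q : (Multiset Y × E) × ℕ =>
      (∃ b : Multiset Y, ((b + p.1.1, p.1.2) : Multiset Y × E) = q.1) ∧ p.2 ≤ q.2) := by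
  classical
  have h1 : WellQuasiOrdered (fun a b : Y → ℕ => a ≤ b) := wellQuasiOrdered_le
  have h2 : WellQuasiOrdered (fun a b : E => a = b) := Finite.wellQuasiOrdered _
  have h3 : WellQuasiOrdered (fun a b : ℕ => a ≤ b) := wellQuasiOrdered_le
  have hpre : IsPreorder ((Y → ℕ) × E) (fun a b => a.1 ≤ b.1 ∧ a.2 = b.2) :=
    { refl := fun a => ⟨le_rfl, rfl⟩
      trans := fun a b c h h' => ⟨h.1.trans h'.1, h.2.trans h'.2⟩ }
  have h4 := (h1.prod h2).prod h3
  intro f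
  obtain ⟨m, n, hmn, ⟨ha, hb⟩, hc⟩ := h4 (fun i => ((fun y => (f i).1.1.count y, (f i).1.2), (f i).2))
  refine ⟨m, n, hmn, ?_, hc⟩
  obtain ⟨b, hb'⟩ := Multiset.le_iff_exists_add.1 (Multiset.le_iff_count.2 ha)
  exact ⟨b, Prod.ext (by rw [hb', add_comm]) hb⟩

theorem wqo_X {X : Type*} [Finite X] :
    WellQuasiOrdered (fun p q : X × ℕ => (∃ _ : Unit, p.1 = q.1) ∧ p.2 ≤ q.2) := by
  have h2 : WellQuasiOrdered (fun a b : X => a = b) := Finite.wellQuasiOrdered _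
  have h3 : WellQuasiOrdered (fun a b : ℕ => a ≤ b) := wellQuasiOrdered_le
  have h4 := h2.prod h3
  intro f
  obtain ⟨m, n, hmn, ha, hc⟩ := h4 f
  exact ⟨m, n, hmn, ⟨(), ha⟩, hc⟩

end keys


set_option linter.unusedSectionVars false

section final

theorem Vw_add {J : Type*} (key : J → ℕ) (κ : ℕ) (x y : J →₀ ℤ) :
    Vw key κ (x + y) ≤ Vw key κ x + Vw key κ y := by
  classical
  rw [Vw_eq key κ (x + y) (s := x.support ∪ y.support) Finsupp.support_add,
    Vw_eq key κ x (s := x.support ∪ y.support) Finset.subset_union_left,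
    Vw_eq key κ y (s := x.support ∪ y.support) Finset.subset_union_right, ← Finset.sum_add_distrib]
  refine Finset.sum_le_sum fun j _ => ?_
  rw [← add_mul]
  exact Nat.mul_le_mul_right _ (Int.natAbs_add_le _ _)

variable {X : Type}

theorem Vw_Fs (key : JT X → ℕ) (κ Kb : ℕ) (P : List (STm X)) (h : ∀ t ∈ P, key (cl t) ≤ Kb) :
    Vw key κ (Fs P) ≤ P.length * Kb ^ κ ∧ ∀ j ∈ (Fs P).support, key j ≤ Kb := by
  classical
  induction P with
  | nil => simp [Fs, Vw]
  | cons t P ih =>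
    obtain ⟨h1, h2⟩ := ih fun t ht => h t (by simp [ht])
    have h3 := h t (by simp)
    rw [Fs_cons]
    constructor
    · refine (Vw_add key κ _ _).trans ?_
      have h4 : Vw key κ (fs t) ≤ Kb ^ κ := by
        rw [Vw, fs, Finsupp.sum_single_index (by simp)]
        have : (if t.1 = true then (1:ℤ) else -1).natAbs = 1 := by split_ifs <;> rfl
        rw [this, one_mul]
        exact Nat.pow_le_pow_left h3 _
      rw [List.length_cons, add_mul, one_mul]
      omega
    · intro j hj
      rcases Finset.mem_union.1 (Finsupp.support_add hj) with h | h
      · rw [fs] at h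
        have := Finsupp.support_single_subset h
        rw [Finset.mem_singleton] at this
        rw [this]; exact h3
      · exact h2 j h

theorem list_len_bound (P : List (STm X)) : ∃ n, ∀ t ∈ P, t.2.1.length ≤ n :=
  ⟨(P.map fun t => t.2.1.length).sum, fun _ ht =>
    List.le_sum_of_mem (List.mem_map_of_mem (f := fun t : STm X => t.2.1.length) ht)⟩

theorem act_areaLe {R : Set (FreeGroup X)} {d : FreeGroup X} {N : ℕ} (h : AreaLe R d N)
    (L : List (X × Bool)) : AreaLe R (act L d) N := by
  have := act_AEq (aeq_one.2 h) L
  rw [act_one] at this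
  exact aeq_one.1 this

theorem mk_winv (L : List (X × Bool)) : FreeGroup.mk (winv L) = (FreeGroup.mk L)⁻¹ := by
  induction L with
  | nil => simp [winv, mk_nil]
  | cons a L ih =>
    have : winv (a :: L) = winv L ++ [linv a] := by simp [winv]
    rw [this, mk_append, ih, mk_cons, mk_cons, mk_nil, ltr_linv]; simp

variable [Fintype X]

theorem comm_fill {R : Set (FreeGroup X)} (hR : R.Finite)
    (hmeta : IsMetabelian (FreeGroup X ⧸ Subgroup.normalClosure R)) :
    ∃ h : ℕ → ℕ, EXPB h ∧ ∀ m, ∀ L : List (X × Bool), L.length ≤ m → ab L = 0 →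
      FreeGroup.mk L ∈ Subgroup.normalClosure R → AreaLe R (FreeGroup.mk L) (h m) := by
  classical
  obtain ⟨K, hK1, hK⟩ := zero_sum' hR hmeta
  obtain ⟨pr, hp, hpi, Q, hQ⟩ := exists_primes ((X × Bool) ⊕ EI X)
  let I : AddSubgroup (JT X →₀ ℤ) :=
    { carrier := {x | ∃ P, Fs P = x ∧ pv P ∈ Subgroup.normalClosure R}
      zero_mem' := ⟨[], Fs_nil, by rw [pv_nil]; exact one_mem _⟩
      add_mem' := by
        rintro x y ⟨P, h1, h2⟩ ⟨P', h1', h2'⟩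
        exact ⟨P ++ P', by rw [Fs_append, h1, h1'], by rw [pv_append]; exact mul_mem h2 h2'⟩
      neg_mem' := by
        rintro x ⟨P, h1, h2⟩
        exact ⟨ng P, by rw [Fs_ng, h1], by rw [pv_ng]; exact inv_mem h2⟩ }
  have hIs : ∀ b, ∀ x ∈ I, x.mapDomain (shJ b) ∈ I := by
    rintro b x ⟨P, h1, h2⟩
    refine ⟨sft b P, by rw [Fs_sft, h1], ?_⟩
    rw [pv_sft]
    obtain ⟨N, hN⟩ := exists_areaLe h2
    exact (act_areaLe hN _).mem
  obtain ⟨G, hG, κ, hfill⟩ := filling shJ (kJ pr) (kY pr) (kJ_inj pr hp hpi)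
    (fun j => Nat.mul_pos (lt_of_lt_of_le (by positivity) (kY_lower pr hp j.1)) (hp _).pos)
    (fun b j => by simp only [kJ, shJ, kY_add]; ring) wqo_J I hIs
  have hG' : ∀ g ∈ G, ∃ P : List (STm X), Fs P = g ∧ ∃ N : ℕ, P.length ≤ N ∧
      (∀ t ∈ P, t.2.1.length ≤ N) ∧ AreaLe R (pv P) N := by
    intro g hg
    obtain ⟨P, h1, h2⟩ := hG g hg
    obtain ⟨N, hN⟩ := exists_areaLe h2
    obtain ⟨n, hn⟩ := list_len_bound P
    exact ⟨P, h1, P.length + N + n, by omega, fun t ht => (hn t ht).trans (by omega),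
      hN.mono (by omega)⟩
  choose! gh hgh N hN1 hN2 hN3 using hG'
  set ℓ := G.sup N with hℓ
  have hle : ∀ g ∈ G, N g ≤ ℓ := fun g hg => Finset.le_sup hg
  have hlist : ∀ m : ℕ, ∀ L : List (Bool × Multiset (X × Bool) × (JT X →₀ ℤ)),
      (∀ t ∈ L, t.2.2 ∈ G ∧ kY pr t.2.1 ≤ Q ^ (m + 1)) → ∃ P : List (STm X),
      Fs P = (L.map fun t => (if t.1 then (1:ℤ) else -1) • t.2.2.mapDomain (shJ t.2.1)).sum ∧
      P.length ≤ L.length * ℓ ∧ (∀ t ∈ P, t.2.1.length ≤ Q * (m + 1) + ℓ) ∧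
      AreaLe R (pv P) (L.length * ℓ) := by
    intro m L
    induction L with
    | nil => intro _; exact ⟨[], by simp [Fs], by simp, by simp, areaLe_one _⟩
    | cons t L ih =>
      intro hL
      obtain ⟨P, p1, p2, p3, p4⟩ := ih fun t ht => hL t (by simp [ht])
      obtain ⟨s, b, g⟩ := t
      obtain ⟨hgG, hbk⟩ := hL (s, b, g) (by simp)
      simp only at hgG hbk
      have hcard : b.card ≤ Q * (m + 1) := by
        have h1 := (kY_lower pr hp b).trans hbk
        have h2 : Q ^ (m + 1) ≤ 2 ^ (Q * (m + 1)) := by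
          rw [pow_mul]
          exact Nat.pow_le_pow_left (Nat.lt_two_pow_self).le _
        exact (Nat.pow_le_pow_iff_right (by norm_num)).1 (h1.trans h2)
      have hb1 : ∀ t ∈ sft b (gh g), t.2.1.length ≤ Q * (m + 1) + ℓ := by
        intro t ht
        obtain ⟨t', ht', rfl⟩ := List.mem_map.1 ht
        have := hN2 g hgG t' ht'
        have := hle g hgG
        simp
        omega
      have hb2 : AreaLe R (pv (sft b (gh g))) ℓ := by
        rw [pv_sft]
        exact act_areaLe ((hN3 g hgG).mono (hle g hgG)) _
      have hb3 : (sft b (gh g)).length ≤ ℓ := by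
        simp only [sft, List.length_map]
        exact (hN1 g hgG).trans (hle g hgG)
      have hb4 : Fs (sft b (gh g)) = g.mapDomain (shJ b) := by rw [Fs_sft, hgh g hgG]
      cases s
      · refine ⟨ng (sft b (gh g)) ++ P, ?_, ?_, ?_, ?_⟩
        · rw [Fs_append, Fs_ng, hb4, p1]; simp
        · simp only [List.length_append, ng_length, List.length_cons, add_mul]; omega
        · intro t ht
          rcases List.mem_append.1 ht with h | h
          · obtain ⟨t', ht', he⟩ := mem_ng h
            rw [← he]; exact hb1 t' ht'
          · exact p3 t h
        · rw [pv_append, pv_ng]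
          refine (hb2.inv.mul p4).mono ?_
          simp [add_mul]; omega
      · refine ⟨sft b (gh g) ++ P, ?_, ?_, ?_, ?_⟩
        · rw [Fs_append, hb4, p1]; simp
        · simp only [List.length_append, List.length_cons, add_mul]; omega
        · intro t ht
          rcases List.mem_append.1 ht with h | h
          · exact hb1 t h
          · exact p3 t h
        · rw [pv_append]
          refine (hb2.mul p4).mono ?_
          simp [add_mul]; omega
  let lam : ℕ → ℕ := fun m => m * m * Q ^ (κ * m + κ)
  have hlam : EXPB lam := (EXPB.id.mul EXPB.id).mul (EXPB.pow Q κ κ)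
  let pp : ℕ → ℕ := fun m => m * m + lam m * ℓ
  have hpp : EXPB pp := (EXPB.id.mul EXPB.id).add (hlam.mul (EXPB.const ℓ))
  refine ⟨fun m => pp m * pp m * K ^ ((2 * (Q + 1)) * m + (2 * (Q + ℓ) + 1)) + lam m * ℓ,
    ((hpp.mul hpp).mul (EXPB.pow K _ _)).add (hlam.mul (EXPB.const ℓ)), ?_⟩
  intro m L hLm hab hLN
  obtain ⟨P, p1, p2, p3⟩ := decomp L hab
  have hPm : ∀ t ∈ P, t.2.1.length ≤ m := fun t ht => (p2 t ht).trans hLm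
  by_cases hQ0 : P = []
  · rw [← p3, hQ0, pv_nil]; exact areaLe_one _
  have hQpos : 0 < Q := by
    obtain ⟨t, ht⟩ := List.exists_mem_of_ne_nil P hQ0
    exact lt_of_lt_of_le (hp (Sum.inr t.2.2)).pos (hQ _)
  have hkb : ∀ t ∈ P, kJ pr (cl t) ≤ Q ^ (m + 1) := by
    intro t ht
    refine (kJ_upper pr Q hQ (cl t)).trans (Nat.pow_le_pow_right hQpos ?_)
    have := hPm t ht
    simp [cl]; omega
  obtain ⟨v1, v2⟩ := Vw_Fs (kJ pr) κ (Q ^ (m + 1)) P hkb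
  obtain ⟨Lf, l1, l2, l3⟩ := hfill (Fs P) ⟨P, rfl, by rw [p3]; exact hLN⟩ (Q ^ (m + 1)) v2
  obtain ⟨P', q1, q2, q3, q4⟩ := hlist m Lf l2
  have hPl : P.length ≤ m * m := by
    refine p1.trans ?_
    rw [sq]; exact Nat.mul_le_mul hLm hLm
  have hLf : Lf.length ≤ lam m := by
    refine l1.trans (v1.trans ?_)
    have : (Q ^ (m + 1)) ^ κ = Q ^ (κ * m + κ) := by rw [← pow_mul]; congr 1; ring
    rw [this]
    exact Nat.mul_le_mul_right _ hPl
  have hz := hK ((Q + 1) * m + (Q + ℓ)) (P ++ ng P') (by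
    intro t ht
    rcases List.mem_append.1 ht with h | h
    · have := hPm t h; nlinarith
    · obtain ⟨t', ht', he⟩ := mem_ng h
      rw [← he]; have := q3 t' ht'; nlinarith) (by
    rw [Fs_append, Fs_ng, q1, ← l3]; abel)
  rw [pv_append, pv_ng, p3] at hz
  have hlen : (P ++ ng P').length ≤ pp m := by
    simp only [List.length_append, ng_length, pp]
    exact Nat.add_le_add hPl (q2.trans (Nat.mul_le_mul_right _ hLf))
  have hres := hz.mul q4
  rw [inv_mul_cancel_right] at hres
  refine hres.mono (Nat.add_le_add (Nat.mul_le_mul ?_ (le_of_eq ?_)) (Nat.mul_le_mul_right _ hLf))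
  · rw [sq]; exact Nat.mul_le_mul hlen hlen
  · congr 1; ring

theorem natAbs_ab (L : List (X × Bool)) (x : X) : (ab L x).natAbs ≤ L.length := by
  classical
  induction L with
  | nil => simp [ab_nil]
  | cons a L ih =>
    rw [ab_cons, Pi.add_apply]
    refine (Int.natAbs_add_le _ _).trans ?_
    have : (sg a x).natAbs ≤ 1 := by
      by_cases h : a.1 = x
      · subst h
        unfold sg
        rw [Pi.single_eq_same]
        split_ifs <;> simp
      · rw [sg_ne h]; simp
    rw [List.length_cons]; omega

theorem full_fill {R : Set (FreeGroup X)} (hR : R.Finite)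
    (hmeta : IsMetabelian (FreeGroup X ⧸ Subgroup.normalClosure R)) :
    ∃ h : ℕ → ℕ, EXPB h ∧ ∀ n, ∀ w ∈ Subgroup.normalClosure R, freeNorm w ≤ n →
      AreaLe R w (h n) := by
  classical
  obtain ⟨h, hh, hfillc⟩ := comm_fill hR hmeta
  let key : X → ℕ := fun x => (Fintype.equivFin X x : ℕ) + 1
  let I : AddSubgroup (X →₀ ℤ) :=
    { carrier := {x | ∃ L, FreeGroup.mk L ∈ Subgroup.normalClosure R ∧ ⇑x = ab L}
      zero_mem' := ⟨[], by rw [mk_nil]; exact one_mem _, rfl⟩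
      add_mem' := by
        rintro x y ⟨P, h1, h2⟩ ⟨P', h1', h2'⟩
        exact ⟨P ++ P', by rw [mk_append]; exact mul_mem h1 h1', by
          rw [Finsupp.coe_add, h2, h2', ab_append]⟩
      neg_mem' := by
        rintro x ⟨P, h1, h2⟩
        exact ⟨winv P, by rw [mk_winv]; exact inv_mem h1, by
          rw [Finsupp.coe_neg, h2, ab_winv]⟩ }
  obtain ⟨G, hG, κ, hfill⟩ := filling (fun (_ : Unit) (x : X) => x) key (fun _ => 1)
    (fun a b hab => (Fintype.equivFin X).injective (Fin.ext (by simpa [key] using hab)))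
    (fun j => Nat.succ_pos _) (fun b j => by simp) wqo_X I
    (fun b x hx => by
      have : x.mapDomain (fun x => x) = x := Finsupp.mapDomain_id
      rw [this]; exact hx)
  have hG' : ∀ g ∈ G, ∃ L : List (X × Bool), ⇑g = ab L ∧ ∃ N : ℕ, L.length ≤ N ∧
      AreaLe R (FreeGroup.mk L) N := by
    intro g hg
    obtain ⟨L, h1, h2⟩ := hG g hg
    obtain ⟨N, hN⟩ := exists_areaLe h1
    exact ⟨L, h2, L.length + N, by omega, hN.mono (by omega)⟩
  choose! gh hgh N hN1 hN2 using hG'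
  set ℓ := G.sup N with hℓ
  have hle : ∀ g ∈ G, N g ≤ ℓ := fun g hg => Finset.le_sup hg
  have hlist : ∀ L : List (Bool × Unit × (X →₀ ℤ)), (∀ t ∈ L, t.2.2 ∈ G) →
      ∃ M : List (X × Bool),
      ab M = - (((L.map fun t => (if t.1 then (1:ℤ) else -1) •
        t.2.2.mapDomain (fun x : X => x)).sum : X →₀ ℤ) : X → ℤ) ∧
      M.length ≤ L.length * ℓ ∧ AreaLe R (FreeGroup.mk M) (L.length * ℓ) := by
    intro L
    induction L with
    | nil => intro _; exact ⟨[], by simp [ab_nil], by simp, by rw [mk_nil]; exact areaLe_one _⟩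
    | cons t L ih =>
      intro hL
      obtain ⟨M, p1, p2, p3⟩ := ih fun t ht => hL t (by simp [ht])
      obtain ⟨s, b, g⟩ := t
      have hgG := hL (s, b, g) (by simp)
      simp only at hgG
      have hid : g.mapDomain (fun x => x) = g := Finsupp.mapDomain_id
      have hb2 := (hN2 g hgG).mono (hle g hgG)
      have hb3 := (hN1 g hgG).trans (hle g hgG)
      cases s
      · refine ⟨gh g ++ M, ?_, ?_, ?_⟩
        · rw [ab_append, p1, ← hgh g hgG, List.map_cons, List.sum_cons, hid]
          simp [add_comm]
        · simp only [List.length_append, List.length_cons, add_mul]; omega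
        · rw [mk_append]
          refine (hb2.mul p3).mono ?_
          simp [add_mul]; omega
      · refine ⟨winv (gh g) ++ M, ?_, ?_, ?_⟩
        · rw [ab_append, p1, ab_winv, ← hgh g hgG, List.map_cons, List.sum_cons, hid]
          simp [add_comm]
        · simp only [List.length_append, winv_length, List.length_cons, add_mul]; omega
        · rw [mk_append, mk_winv]
          refine (hb2.inv.mul p3).mono ?_
          simp [add_mul]; omega
  set c := Fintype.card X * (Fintype.card X + 1) ^ κ with hc
  refine ⟨fun n => h ((1 + c * ℓ) * n + 0) + c * n * ℓ, (hh.comp _ _).add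
    (((EXPB.const c).mul EXPB.id).mul (EXPB.const ℓ)), ?_⟩
  intro n w hw hwn
  obtain ⟨L, rfl, hLl⟩ := exists_list w
  have hLn : L.length ≤ n := by omega
  let x : X →₀ ℤ := Finsupp.equivFunOnFinite.symm (ab L)
  have hx : ⇑x = ab L := rfl
  have hkeyb : ∀ j, key j ≤ Fintype.card X + 1 := by
    intro j
    have := (Fintype.equivFin X j).2
    simp only [key]; omega
  obtain ⟨Lf, l1, l2, l3⟩ := hfill x ⟨L, hw, hx⟩ (Fintype.card X + 1) (fun j _ => hkeyb j)
  obtain ⟨M, m1, m2, m3⟩ := hlist Lf fun t ht => (l2 t ht).1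
  rw [← l3, hx] at m1
  have hLf : Lf.length ≤ c * n := by
    refine l1.trans ?_
    rw [Vw_eq key κ x (Finset.subset_univ _)]
    calc ∑ j, (x j).natAbs * key j ^ κ ≤ ∑ _j : X, n * (Fintype.card X + 1) ^ κ := by
          refine Finset.sum_le_sum fun j _ => Nat.mul_le_mul ?_ (Nat.pow_le_pow_left (hkeyb j) _)
          rw [hx]; exact (natAbs_ab L j).trans hLn
      _ = c * n := by simp [hc]; ring
  have hM : AreaLe R (FreeGroup.mk M) (c * n * ℓ) := m3.mono (Nat.mul_le_mul_right _ hLf)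
  have hMl : M.length ≤ c * n * ℓ := m2.trans (Nat.mul_le_mul_right _ hLf)
  have e1 := hfillc ((1 + c * ℓ) * n + 0) (L ++ M) (by
    rw [List.length_append]
    have : (1 + c * ℓ) * n + 0 = n + c * n * ℓ := by ring
    omega) (by rw [ab_append, m1]; simp) (by
    rw [mk_append]; exact mul_mem hw hM.mem)
  rw [mk_append] at e1
  have e2 := e1.mul hM.inv
  rwa [mul_inv_cancel_right] at e2

end final


/-- For a finitely presented metabelian group `G`, the Dehn function `δ`
of a finite presentation and the relative Dehn function `δ̃` of a finite relative
presentation satisfy `δ̃ ≼ δ` and `δ ≼ max{δ̃(n³)³, 2ⁿ}`. -/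
theorem dehn_vs_relative_dehn {X Y : Type} [Finite X] [Finite Y]
    (R : Set (FreeGroup X)) (hR : R.Finite)
    (S : Set (FreeMetabelian Y)) (hS : S.Finite)
    (hmeta : IsMetabelian (FreeGroup X ⧸ Subgroup.normalClosure R))
    (hiso : Nonempty ((FreeGroup X ⧸ Subgroup.normalClosure R) ≃*
      (FreeMetabelian Y ⧸ Subgroup.normalClosure S)))
    (δ δt : ℕ → ℕ) (hδ : IsDehnFunctionOf R δ) (hδt : IsRelDehnFunctionOf S δt) :
    Dominates δt δ ∧ Dominates δ (fun n => max ((δt (n ^ 3)) ^ 3) (2 ^ n)) := by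
  refine ⟨part1 R hR S hmeta hiso δ δt hδ hδt, ?_⟩
  have : Fintype X := Fintype.ofFinite X
  obtain ⟨h, ⟨C, hC⟩, hfill⟩ := full_fill hR hmeta
  refine ⟨C + 1, Nat.succ_pos C, fun n => ?_⟩
  have h1 : δ n ≤ h n := (hδ n).2 fun w hw hn => hfill n w hw hn
  have h2 : C ^ (n + 1) ≤ (C + 1) * 2 ^ ((C + 1) * n) := by
    rw [pow_succ, mul_comm, pow_mul]
    exact Nat.mul_le_mul (Nat.le_succ C) (Nat.pow_le_pow_left
      ((Nat.le_succ C).trans (Nat.lt_two_pow_self).le) n)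
  have h3 : (C + 1) * 2 ^ ((C + 1) * n) ≤
      (C + 1) * max ((δt (((C + 1) * n) ^ 3)) ^ 3) (2 ^ ((C + 1) * n)) :=
    Nat.mul_le_mul_left _ (le_max_right _ _)
  have h4 := hC n
  change δ n ≤ (C + 1) * max ((δt (((C + 1) * n) ^ 3)) ^ 3) (2 ^ ((C + 1) * n)) + (C + 1) * n + (C + 1)
  omega
end

section
/- Let M be the free metabelian group on the set {a₁,…,a_m} ∪ {t₁,…,t_k}, and for each 1 ≤ i < j ≤ k fix a designated element a_{ij} ∈ {a₁,…,a_m}. Let R₁ = {[t_i,t_j]·a_{ij}⁻¹ : 1 ≤ i < j ≤ k} and R'₂ = {[a_i, a_j] : 1 ≤ i,j ≤ m} ∪ {[a_i, a_j^{t_s}] : 1 ≤ i,j ≤ m, 1 ≤ s ≤ k}. For a word u in the letters t₁^{±1},…,t_k^{±1} with exponent sums m₁,…,m_k, let ū = t₁^{m₁}⋯t_k^{m_k}. Then for every a ∈ {a₁,…,a_m} and every reduced word u in t₁^{±1},…,t_k^{±1} of length ℓ, the element (a^u)⁻¹·a^{ū} of M can be written in M as a product of at most 4ℓ² + 2ℓ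 conjugates of elements of (R₁ ∪ R'₂) ∪ (R₁ ∪ R'₂)⁻¹. -/
open Function

/-- Generator `aᵢ` of the free metabelian group on `{a₁,…,a_m} ∪ {t₁,…,t_k}`. -/
noncomputable def ma {m k : ℕ} (i : Fin m) : FreeMetabelian (Fin m ⊕ Fin k) :=
  QuotientGroup.mk' (derivedSeries (FreeGroup (Fin m ⊕ Fin k)) 2) (FreeGroup.of (Sum.inl i))

/-- Generator `tₛ` of the free metabelian group on `{a₁,…,a_m} ∪ {t₁,…,t_k}`. -/
noncomputable def mgt {m k : ℕ} (s : Fin k) : FreeMetabelian (Fin m ⊕ Fin k) :=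
  QuotientGroup.mk' (derivedSeries (FreeGroup (Fin m ⊕ Fin k)) 2) (FreeGroup.of (Sum.inr s))

/-- The image in the free metabelian group of a word `u` in the letters `t₁^{±1},…,t_k^{±1}`. -/
noncomputable def tword {m k : ℕ} (u : FreeGroup (Fin k)) : FreeMetabelian (Fin m ⊕ Fin k) :=
  FreeGroup.lift (fun s => (mgt s : FreeMetabelian (Fin m ⊕ Fin k))) u

/-- The exponent sum of the letter `s` in a word of the free group on `Fin k`. -/
def expSum {k : ℕ} (s : Fin k) : FreeGroup (Fin k) →* Multiplicative ℤ :=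
  FreeGroup.lift fun i => Multiplicative.ofAdd (if i = s then (1 : ℤ) else 0)

/-- The ordered word `ū = t₁^{m₁}⋯t_k^{m_k}` with the same exponent sums as `u`,
as an element of the free metabelian group. -/
noncomputable def obar {m k : ℕ} (u : FreeGroup (Fin k)) : FreeMetabelian (Fin m ⊕ Fin k) :=
  (List.ofFn fun s : Fin k => (mgt s : FreeMetabelian (Fin m ⊕ Fin k)) ^
    (Multiplicative.toAdd (expSum s u))).prod

/-- The relator set `R'₂ = {[aᵢ,aⱼ]} ∪ {[aᵢ,aⱼ^{tₛ}]}`. -/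
noncomputable def R2' (m k : ℕ) : Set (FreeMetabelian (Fin m ⊕ Fin k)) :=
  {w | (∃ i j : Fin m, w = pcomm (ma i) (ma j)) ∨
       (∃ (i j : Fin m) (s : Fin k), w = pcomm (ma i) ((mgt s)⁻¹ * ma j * mgt s))}

/-- The relator set `R₁ = {[tᵢ,tⱼ]·a_{ij}⁻¹ : i < j}` for designated letters `a_{ij}`. -/
noncomputable def R1 (m k : ℕ) (aij : Fin k → Fin k → Fin m) :
    Set (FreeMetabelian (Fin m ⊕ Fin k)) :=
  {w | ∃ i j : Fin k, i < j ∧ w = pcomm (mgt i) (mgt j) * (ma (aij i j))⁻¹}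

namespace OC

/-- List version of area. -/
def LA {G : Type*} [Group G] (R : Set G) (w : G) (N : ℕ) : Prop :=
  ∃ l : List (G × G), l.length ≤ N ∧ (∀ p ∈ l, p.1 ∈ R ∨ (p.1)⁻¹ ∈ R) ∧
    w = (l.map fun p => p.2⁻¹ * p.1 * p.2).prod

section
variable {G : Type*} [Group G] {R : Set G}

lemma LA.areaLe {w : G} {N : ℕ} (h : LA R w N) : AreaLe R w N := by
  obtain ⟨l, h1, h2, h3⟩ := h
  refine ⟨l.length, h1, fun i => (l.get i).1, fun i => (l.get i).2, fun i => h2 _ (l.get_mem i), ?_⟩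
  rw [h3]
  congr 1
  conv_lhs => rw [← List.ofFn_get l, List.map_ofFn]
  rfl

lemma LA.one : LA R (1 : G) 0 := ⟨[], by simp⟩

lemma LA.mono {w : G} {N M : ℕ} (h : LA R w N) (hM : N ≤ M) : LA R w M := by
  obtain ⟨l, h1, h2⟩ := h
  exact ⟨l, h1.trans hM, h2⟩

lemma LA.mul {x y : G} {N M : ℕ} (hx : LA R x N) (hy : LA R y M) : LA R (x * y) (N + M) := by
  obtain ⟨l, h1, h2, h3⟩ := hx
  obtain ⟨l', h1', h2', h3'⟩ := hy
  refine ⟨l ++ l', by simp; omega, ?_, by simp [h3, h3']⟩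
  intro p hp
  rcases List.mem_append.1 hp with h | h
  · exact h2 _ h
  · exact h2' _ h

lemma LA.of_mem {r : G} (hr : r ∈ R) : LA R r 1 := ⟨[(r, 1)], by simp [hr]⟩

lemma LA.inv_mem {r : G} (hr : r ∈ R) : LA R r⁻¹ 1 := ⟨[(r⁻¹, 1)], by simp [hr]⟩

lemma LA.conj {x : G} {N : ℕ} (hx : LA R x N) (g : G) : LA R (g * x * g⁻¹) N := by
  obtain ⟨l, h1, h2, h3⟩ := hx
  refine ⟨l.map fun p => (p.1, p.2 * g⁻¹), by simpa using h1, ?_, ?_⟩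
  · intro p hp
    obtain ⟨q, hq, rfl⟩ := List.mem_map.1 hp
    exact h2 q hq
  · rw [h3]
    clear h1 h2 h3
    induction l with
    | nil => simp
    | cons p l ih =>
      simp only [List.map_cons, List.prod_cons] at ih ⊢
      rw [← ih]
      group

lemma LA.inv {x : G} {N : ℕ} (hx : LA R x N) : LA R x⁻¹ N := by
  obtain ⟨l, h1, h2, h3⟩ := hx
  refine ⟨(l.map fun p => (p.1⁻¹, p.2)).reverse, by simpa using h1, ?_, ?_⟩
  · intro p hp
    obtain ⟨q, hq, rfl⟩ := List.mem_map.1 (List.mem_reverse.1 hp)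
    have := h2 q hq
    simp only [inv_inv]
    exact this.symm
  · rw [h3]
    clear h1 h2 h3
    induction l with
    | nil => simp
    | cons p l ih =>
      simp only [List.map_cons, List.prod_cons, List.reverse_cons, List.map_append,
        List.prod_append, List.map_nil, List.prod_nil, mul_inv_rev] at ih ⊢
      rw [← ih]
      group

/-- `c` is in the derived subgroup and `[a,c]` has small area. -/
def P (R : Set G) (a : G) (N : ℕ) (c : G) : Prop := c ∈ commutator G ∧ LA R (pcomm a c) N

variable {a : G}

lemma P.one : P R a 0 1 := ⟨one_mem _, by simpa [pcomm] using LA.one⟩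

lemma P.mono {c : G} {N M : ℕ} (h : P R a N c) (hM : N ≤ M) : P R a M c := ⟨h.1, h.2.mono hM⟩

lemma P.mul {x y : G} {N M : ℕ} (hx : P R a N x) (hy : P R a M y) : P R a (N + M) (x * y) := by
  refine ⟨mul_mem hx.1 hy.1, ?_⟩
  have : pcomm a (x * y) = pcomm a y * (y⁻¹ * pcomm a x * y⁻¹⁻¹) := by
    simp only [pcomm]; group
  rw [this, add_comm]
  exact hy.2.mul (hx.2.conj _)

lemma P.inv {x : G} {N : ℕ} (hx : P R a N x) : P R a N x⁻¹ := by
  refine ⟨inv_mem hx.1, ?_⟩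
  have : pcomm a x⁻¹ = x * (pcomm a x)⁻¹ * x⁻¹ := by simp only [pcomm]; group
  rw [this]
  exact hx.2.inv.conj _

lemma P.conj (hG : IsMetabelian G) {x : G} {N : ℕ} (hx : P R a N x) (g : G) :
    P R a N (g * x * g⁻¹) := by
  refine ⟨(inferInstance : (commutator G).Normal).conj_mem _ hx.1 g, ?_⟩
  have h1 : a⁻¹ * g⁻¹ * a * g ∈ commutator G := by
    have := Subgroup.commutator_mem_commutator (Subgroup.mem_top a⁻¹) (Subgroup.mem_top g⁻¹)
    simpa [commutatorElement_def, commutator_def] using this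
  have h2 : a⁻¹ * x⁻¹ * a ∈ commutator G := by
    simpa using (inferInstance : (commutator G).Normal).conj_mem _ (inv_mem hx.1) a⁻¹
  have h3 := hG _ _ h2 h1
  have : pcomm a (g * x * g⁻¹) = g * pcomm a x * g⁻¹ := by
    have e1 : pcomm a (g * x * g⁻¹) =
      g * ((a⁻¹ * g⁻¹ * a * g)⁻¹ * ((a⁻¹ * x⁻¹ * a) * (a⁻¹ * g⁻¹ * a * g)) * x) * g⁻¹ := by
      simp only [pcomm]; group
    rw [e1, h3]
    simp only [pcomm]; group
  rw [this]
  exact hx.2.conj _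

open scoped commutatorElement

lemma P.comm_symm {x y : G} {N : ℕ} (h : P R a N ⁅x, y⁆) : P R a N ⁅y, x⁆ := by
  rw [← commutatorElement_inv]; exact h.inv

lemma P.comm_inv (hG : IsMetabelian G) {x y : G} {N : ℕ} (h : P R a N ⁅x, y⁆) :
    P R a N ⁅x⁻¹, y⁆ := by
  have : ⁅x⁻¹, y⁆ = x⁻¹ * ⁅x, y⁆⁻¹ * x⁻¹⁻¹ := by simp only [commutatorElement_def]; group
  rw [this]; exact h.inv.conj hG _

lemma P.comm_mul (hG : IsMetabelian G) {x y z : G} {N M : ℕ} (h : P R a N ⁅x, y⁆)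
    (h' : P R a M ⁅x, z⁆) : P R a (N + M) ⁅x, y * z⁆ := by
  have : ⁅x, y * z⁆ = ⁅x, y⁆ * (y * ⁅x, z⁆ * y⁻¹) := by simp only [commutatorElement_def]; group
  rw [this]; exact h.mul (h'.conj hG _)

lemma P.comm_pow (hG : IsMetabelian G) {x y : G} {N : ℕ} (h : P R a N ⁅x, y⁆) (n : ℕ) :
    P R a (N * n) ⁅x, y ^ n⁆ := by
  induction n with
  | zero => simpa using P.one
  | succ n ih => rw [pow_succ, Nat.mul_succ]; exact ih.comm_mul hG h

lemma P.comm_zpow (hG : IsMetabelian G) {x y : G} {N : ℕ} (h : P R a N ⁅x, y⁆) (n : ℤ) :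
    P R a (N * n.natAbs) ⁅x, y ^ n⁆ := by
  obtain ⟨n, rfl | rfl⟩ := n.eq_nat_or_neg
  · simpa using h.comm_pow hG n
  · have := ((h.comm_pow hG n).comm_symm.comm_inv hG).comm_symm
    simpa using this

lemma insert_cost (hG : IsMetabelian G) {k : ℕ} (t : Fin k → G)
    (ht : ∀ i j, P R a 3 ⁅t i, t j⁆) (n : Fin k → ℤ) (i : Fin k) (e : ℤ) (he : e = 1 ∨ e = -1) :
    P R a (3 * ∑ s, (n s).natAbs) (t i ^ e * (List.ofFn fun s => t s ^ n s).prod *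
      (List.ofFn fun s => t s ^ ((if i = s then e else 0) + n s)).prod⁻¹) := by
  induction k with
  | zero => exact i.elim0
  | succ k ih =>
    rw [List.ofFn_succ, List.ofFn_succ, List.prod_cons, List.prod_cons, Fin.sum_univ_succ]
    induction i using Fin.cases with
    | zero =>
      have h0 : ∀ s : Fin k, (0 : Fin (k+1)) ≠ s.succ := fun s => (Fin.succ_ne_zero s).symm
      simp only [h0, if_true, if_false, zero_add, zpow_add]
      refine P.mono (N := 0) ?_ (Nat.zero_le _)
      convert P.one (R := R) (a := a) using 1
      group
    | succ j =>
      have h0 : j.succ ≠ 0 := Fin.succ_ne_zero j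
      simp only [h0, if_false, zero_add, Fin.succ_inj]
      have IH := ih (fun s => t s.succ) (fun x y => ht _ _) (fun s => n s.succ) j
      have hc : P R a 3 ⁅t j.succ ^ e, t 0⁆ := by
        rcases he with rfl | rfl
        · simpa using ht _ _
        · simpa using (ht _ _).comm_inv hG
      have := (hc.comm_zpow hG (n 0)).mul (IH.conj hG (t 0 ^ n 0))
      rw [mul_add]
      convert this using 1
      simp only [commutatorElement_def]
      group

lemma base_cost (hG : IsMetabelian G) {x y b : G} (h1 : pcomm x y * b⁻¹ ∈ R)
    (h2 : pcomm a b ∈ R) : P R a 3 ⁅x, y⁆ := by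
  have h : P R a 3 ⁅x⁻¹, y⁻¹⁆ := by
    refine ⟨Subgroup.commutator_mem_commutator (Subgroup.mem_top _) (Subgroup.mem_top _), ?_⟩
    have e : pcomm a ⁅x⁻¹, y⁻¹⁆ = ((a⁻¹ * b⁻¹) * (pcomm x y * b⁻¹)⁻¹ * (a⁻¹ * b⁻¹)⁻¹) *
        pcomm a b * (b⁻¹ * (pcomm x y * b⁻¹) * b⁻¹⁻¹) := by
      simp only [pcomm, commutatorElement_def]; group
    rw [e]
    exact (((LA.inv_mem h1).conj _).mul (LA.of_mem h2)).mul ((LA.of_mem h1).conj _)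
  have := (h.comm_inv hG).comm_symm.comm_inv hG
  simpa using this.comm_symm

end

lemma metab (X : Type*) : IsMetabelian (FreeMetabelian X) := by
  intro x y hx hy
  have hs := QuotientGroup.mk'_surjective (derivedSeries (FreeGroup X) 2)
  rw [← derivedSeries_one, ← map_derivedSeries_eq hs] at hx hy
  obtain ⟨x, hx, rfl⟩ := hx
  obtain ⟨y, hy, rfl⟩ := hy
  rw [← commutatorElement_eq_one_iff_mul_comm, ← map_commutatorElement,
    ← MonoidHom.mem_ker, QuotientGroup.ker_mk']
  exact Subgroup.commutator_mem_commutator hx hy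

open scoped commutatorElement in
lemma main (m k : ℕ) (aij : Fin k → Fin k → Fin m) (a : Fin m) (L : List (Fin k × Bool)) :
    (∑ s, (Multiplicative.toAdd (expSum s (FreeGroup.mk L))).natAbs ≤ L.length) ∧
    P (R1 m k aij ∪ R2' m k) (ma a) (3 * L.length ^ 2)
      (tword (FreeGroup.mk L) * (obar (FreeGroup.mk L))⁻¹) := by
  have hG := metab (Fin m ⊕ Fin k)
  have hlt : ∀ i j : Fin k, i < j → P (R1 m k aij ∪ R2' m k) (ma a) 3 ⁅(mgt i : FreeMetabelian (Fin m ⊕ Fin k)), (mgt j : FreeMetabelian (Fin m ⊕ Fin k))⁆ := by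
    intro i j h
    exact base_cost hG (b := ma (aij i j)) (Or.inl ⟨i, j, h, rfl⟩) (Or.inr (Or.inl ⟨_, _, rfl⟩))
  have ht : ∀ i j : Fin k, P (R1 m k aij ∪ R2' m k) (ma a) 3 ⁅(mgt i : FreeMetabelian (Fin m ⊕ Fin k)), (mgt j : FreeMetabelian (Fin m ⊕ Fin k))⁆ := by
    intro i j
    rcases lt_trichotomy i j with h | rfl | h
    · exact hlt i j h
    · rw [commutatorElement_self]; exact P.one.mono (Nat.zero_le _)
    · exact (hlt j i h).comm_symm
  induction L with
  | nil =>
    have : (FreeGroup.mk ([] : List (Fin k × Bool))) = 1 := rfl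
    rw [this]
    constructor
    · simp
    · simpa [tword, obar] using P.one
  | cons p L ih =>
    obtain ⟨i, b⟩ := p
    obtain ⟨ih1, ih2⟩ := ih
    obtain ⟨e, he, hb⟩ : ∃ e : ℤ, (e = 1 ∨ e = -1) ∧
        FreeGroup.mk [(i, b)] = FreeGroup.of i ^ e := by
      cases b
      · exact ⟨-1, Or.inr rfl, by simp [FreeGroup.of, FreeGroup.inv_mk, FreeGroup.invRev]⟩
      · exact ⟨1, Or.inl rfl, by simp [FreeGroup.of]⟩
    have hmk : FreeGroup.mk ((i, b) :: L) = FreeGroup.of i ^ e * FreeGroup.mk L := by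
      rw [← hb, FreeGroup.mul_mk]; rfl
    have hexp : ∀ s, Multiplicative.toAdd (expSum s (FreeGroup.mk ((i, b) :: L))) =
        (if i = s then e else 0) + Multiplicative.toAdd (expSum s (FreeGroup.mk L)) := by
      intro s
      rw [hmk, map_mul, map_zpow, toAdd_mul, toAdd_zpow]
      simp [expSum]
    have htw : (tword (FreeGroup.mk ((i, b) :: L)) : FreeMetabelian (Fin m ⊕ Fin k)) =
        mgt i ^ e * tword (FreeGroup.mk L) := by
      rw [hmk]; simp only [tword, map_mul, map_zpow, FreeGroup.lift_apply_of]
    constructor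
    · calc _ ≤ ∑ s, ((if i = s then 1 else 0) +
            (Multiplicative.toAdd (expSum s (FreeGroup.mk L))).natAbs) := by
            refine Finset.sum_le_sum fun s _ => ?_
            rw [hexp]
            refine (Int.natAbs_add_le _ _).trans ?_
            gcongr
            split_ifs
            · rcases he with rfl | rfl <;> simp
            · simp
        _ ≤ _ := by
            rw [Finset.sum_add_distrib]
            simp
            omega
    · have hi := insert_cost hG mgt ht
        (fun s => Multiplicative.toAdd (expSum s (FreeGroup.mk L))) i e he
      have hh := (ih2.conj hG (mgt i ^ e)).mul hi
      rw [htw]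
      have ho : (obar (FreeGroup.mk ((i, b) :: L)) : FreeMetabelian (Fin m ⊕ Fin k)) =
        (List.ofFn fun s => mgt s ^ ((if i = s then e else 0) +
          Multiplicative.toAdd (expSum s (FreeGroup.mk L)))).prod := by
        simp only [obar, hexp]
      rw [ho]
      refine P.mono (N := 3 * L.length ^ 2 + 3 * ∑ s,
        (Multiplicative.toAdd (expSum s (FreeGroup.mk L))).natAbs) ?_ ?_
      · convert hh using 1
        simp only [obar]
        group
      · simp only [List.length_cons]
        nlinarith

end OC

/-- In the free metabelian group, `(a^u)⁻¹·a^{ū}` is a product of at most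
`4ℓ² + 2ℓ` conjugates of elements of `(R₁ ∪ R'₂)^{±1}`, where `ℓ` is the reduced length
of the word `u` in the letters `t₁^{±1},…,t_k^{±1}`. -/
theorem ordering_cost (m k : ℕ) (aij : Fin k → Fin k → Fin m) (a : Fin m)
    (u : FreeGroup (Fin k)) (ℓ : ℕ) (hu : freeNorm u = ℓ) :
    AreaLe (R1 m k aij ∪ R2' m k)
      (((tword u)⁻¹ * ma a * tword u)⁻¹ * ((obar u)⁻¹ * ma a * obar u))
      (4 * ℓ ^ 2 + 2 * ℓ) := by
  subst hu
  letI := Classical.decEq (Fin k)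
  have h := (OC.main m k aij a u.toWord).2
  rw [FreeGroup.mk_toWord] at h
  have h2 := (h.inv.2.conj (tword u)⁻¹).areaLe
  obtain ⟨N, hN, hA⟩ := h2
  refine ⟨N, hN.trans ?_, ?_⟩
  · change 3 * (freeNorm u) ^ 2 ≤ _
    nlinarith
  · convert hA using 1
    simp only [pcomm]
    group
end
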